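/- Let d ≥ 2 and α ∈ (0, 1/3), and let u be the vector field of the main anomalous-diffusion theorem. There exists a sequence κ_j → 0 of positive numbers, depending only on α and d (not on the initial datum), such that, setting 𝒦 := ∪_{j≥1} [κ_j/2, 2κ_j], for every zero-mean θ_in ∈ H¹(T^d) with its associated constant ϱ > 0 one has inf_{κ ∈ 𝒦} κ ∫_0^1 ∫_{T^d} |∇θ^κ(t,x)|² dx dt ≥ ϱ ‖θ_in‖²_{L²(T^d)}, where θ^κ denotes the solution of the advection–diffusion equation ∂_t θ^κ + u·∇θ^κ = κΔθ^κ with θ^κ(0,·) = θ_in. -/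

import Mathlib

open MeasureTheory Real Topology Filter

noncomputable section

/-- Spatial partial derivative `∂_i f` (via the Fréchet derivative). -/
def pd {d : ℕ} (f : (Fin d → ℝ) → ℝ) (i : Fin d) (x : Fin d → ℝ) : ℝ :=
  fderiv ℝ f x (Pi.single i 1)

/-- The unit box `[0,1]^d`, a fundamental domain for the torus `T^d = ℝ^d/ℤ^d`. -/
def box (d : ℕ) : Set (Fin d → ℝ) := Set.Icc 0 1

/-- `ℤ^d`-periodicity in the space variable (functions on the torus `T^d`). -/
def SpacePeriodic {d : ℕ} (f : (Fin d → ℝ) → ℝ) : Prop :=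
  ∀ (x : Fin d → ℝ) (k : Fin d → ℤ), f (x + fun i => (k i : ℝ)) = f x

/-- Squared length of the spatial gradient, `|∇f|²(x)`. -/
def gradSq {d : ℕ} (f : (Fin d → ℝ) → ℝ) (x : Fin d → ℝ) : ℝ :=
  ∑ i, (pd f i x) ^ 2

/-- Squared `L²(T^d)` norm. -/
def l2sq {d : ℕ} (f : (Fin d → ℝ) → ℝ) : ℝ := ∫ x in box d, (f x) ^ 2

/-- The dissipation `∫_0^t ‖∇θ(s,·)‖²_{L²(T^d)} ds`. -/
def dissipUpTo {d : ℕ} (θ : ℝ → (Fin d → ℝ) → ℝ) (t : ℝ) : ℝ :=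
  ∫ s in Set.Icc (0:ℝ) t, ∫ x in box d, gradSq (θ s) x

/-- The dissipation `∫_0^1 ∫_{T^d} |∇θ|² dx dt`. -/
def dissip {d : ℕ} (θ : ℝ → (Fin d → ℝ) → ℝ) : ℝ := dissipUpTo θ 1

/-- A solution of the advection–diffusion equation `∂_t θ + u·∇θ = κΔθ` on
`(0,1] × T^d` with initial datum `θ_in`: continuous on `[0,1] × T^d`, spatially
periodic, `C¹` in time and `C²` in space on `(0,1] × T^d`, solving the equation
pointwise there. -/
structure IsAdvDiffSol {d : ℕ} (u : ℝ → (Fin d → ℝ) → Fin d → ℝ) (κ : ℝ)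
    (θin : (Fin d → ℝ) → ℝ) (θ : ℝ → (Fin d → ℝ) → ℝ) : Prop where
  periodic : ∀ t, SpacePeriodic (θ t)
  cont : ContinuousOn (fun p : ℝ × (Fin d → ℝ) => θ p.1 p.2)
    (Set.Icc 0 1 ×ˢ Set.univ)
  init : ∀ x, θ 0 x = θin x
  timeDiff : ∀ t ∈ Set.Ioc (0:ℝ) 1, ∀ x, DifferentiableAt ℝ (fun s => θ s x) t
  spaceC2 : ∀ t ∈ Set.Ioc (0:ℝ) 1, ContDiff ℝ 2 (θ t)
  eqn : ∀ t ∈ Set.Ioc (0:ℝ) 1, ∀ x,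
    deriv (fun s => θ s x) t + ∑ i, u t x i * pd (θ t) i x
      = κ * ∑ i, pd (pd (θ t) i) i x

/-- `u ∈ C^0_t C^α_x ∩ C^α_t C^0_x` on `[0,1] × T^d`: continuity plus uniform
Hölder bounds in space and in time. -/
def HolderVF {d : ℕ} (α : ℝ) (u : ℝ → (Fin d → ℝ) → Fin d → ℝ) : Prop :=
  Continuous (fun p : ℝ × (Fin d → ℝ) => u p.1 p.2) ∧
  ∃ A : ℝ, ∀ s ∈ Set.Icc (0:ℝ) 1, ∀ t ∈ Set.Icc (0:ℝ) 1, ∀ x y : Fin d → ℝ,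
    ‖u t x - u t y‖ ≤ A * ‖x - y‖ ^ α ∧ ‖u t x - u s x‖ ≤ A * |t - s| ^ α

/-- `u(t,·)` is divergence-free on `T^d` in the sense of distributions:
`∫_{T^d} u(t,x)·∇φ(x) dx = 0` for every smooth periodic `φ`. -/
def WeakDivFree {d : ℕ} (u : ℝ → (Fin d → ℝ) → Fin d → ℝ) : Prop :=
  ∀ t ∈ Set.Icc (0:ℝ) 1, ∀ φ : (Fin d → ℝ) → ℝ, ContDiff ℝ (⊤ : ℕ∞) φ →
    SpacePeriodic φ → (∫ x in box d, ∑ i, u t x i * pd φ i x) = 0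

/-- `g` is the (square-integrable) weak gradient of `f` on `T^d`:
`∫ f div ψ = −∫ g·ψ` for all smooth periodic vector fields `ψ`. -/
def HasWeakGradient {d : ℕ} (f : (Fin d → ℝ) → ℝ)
    (g : (Fin d → ℝ) → Fin d → ℝ) : Prop :=
  ∀ ψ : (Fin d → ℝ) → Fin d → ℝ,
    (∀ i, ContDiff ℝ (⊤ : ℕ∞) fun x => ψ x i) →
    (∀ i, SpacePeriodic fun x => ψ x i) →
    (∫ x in box d, f x * ∑ i, pd (fun y => ψ y i) i x)
      = - ∫ x in box d, ∑ i, g x i * ψ x i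

/-!
The velocity field runs infinitely many shear flows one after the other, the `k`-th on a time
interval of length `2^{-(k+1)}` and in the direction of the `k`-th coordinate axis, the axes being
taken cyclically. If `A_k` and `N_k` are the amplitude and the frequency of the `k`-th shear, the
chain rule turns a derivative along axis `k` into one along axis `k + 1` multiplied by `A_k N_k`.
With `N_k` close to the cube of the size `G_k` of the gradients reached so far and
`A_k N_k^{1/3} = 8^{-k}`, gradients grow super-exponentially, `G_{k+1} ≈ G_k³` up to geometric
factors, while the field stays `1/3`-Hölder.

That they do grow, for every nonconstant initial datum, is shown by duality. Zero mean forces an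
oscillation along the shear direction at some late stage, since otherwise the shears would hardly
move the function, which would then oscillate along no axis at all. This gives a bounded test
function that pairs well with the derivative along that axis. Transporting the test function and
multiplying it by the approximate sign of the shear slope gives a test function for the next axis,
whose pairing is larger by the factor `A_k N_k`, up to summable losses, and whose own gradient is
still `O(G_{k+1})`.

Let `κ` be comparable to `κ_n`, where `κ_n G_{n+1}² 2^{-(n+1)} = 1`. If `κ ∫∫ |∇θ^κ|²` is small, an
energy estimate keeps `θ^κ` close in `L²` to the transported initial datum up to the end of stage
`n`. The second half of that stage is at rest, and throughout it the pairing above forces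
`‖∇θ^κ‖ ≳ G_{n+1}`, so that `κ ∫∫ |∇θ^κ|²` is bounded below after all.
-/

/-! ### Periodic functions and integration over the torus -/

section Periodic

variable {d : ℕ} {f g : (Fin d → ℝ) → ℝ}

/-- The `i`-th standard basis vector `e_i`. -/
abbrev basisVec (i : Fin d) : Fin d → ℝ := Pi.single i 1

/-- `f` does not depend on the coordinate `x_i`. -/
def ConstAlong (i : Fin d) (f : (Fin d → ℝ) → ℝ) : Prop :=
  ∀ (x : Fin d → ℝ) (r : ℝ), f (x + r • basisVec i) = f x

lemma SpacePeriodic.const (c : ℝ) : SpacePeriodic (fun _ : Fin d → ℝ => c) := fun _ _ => rfl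

lemma SpacePeriodic.comp (hf : SpacePeriodic f) (φ : ℝ → ℝ) :
    SpacePeriodic (fun x => φ (f x)) := fun x k => by simp only [hf x k]

lemma SpacePeriodic.sub (hf : SpacePeriodic f) (hg : SpacePeriodic g) :
    SpacePeriodic (fun x => f x - g x) := fun x k => by simp only [hf x k, hg x k]

lemma SpacePeriodic.mul (hf : SpacePeriodic f) (hg : SpacePeriodic g) :
    SpacePeriodic (fun x => f x * g x) := fun x k => by simp only [hf x k, hg x k]

lemma SpacePeriodic.comp_add_right (hf : SpacePeriodic f) (v : Fin d → ℝ) :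
    SpacePeriodic (fun x => f (x + v)) := fun x k => by
  simp only
  rw [add_right_comm, hf]

lemma SpacePeriodic.comp_shear (hf : SpacePeriodic f) (hg : SpacePeriodic g) (v : Fin d → ℝ) :
    SpacePeriodic (fun x => f (x + g x • v)) := fun x k => by
  simp only [hg x k]
  rw [add_right_comm, hf]

lemma SpacePeriodic.intervalIntegral {F : ℝ → (Fin d → ℝ) → ℝ} (hF : ∀ r, SpacePeriodic (F r))
    (a b : ℝ) : SpacePeriodic (fun x => ∫ r in a..b, F r x) := fun x k => by
  simp only [(hF _) x k]

lemma SpacePeriodic.pd (hf : SpacePeriodic f) (i : Fin d) : SpacePeriodic (pd f i) := fun x k => by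
  have hshift : (fun y => f (y + fun i => (k i : ℝ))) = f := funext fun y => hf y k
  unfold _root_.pd
  conv_rhs => rw [← hshift, fderiv_comp_add_right]

lemma SpacePeriodic.periodic_line (hf : SpacePeriodic f) (i : Fin d) (x : Fin d → ℝ) :
    Function.Periodic (fun r : ℝ => f (x + r • basisVec i)) 1 := fun r => by
  simp only
  rw [← hf (x + r • basisVec i) (Pi.single i 1)]
  congr 1
  ext j
  by_cases h : j = i
  · subst h
    simp [add_assoc]
  · simp [h]

lemma spacePeriodic_coord {F : ℝ → ℝ} (hF : Function.Periodic F 1) (j : Fin d) (N : ℕ) :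
    SpacePeriodic (fun x : Fin d → ℝ => F (N * x j)) := fun x k => by
  simpa [mul_add] using hF.int_mul ((N : ℤ) * k j) ((N : ℝ) * x j)

lemma ConstAlong.const (i : Fin d) (c : ℝ) : ConstAlong i (fun _ => c) := fun _ _ => rfl

lemma ConstAlong.comp {i : Fin d} (hf : ConstAlong i f) (φ : ℝ → ℝ) :
    ConstAlong i (fun x => φ (f x)) := fun x r => by simp only [hf x r]

lemma constAlong_coord {i j : Fin d} (hij : j ≠ i) (F : ℝ → ℝ) :
    ConstAlong i (fun x => F (x j)) := fun x r => by simp [Pi.single_eq_of_ne hij]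

end Periodic

section BoxIntegral

variable {d : ℕ} {f g : (Fin d → ℝ) → ℝ}

/-- The integral over the torus `T^d`, realised on the fundamental domain `box d`. -/
def boxIntegral (f : (Fin d → ℝ) → ℝ) : ℝ := ∫ x in box d, f x

lemma isCompact_box (d : ℕ) : IsCompact (box d) := isCompact_Icc

lemma volume_box (d : ℕ) : volume (box d) = 1 := by
  simp [box, Real.volume_Icc_pi]

lemma integrableOn_box (hf : Continuous f) : IntegrableOn f (box d) :=
  hf.continuousOn.integrableOn_compact (isCompact_box d)

lemma boxIntegral_add (hf : Continuous f) (hg : Continuous g) :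
    boxIntegral (fun x => f x + g x) = boxIntegral f + boxIntegral g :=
  integral_add (integrableOn_box hf) (integrableOn_box hg)

lemma boxIntegral_sub (hf : Continuous f) (hg : Continuous g) :
    boxIntegral (fun x => f x - g x) = boxIntegral f - boxIntegral g :=
  integral_sub (integrableOn_box hf) (integrableOn_box hg)

lemma boxIntegral_const_mul (c : ℝ) (f : (Fin d → ℝ) → ℝ) :
    boxIntegral (fun x => c * f x) = c * boxIntegral f := integral_const_mul c f

lemma boxIntegral_const (c : ℝ) : boxIntegral (fun _ : Fin d → ℝ => c) = c := by
  simp [boxIntegral, Measure.real, volume_box]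

lemma boxIntegral_sum {ι : Type*} (s : Finset ι) {F : ι → (Fin d → ℝ) → ℝ}
    (hF : ∀ i, Continuous (F i)) :
    boxIntegral (fun x => ∑ i ∈ s, F i x) = ∑ i ∈ s, boxIntegral (F i) :=
  integral_finsetSum s fun i _ => integrableOn_box (hF i)

lemma boxIntegral_mono (hf : Continuous f) (hg : Continuous g) (h : ∀ x, f x ≤ g x) :
    boxIntegral f ≤ boxIntegral g :=
  integral_mono (integrableOn_box hf) (integrableOn_box hg) h

lemma boxIntegral_nonneg (h : ∀ x, 0 ≤ f x) : 0 ≤ boxIntegral f := integral_nonneg h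

lemma continuous_unitIntegral {F : (Fin d → ℝ) → ℝ → ℝ} (hF : Continuous (Function.uncurry F)) :
    Continuous (fun x => ∫ r in (0 : ℝ)..1, F x r) :=
  intervalIntegral.continuous_parametric_intervalIntegral_of_continuous' hF 0 1

lemma boxIntegral_unitIntegral {F : (Fin d → ℝ) → ℝ → ℝ}
    (hF : Continuous (Function.uncurry F)) :
    boxIntegral (fun x => ∫ r in (0 : ℝ)..1, F x r)
      = ∫ r in (0 : ℝ)..1, boxIntegral (fun x => F x r) := by
  have hint : IntegrableOn (Function.uncurry F) (box d ×ˢ Set.Icc (0 : ℝ) 1) :=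
    hF.continuousOn.integrableOn_compact ((isCompact_box d).prod isCompact_Icc)
  simp only [boxIntegral, intervalIntegral.integral_of_le (zero_le_one : (0 : ℝ) ≤ 1)]
  apply integral_integral_swap
  rw [Measure.prod_restrict]
  exact hint.mono_set (Set.prod_mono le_rfl Set.Ioc_subset_Icc_self)

open scoped Pointwise in
lemma boxIntegral_comp_add_right (hf : SpacePeriodic f) (v : Fin d → ℝ) :
    boxIntegral (fun x => f (x + v)) = boxIntegral f := by
  have hcube : (box d : Set (Fin d → ℝ)) =ᵐ[volume]
      ZSpan.fundamentalDomain (Pi.basisFun ℝ (Fin d)) := by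
    rw [ZSpan.fundamentalDomain_pi_basisFun, volume_pi]
    exact Measure.univ_pi_Ico_ae_eq_Icc.symm
  have hdom := ZSpan.isAddFundamentalDomain' (Pi.basisFun ℝ (Fin d)) volume
  have : Countable (Submodule.span ℤ (Set.range (Pi.basisFun ℝ (Fin d)))).toAddSubgroup :=
    inferInstanceAs (Countable (Submodule.span ℤ (Set.range (Pi.basisFun ℝ (Fin d)))))
  have hinv : ∀ (ℓ : (Submodule.span ℤ (Set.range (Pi.basisFun ℝ (Fin d)))).toAddSubgroup)
      (x : Fin d → ℝ),
      f (ℓ +ᵥ x) = f x := by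
    rintro ⟨ℓ, hℓ⟩ x
    obtain ⟨k, rfl⟩ : ∃ k : Fin d → ℤ, (fun i => (k i : ℝ)) = ℓ := by
      rw [Submodule.mem_toAddSubgroup, Module.Basis.mem_span_iff_repr_mem] at hℓ
      choose k hk using hℓ
      exact ⟨k, funext fun i => by simpa using hk i⟩
    rw [AddSubgroup.vadd_def, vadd_eq_add, add_comm, hf]
  calc boxIntegral (fun x => f (x + v))
      = ∫ x in ZSpan.fundamentalDomain (Pi.basisFun ℝ (Fin d)), f (x + v) :=
        setIntegral_congr_set hcube
    _ = ∫ x in v +ᵥ ZSpan.fundamentalDomain (Pi.basisFun ℝ (Fin d)), f x := by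
        rw [← Set.image_vadd]
        simp only [vadd_eq_add]
        rw [(measurePreserving_add_left volume v).setIntegral_image_emb
          (MeasurableEquiv.addLeft v).measurableEmbedding]
        simp only [add_comm]
    _ = ∫ x in ZSpan.fundamentalDomain (Pi.basisFun ℝ (Fin d)), f x :=
        (hdom.vadd_of_comm v).setIntegral_eq hdom hinv
    _ = boxIntegral f := (setIntegral_congr_set hcube).symm

lemma boxIntegral_lineIntegral (i : Fin d) (hf : Continuous f) (hp : SpacePeriodic f) :
    boxIntegral (fun x => ∫ r in (0 : ℝ)..1, f (x + r • basisVec i)) = boxIntegral f := by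
  rw [boxIntegral_unitIntegral (F := fun x r => f (x + r • basisVec i))
    (hf.comp (by fun_prop))]
  simp [boxIntegral_comp_add_right hp]

lemma boxIntegral_eq_zero_of_lineIntegral (i : Fin d) (hf : Continuous f)
    (hp : SpacePeriodic f) (h : ∀ x, ∫ r in (0 : ℝ)..1, f (x + r • basisVec i) = 0) :
    boxIntegral f = 0 := by
  rw [← boxIntegral_lineIntegral i hf hp]
  simp only [h, boxIntegral_const]

lemma SpacePeriodic.lineIntegral_add (hf : SpacePeriodic f) (i : Fin d) (x : Fin d → ℝ) (c : ℝ) :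
    ∫ r in (0 : ℝ)..1, f (x + (r + c) • basisVec i)
      = ∫ r in (0 : ℝ)..1, f (x + r • basisVec i) := by
  rw [intervalIntegral.integral_comp_add_right (fun r => f (x + r • basisVec i))]
  simpa [add_comm] using (hf.periodic_line i x).intervalIntegral_add_eq c 0

lemma boxIntegral_shear (i : Fin d) (hf : Continuous f) (hp : SpacePeriodic f)
    (hg : Continuous g) (hgp : SpacePeriodic g) (hgi : ConstAlong i g) :
    boxIntegral (fun x => f (x + g x • basisVec i)) = boxIntegral f := by
  rw [← boxIntegral_lineIntegral i (by fun_prop) (hp.comp_shear hgp _),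
    ← boxIntegral_lineIntegral i hf hp]
  congr 1
  ext x
  simp only [hgi x, add_assoc, ← add_smul]
  exact hp.lineIntegral_add i x (g x)

lemma boxIntegral_coord (j : Fin d) {F : ℝ → ℝ} (hF : Continuous F)
    (hp : Function.Periodic F 1) {N : ℕ} (hN : 0 < N) :
    boxIntegral (fun x : Fin d → ℝ => F (N * x j)) = ∫ r in (0 : ℝ)..1, F r := by
  have hline (x : Fin d → ℝ) :
      ∫ r in (0 : ℝ)..1, F (N * (x + r • basisVec j) j) = ∫ r in (0 : ℝ)..1, F r := by
    have hN' : (N : ℝ) ≠ 0 := by positivity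
    have hscale := hp.intervalIntegral_add_zsmul_eq (N : ℤ) (N * x j)
      fun _ _ => hF.intervalIntegrable _ _
    have hshift := hp.intervalIntegral_add_eq (N * x j) 0
    simp only [natCast_zsmul, nsmul_eq_mul, mul_one, zero_add] at hscale hshift
    simp only [Pi.add_apply, Pi.smul_apply, Pi.single_eq_same, smul_eq_mul, mul_one, mul_add]
    rw [intervalIntegral.integral_comp_add_mul F hN', mul_zero, add_zero, mul_one, hscale, hshift,
      smul_eq_mul, inv_mul_cancel_left₀ hN']
  rw [← boxIntegral_lineIntegral j (by fun_prop) (spacePeriodic_coord hp j N)]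
  simp only [hline, boxIntegral_const]

end BoxIntegral

section PartialDerivative

variable {d : ℕ} {f g : (Fin d → ℝ) → ℝ}

lemma continuous_pd (hf : ContDiff ℝ 1 f) (i : Fin d) : Continuous (pd f i) :=
  (hf.continuous_fderiv (by norm_num)).clm_apply continuous_const

lemma contDiff_pd (hf : ContDiff ℝ 2 f) (i : Fin d) : ContDiff ℝ 1 (pd f i) :=
  (hf.fderiv_right (m := 1) (by norm_num)).clm_apply contDiff_const

lemma hasDerivAt_line (hf : Differentiable ℝ f) (i : Fin d) (x : Fin d → ℝ) (s : ℝ) :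
    HasDerivAt (fun r : ℝ => f (x + r • basisVec i)) (pd f i (x + s • basisVec i)) s := by
  have hline : HasDerivAt (fun r : ℝ => x + r • basisVec i) (basisVec i) s := by
    simpa using ((hasDerivAt_id s).smul_const (basisVec i)).const_add x
  exact (hf _).hasFDerivAt.comp_hasDerivAt s hline

lemma pd_neg (f : (Fin d → ℝ) → ℝ) (i : Fin d) :
    pd (fun y => -f y) i = fun y => -pd f i y := by
  ext x
  simp only [pd, fderiv_fun_neg, neg_apply]

lemma pd_sub (hf : Differentiable ℝ f) (hg : Differentiable ℝ g) (i : Fin d) :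
    pd (fun x => f x - g x) i = fun x => pd f i x - pd g i x := by
  ext x
  simp only [pd, fderiv_fun_sub (hf x) (hg x), sub_apply]

lemma pd_mul (hf : Differentiable ℝ f) (hg : Differentiable ℝ g) (i : Fin d) :
    pd (fun x => f x * g x) i = fun x => f x * pd g i x + g x * pd f i x := by
  ext x
  simp [pd, fderiv_fun_mul (hf x) (hg x)]

lemma pd_comp_add_right (f : (Fin d → ℝ) → ℝ) (v : Fin d → ℝ) (i : Fin d) :
    pd (fun x => f (x + v)) i = fun x => pd f i (x + v) := by
  ext x
  simp only [pd, fderiv_comp_add_right]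

lemma boxIntegral_mul_pd_of_constAlong {i : Fin d} (hf : ContDiff ℝ 1 f) (hp : SpacePeriodic f)
    (hg : Continuous g) (hgp : SpacePeriodic g) (hgi : ConstAlong i g) :
    boxIntegral (fun x => g x * pd f i x) = 0 := by
  have hpd := continuous_pd hf i
  refine boxIntegral_eq_zero_of_lineIntegral i (by fun_prop) (hgp.mul (hp.pd i)) fun x => ?_
  simp_rw [hgi x]
  rw [intervalIntegral.integral_const_mul, intervalIntegral.integral_eq_sub_of_hasDerivAt
    (fun r _ => hasDerivAt_line (hf.differentiable one_ne_zero) i x r)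
    (Continuous.intervalIntegrable (by fun_prop) _ _)]
  have hend : f (x + (1 : ℝ) • basisVec i) = f (x + (0 : ℝ) • basisVec i) :=
    (hp.periodic_line i x).eq
  rw [hend, sub_self, mul_zero]

lemma boxIntegral_mul_pd (hf : ContDiff ℝ 1 f) (hg : ContDiff ℝ 1 g) (hpf : SpacePeriodic f)
    (hpg : SpacePeriodic g) (i : Fin d) :
    boxIntegral (fun x => f x * pd g i x) = -boxIntegral (fun x => g x * pd f i x) := by
  have hdiff {h : (Fin d → ℝ) → ℝ} (hh : ContDiff ℝ 1 h) := hh.differentiable one_ne_zero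
  have htotal : boxIntegral (fun x => 1 * pd (fun x => f x * g x) i x) = 0 :=
    boxIntegral_mul_pd_of_constAlong (hf.mul hg) (hpf.mul hpg) continuous_const
      (SpacePeriodic.const 1) (ConstAlong.const i 1)
  simp only [one_mul, pd_mul (hdiff hf) (hdiff hg)] at htotal
  rw [← sub_eq_zero, sub_neg_eq_add, ← htotal]
  exact (boxIntegral_add (hf.continuous.mul (continuous_pd hg i))
    (hg.continuous.mul (continuous_pd hf i))).symm

end PartialDerivative

section L2Norm

variable {d : ℕ} {f g : (Fin d → ℝ) → ℝ}

/-- The norm of `L²(T^d)`. -/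
def l2norm (f : (Fin d → ℝ) → ℝ) : ℝ := √(l2sq f)

lemma l2norm_nonneg (f : (Fin d → ℝ) → ℝ) : 0 ≤ l2norm f := Real.sqrt_nonneg _

lemma l2norm_sq (f : (Fin d → ℝ) → ℝ) : l2norm f ^ 2 = l2sq f :=
  Real.sq_sqrt (boxIntegral_nonneg fun _ => sq_nonneg _)

lemma abs_boxIntegral_mul_le (hf : Continuous f) (hg : Continuous g) :
    |boxIntegral (fun x => f x * g x)| ≤ l2norm f * l2norm g := by
  have hquadratic (s : ℝ) :
      0 ≤ l2sq g * (s * s) + (2 * boxIntegral (fun x => f x * g x)) * s + l2sq f := by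
    have hexpand : boxIntegral (fun x => (f x + s * g x) ^ 2)
        = l2sq g * (s * s) + (2 * boxIntegral (fun x => f x * g x)) * s + l2sq f := by
      have heq : (fun x => (f x + s * g x) ^ 2)
          = fun x => (s * s) * g x ^ 2 + ((2 * s) * (f x * g x) + f x ^ 2) := by ext x; ring
      rw [heq, boxIntegral_add (by fun_prop) (by fun_prop),
        boxIntegral_add (by fun_prop) (by fun_prop), boxIntegral_const_mul, boxIntegral_const_mul]
      simp only [boxIntegral, l2sq]
      ring
    exact hexpand ▸ boxIntegral_nonneg fun _ => sq_nonneg _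
  have hdiscrim := discrim_le_zero hquadratic
  rw [discrim, ← l2norm_sq, ← l2norm_sq] at hdiscrim
  refine abs_le_of_sq_le_sq ?_ (mul_nonneg (l2norm_nonneg f) (l2norm_nonneg g))
  linarith

lemma l2norm_add_le (hf : Continuous f) (hg : Continuous g) :
    l2norm (fun x => f x + g x) ≤ l2norm f + l2norm g := by
  have hexpand : l2sq (fun x => f x + g x)
      = l2sq f + 2 * boxIntegral (fun x => f x * g x) + l2sq g := by
    have heq : (fun x => (f x + g x) ^ 2)
        = fun x => f x ^ 2 + (2 * (f x * g x) + g x ^ 2) := by ext x; ring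
    change boxIntegral (fun x => (f x + g x) ^ 2) = _
    rw [heq, boxIntegral_add (by fun_prop) (by fun_prop),
      boxIntegral_add (by fun_prop) (by fun_prop), boxIntegral_const_mul, ← add_assoc]
    rfl
  refine le_of_sq_le_sq ?_ (add_nonneg (l2norm_nonneg f) (l2norm_nonneg g))
  rw [l2norm_sq, hexpand, ← l2norm_sq, ← l2norm_sq]
  linarith [le_of_abs_le (abs_boxIntegral_mul_le hf hg)]

lemma l2norm_const_mul (c : ℝ) (f : (Fin d → ℝ) → ℝ) :
    l2norm (fun x => c * f x) = |c| * l2norm f := by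
  simp only [l2norm, l2sq, mul_pow, integral_const_mul]
  rw [Real.sqrt_mul (sq_nonneg c), Real.sqrt_sq_eq_abs]

lemma l2norm_sub_le (hf : Continuous f) (hg : Continuous g) :
    l2norm (fun x => f x - g x) ≤ l2norm f + l2norm g := by
  simpa [sub_eq_add_neg, l2norm, l2sq] using l2norm_add_le hf hg.neg

lemma l2norm_mono (hf : Continuous f) (hg : Continuous g) (h : ∀ x, |f x| ≤ g x) :
    l2norm f ≤ l2norm g :=
  Real.sqrt_le_sqrt (boxIntegral_mono (by fun_prop) (by fun_prop) fun x =>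
    sq_le_sq' (neg_le_of_abs_le (h x)) (le_of_abs_le (h x)))

lemma l2norm_const (c : ℝ) : l2norm (fun _ : Fin d → ℝ => c) = |c| := by
  rw [l2norm, ← Real.sqrt_sq_eq_abs]
  exact congrArg _ (boxIntegral_const (c ^ 2))

lemma l2norm_le_of_abs_le (hf : Continuous f) {c : ℝ} (h : ∀ x, |f x| ≤ c) : l2norm f ≤ c := by
  have hc : 0 ≤ c := (abs_nonneg _).trans (h 0)
  simpa [l2norm_const, abs_of_nonneg hc] using l2norm_mono hf (continuous_const (y := c)) h

lemma l2norm_mul_le (hf : Continuous f) (hg : Continuous g) {c : ℝ} (h : ∀ x, |f x| ≤ c) :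
    l2norm (fun x => f x * g x) ≤ c * l2norm g := by
  have hc : 0 ≤ c := (abs_nonneg _).trans (h 0)
  have habs : l2norm (fun x => |g x|) = l2norm g := by simp only [l2norm, l2sq, sq_abs]
  rw [← abs_of_nonneg hc, ← habs, ← l2norm_const_mul]
  refine l2norm_mono (by fun_prop) (by fun_prop) fun x => ?_
  rw [abs_mul]
  exact mul_le_mul_of_nonneg_right (h x) (abs_nonneg _)

lemma abs_boxIntegral_mul_le_of_abs_le (hf : Continuous f) (hg : Continuous g) {c : ℝ}
    (h : ∀ x, |f x| ≤ c) : |boxIntegral (fun x => f x * g x)| ≤ c * l2norm g :=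
  (abs_boxIntegral_mul_le hf hg).trans
    (mul_le_mul_of_nonneg_right (l2norm_le_of_abs_le hf h) (l2norm_nonneg g))

lemma l2norm_sub_comm (f g : (Fin d → ℝ) → ℝ) :
    l2norm (fun x => f x - g x) = l2norm (fun x => g x - f x) := by
  simp only [l2norm, l2sq, sub_sq_comm]

lemma l2norm_shear (i : Fin d) (hf : Continuous f) (hp : SpacePeriodic f) (hg : Continuous g)
    (hgp : SpacePeriodic g) (hgi : ConstAlong i g) :
    l2norm (fun x => f (x + g x • basisVec i)) = l2norm f :=
  congrArg Real.sqrt (boxIntegral_shear i (f := fun x => f x ^ 2) (by fun_prop) (hp.comp (· ^ 2))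
    hg hgp hgi)

lemma l2norm_comp_add_right (hp : SpacePeriodic f) (v : Fin d → ℝ) :
    l2norm (fun x => f (x + v)) = l2norm f :=
  congrArg Real.sqrt (boxIntegral_comp_add_right (hp.comp (· ^ 2)) v)

end L2Norm

section LineAverage

variable {d : ℕ} {f : (Fin d → ℝ) → ℝ} {c : ℝ → ℝ}

/-- The average of `f` over the closed line through `x` in direction `e_i`, weighted by `c`. -/
def lineAverage (c : ℝ → ℝ) (i : Fin d) (f : (Fin d → ℝ) → ℝ) (x : Fin d → ℝ) : ℝ :=
  ∫ r in (0 : ℝ)..1, c r * f (x + r • basisVec i)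

lemma continuous_lineAverage (hc : Continuous c) (i : Fin d) (hf : Continuous f) :
    Continuous (lineAverage c i f) :=
  continuous_unitIntegral (F := fun x r => c r * f (x + r • basisVec i)) (by fun_prop)

lemma SpacePeriodic.lineAverage (hf : SpacePeriodic f) (c : ℝ → ℝ) (i : Fin d) :
    SpacePeriodic (lineAverage c i f) :=
  SpacePeriodic.intervalIntegral (F := fun r x => c r * f (x + r • basisVec i))
    (fun _ => (hf.comp_add_right _).comp _) 0 1

lemma sq_unitIntegral_le {h : ℝ → ℝ} (hh : Continuous h) :
    (∫ r in (0 : ℝ)..1, h r) ^ 2 ≤ ∫ r in (0 : ℝ)..1, h r ^ 2 := by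
  have hprob : IsProbabilityMeasure (volume.restrict (Set.Ioc (0 : ℝ) 1)) :=
    ⟨by simp⟩
  have hint {φ : ℝ → ℝ} (hφ : Continuous φ) : IntegrableOn φ (Set.Ioc 0 1) :=
    (intervalIntegrable_iff_integrableOn_Ioc_of_le zero_le_one).mp (hφ.intervalIntegrable 0 1)
  simp only [intervalIntegral.integral_of_le (zero_le_one : (0 : ℝ) ≤ 1)]
  exact (even_two.convexOn_pow (𝕜 := ℝ)).map_integral_le (by fun_prop) isClosed_univ
    (by simp) (hint hh) (hint (by fun_prop))

lemma l2norm_lineAverage_le (hc : Continuous c) (i : Fin d) (hf : Continuous f)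
    (hp : SpacePeriodic f) (hc1 : ∀ r ∈ Set.Icc (0 : ℝ) 1, |c r| ≤ 1) :
    l2norm (lineAverage c i f) ≤ l2norm f := by
  have hcont := continuous_lineAverage hc i hf
  have hjensen (x : Fin d → ℝ) :
      lineAverage c i f x ^ 2 ≤ ∫ r in (0 : ℝ)..1, f (x + r • basisVec i) ^ 2 := by
    refine (sq_unitIntegral_le (by fun_prop)).trans ?_
    refine intervalIntegral.integral_mono_on zero_le_one
      (Continuous.intervalIntegrable (by fun_prop) _ _)
      (Continuous.intervalIntegrable (by fun_prop) _ _) fun r hr => ?_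
    rw [mul_pow]
    exact mul_le_of_le_one_left (sq_nonneg _) ((sq_le_one_iff_abs_le_one _).2 (hc1 r hr))
  refine Real.sqrt_le_sqrt ?_
  calc boxIntegral (fun x => lineAverage c i f x ^ 2)
      ≤ boxIntegral (fun x => ∫ r in (0 : ℝ)..1, f (x + r • basisVec i) ^ 2) :=
        boxIntegral_mono (by fun_prop) (continuous_unitIntegral
          (F := fun x r => f (x + r • basisVec i) ^ 2) (by fun_prop)) hjensen
    _ = l2sq f := boxIntegral_lineIntegral i (by fun_prop) (hp.comp (· ^ 2))

end LineAverage

/-! ### The maximum principle and Lipschitz bounds in time -/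

section SecondDerivativeTest

lemma deriv_deriv_nonpos_of_forall_le {f : ℝ → ℝ} (hf : Differentiable ℝ f) {c : ℝ}
    (hmax : ∀ s, f s ≤ f c) : deriv (deriv f) c ≤ 0 := by
  by_contra! hpos
  have hcrit : deriv f c = 0 := IsLocalMax.deriv_eq_zero (Eventually.of_forall hmax)
  have hmin := isLocalMin_of_deriv_deriv_pos hpos hcrit hf.continuous.continuousAt
  have hconst : f =ᶠ[𝓝 c] fun _ => f c := by
    filter_upwards [hmin] with s hs
    exact le_antisymm (hmax s) hs
  have hzero := hconst.deriv.deriv_eq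
  rw [deriv_const', deriv_const] at hzero
  exact hpos.ne' hzero

lemma le_deriv_of_forall_left {f : ℝ → ℝ} {a t c : ℝ} (hat : a < t) (hf : DifferentiableAt ℝ f t)
    (h : ∀ s ∈ Set.Ioo a t, f s ≤ f t - c * (t - s)) : c ≤ deriv f t := by
  have hslope : Tendsto (slope f t) (𝓝[<] t) (𝓝 (deriv f t)) :=
    hf.hasDerivAt.tendsto_slope.mono_left (nhdsWithin_mono t fun _ hy => ne_of_lt hy)
  refine ge_of_tendsto hslope ?_
  filter_upwards [Ioo_mem_nhdsLT hat] with s hs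
  rw [slope_comm, slope_def_field, le_div_iff₀ (sub_pos.2 hs.2)]
  linarith [h s hs]

variable {d : ℕ} {f : (Fin d → ℝ) → ℝ}

lemma pd_eq_zero_of_forall_le {x : Fin d → ℝ} (hmax : ∀ y, f y ≤ f x) (i : Fin d) :
    pd f i x = 0 := by
  have hlocal : IsLocalMax f x := Eventually.of_forall hmax
  rw [pd, hlocal.fderiv_eq_zero, zero_apply]

lemma pd_pd_nonpos_of_forall_le (hf : ContDiff ℝ 2 f) {x : Fin d → ℝ} (hmax : ∀ y, f y ≤ f x)
    (i : Fin d) : pd (pd f i) i x ≤ 0 := by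
  have hline := hasDerivAt_line (hf.differentiable two_ne_zero) i x
  have hsecond := deriv_deriv_nonpos_of_forall_le (f := fun r : ℝ => f (x + r • basisVec i))
    (fun s => (hline s).differentiableAt) (c := 0) fun s => by simpa using hmax _
  rw [funext fun s => (hline s).deriv,
    (hasDerivAt_line ((contDiff_pd hf i).differentiable one_ne_zero) i x 0).deriv] at hsecond
  simpa using hsecond

lemma abs_sub_le_of_abs_pd_le (hf : Differentiable ℝ f) {i : Fin d} {K : ℝ}
    (hK : ∀ x, |pd f i x| ≤ K) (x : Fin d → ℝ) (h : ℝ) :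
    |f (x + h • basisVec i) - f x| ≤ K * |h| := by
  have hmean := Convex.norm_image_sub_le_of_norm_hasDerivWithin_le (s := Set.univ)
    (fun s _ => (hasDerivAt_line hf i x s).hasDerivWithinAt) (fun s _ => hK _) convex_univ
    (Set.mem_univ (0 : ℝ)) (Set.mem_univ h)
  simpa using hmean

lemma abs_pd_le_of_abs_sub_le (hf : Differentiable ℝ f) {i : Fin d} {K : ℝ} {x : Fin d → ℝ}
    (hK : ∀ h : ℝ, |f (x + h • basisVec i) - f x| ≤ K * |h|) : |pd f i x| ≤ K := by
  have hslope := (hasDerivAt_line hf i x 0).tendsto_slope.abs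
  simp only [zero_smul, add_zero] at hslope
  refine le_of_tendsto hslope ?_
  filter_upwards [self_mem_nhdsWithin] with s hs
  rw [slope_def_field, sub_zero, zero_smul, add_zero, abs_div, div_le_iff₀ (abs_pos.2 hs)]
  exact hK s

lemma exists_mem_box_forall_eq (x : Fin d → ℝ) :
    ∃ y ∈ box d, ∀ g : (Fin d → ℝ) → ℝ, SpacePeriodic g → g x = g y := by
  refine ⟨fun i => Int.fract (x i), ⟨fun i => Int.fract_nonneg _, fun i => (Int.fract_lt_one _).le⟩,
    fun g hg => ?_⟩
  rw [← hg (fun i => Int.fract (x i)) fun i => ⌊x i⌋]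
  exact congrArg g (funext fun i => (Int.fract_add_floor (x i)).symm)

lemma SpacePeriodic.exists_abs_le (hp : SpacePeriodic f) (hf : Continuous f) :
    ∃ K, 0 < K ∧ ∀ x, |f x| ≤ K := by
  obtain ⟨K, hK⟩ := (isCompact_box d).exists_bound_of_continuousOn hf.continuousOn
  refine ⟨max K 1, by positivity, fun x => ?_⟩
  obtain ⟨y, hy, hxy⟩ := exists_mem_box_forall_eq x
  rw [hxy f hp]
  exact (hK y hy).trans (le_max_left _ _)

end SecondDerivativeTest

section MaximumPrinciple

variable {d : ℕ}

/-- The derivative `v · ∇f` of `f` in the direction of the vector `v`. -/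
def advection (v : Fin d → ℝ) (f : (Fin d → ℝ) → ℝ) (x : Fin d → ℝ) : ℝ :=
  ∑ l, v l * pd f l x

/-- The Laplacian `Δf`, as the sum of the second partial derivatives. -/
def torusLaplacian (f : (Fin d → ℝ) → ℝ) (x : Fin d → ℝ) : ℝ := ∑ l, pd (pd f l) l x

/-- The residual `∂_t z + u·∇z - κΔz` of the advection–diffusion equation. -/
def advDiffResidual (u : ℝ → (Fin d → ℝ) → Fin d → ℝ) (κ : ℝ) (z : ℝ → (Fin d → ℝ) → ℝ)
    (t : ℝ) (x : Fin d → ℝ) : ℝ :=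
  deriv (fun s => z s x) t + advection (u t x) (z t) x - κ * torusLaplacian (z t) x

/-- Classical regularity for a parabolic equation on `[a, b] × T^d`: continuity up to the initial
time, two space derivatives and one time derivative afterwards. -/
structure IsClassicalOn (a b : ℝ) (z : ℝ → (Fin d → ℝ) → ℝ) : Prop where
  periodic : ∀ t, SpacePeriodic (z t)
  cont : ContinuousOn (fun p : ℝ × (Fin d → ℝ) => z p.1 p.2) (Set.Icc a b ×ˢ Set.univ)
  spaceC2 : ∀ t ∈ Set.Ioc a b, ContDiff ℝ 2 (z t)
  timeDiff : ∀ t ∈ Set.Ioc a b, ∀ x, DifferentiableAt ℝ (fun s => z s x) t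

variable {a b κ : ℝ} {u : ℝ → (Fin d → ℝ) → Fin d → ℝ} {z w : ℝ → (Fin d → ℝ) → ℝ}

lemma IsClassicalOn.neg (hz : IsClassicalOn a b z) : IsClassicalOn a b fun t x => -z t x where
  periodic t := (hz.periodic t).comp (-·)
  cont := hz.cont.neg
  spaceC2 t ht := (hz.spaceC2 t ht).neg
  timeDiff t ht x := (hz.timeDiff t ht x).neg

lemma IsClassicalOn.sub (hz : IsClassicalOn a b z) (hw : IsClassicalOn a b w) :
    IsClassicalOn a b fun t x => z t x - w t x where
  periodic t := (hz.periodic t).sub (hw.periodic t)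
  cont := hz.cont.sub hw.cont
  spaceC2 t ht := (hz.spaceC2 t ht).sub (hw.spaceC2 t ht)
  timeDiff t ht x := (hz.timeDiff t ht x).sub (hw.timeDiff t ht x)

lemma IsClassicalOn.const {f : (Fin d → ℝ) → ℝ} (hp : SpacePeriodic f) (hf : ContDiff ℝ 2 f) :
    IsClassicalOn a b fun _ => f where
  periodic _ := hp
  cont := (hf.continuous.comp continuous_snd).continuousOn
  spaceC2 _ _ := hf
  timeDiff _ _ _ := differentiableAt_const _

lemma IsClassicalOn.comp_add_right (hz : IsClassicalOn a b z) (v : Fin d → ℝ) :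
    IsClassicalOn a b fun t x => z t (x + v) where
  periodic t := (hz.periodic t).comp_add_right v
  cont := hz.cont.comp (f := fun p : ℝ × (Fin d → ℝ) => (p.1, p.2 + v)) (by fun_prop)
    fun _ hp => ⟨hp.1, trivial⟩
  spaceC2 t ht := (hz.spaceC2 t ht).comp (contDiff_id.add contDiff_const)
  timeDiff t ht x := hz.timeDiff t ht (x + v)

lemma IsClassicalOn.comp_time_add (hz : IsClassicalOn a b z) (h : ℝ) :
    IsClassicalOn (a - h) (b - h) fun t x => z (t + h) x where
  periodic t := hz.periodic (t + h)
  cont := hz.cont.comp (f := fun p : ℝ × (Fin d → ℝ) => (p.1 + h, p.2)) (by fun_prop)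
    fun _ hp => ⟨⟨sub_le_iff_le_add.1 hp.1.1, le_sub_iff_add_le.1 hp.1.2⟩, trivial⟩
  spaceC2 t ht := hz.spaceC2 _ ⟨sub_lt_iff_lt_add.1 ht.1, le_sub_iff_add_le.1 ht.2⟩
  timeDiff t ht x :=
    (hz.timeDiff _ ⟨sub_lt_iff_lt_add.1 ht.1, le_sub_iff_add_le.1 ht.2⟩ x).comp
      (f := fun s => s + h) (g := fun s => z s x) t (by fun_prop)

lemma IsClassicalOn.mono (hz : IsClassicalOn a b z) {a' b' : ℝ} (ha : a ≤ a') (hb : b' ≤ b) :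
    IsClassicalOn a' b' z where
  periodic := hz.periodic
  cont := hz.cont.mono (Set.prod_mono (Set.Icc_subset_Icc ha hb) le_rfl)
  spaceC2 t ht := hz.spaceC2 t ⟨ha.trans_lt ht.1, ht.2.trans hb⟩
  timeDiff t ht := hz.timeDiff t ⟨ha.trans_lt ht.1, ht.2.trans hb⟩

lemma advection_sub_left (v v' : Fin d → ℝ) (f : (Fin d → ℝ) → ℝ) (x : Fin d → ℝ) :
    advection (v - v') f x = advection v f x - advection v' f x := by
  simp only [advection, Pi.sub_apply, sub_mul, Finset.sum_sub_distrib]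

lemma advection_sub {f g : (Fin d → ℝ) → ℝ} (hf : Differentiable ℝ f) (hg : Differentiable ℝ g)
    (v x : Fin d → ℝ) :
    advection v (fun y => f y - g y) x = advection v f x - advection v g x := by
  simp only [advection, pd_sub hf hg, mul_sub, Finset.sum_sub_distrib]

lemma torusLaplacian_sub {f g : (Fin d → ℝ) → ℝ} (hf : ContDiff ℝ 2 f) (hg : ContDiff ℝ 2 g)
    (x : Fin d → ℝ) :
    torusLaplacian (fun y => f y - g y) x = torusLaplacian f x - torusLaplacian g x := by
  simp only [torusLaplacian, pd_sub (hf.differentiable two_ne_zero) (hg.differentiable two_ne_zero),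
    pd_sub ((contDiff_pd hf _).differentiable one_ne_zero)
      ((contDiff_pd hg _).differentiable one_ne_zero), Finset.sum_sub_distrib]

lemma advDiffResidual_neg (u : ℝ → (Fin d → ℝ) → Fin d → ℝ) (κ : ℝ) (z : ℝ → (Fin d → ℝ) → ℝ)
    (t : ℝ) (x : Fin d → ℝ) :
    advDiffResidual u κ (fun t x => -z t x) t x = -advDiffResidual u κ z t x := by
  simp only [advDiffResidual, advection, torusLaplacian, deriv.fun_neg, pd_neg, mul_neg,
    Finset.sum_neg_distrib]
  ring

lemma advDiffResidual_sub (hz : IsClassicalOn a b z) (hw : IsClassicalOn a b w) {t : ℝ}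
    (ht : t ∈ Set.Ioc a b) (x : Fin d → ℝ) :
    advDiffResidual u κ (fun t x => z t x - w t x) t x
      = advDiffResidual u κ z t x - advDiffResidual u κ w t x := by
  have hzt := hz.spaceC2 t ht
  have hwt := hw.spaceC2 t ht
  rw [advDiffResidual, deriv_fun_sub (hz.timeDiff t ht x) (hw.timeDiff t ht x),
    advection_sub (hzt.differentiable two_ne_zero) (hwt.differentiable two_ne_zero),
    torusLaplacian_sub hzt hwt, advDiffResidual, advDiffResidual]
  ring

/-- At a positive maximum of `z - (K + ε)(t - a)` all first derivatives in space vanish and the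
Laplacian is nonpositive, while the time derivative is at least `K + ε`. -/
lemma IsClassicalOn.lt_of_advDiffResidual_le (hz : IsClassicalOn a b z) (hκ : 0 ≤ κ) {K L m : ℝ}
    (hKL : K < L) (hres : ∀ t ∈ Set.Ioc a b, ∀ x, advDiffResidual u κ z t x ≤ K)
    (hinit : ∀ x, z a x ≤ m) {t : ℝ} (ht : t ∈ Set.Icc a b) (x : Fin d → ℝ) :
    z t x ≤ m + L * (t - a) := by
  by_contra! hlarge
  obtain ⟨y, hy, -⟩ := exists_mem_box_forall_eq x
  obtain ⟨⟨τ, ξ⟩, ⟨hτ, -⟩, hmaxBox⟩ := (isCompact_Icc.prod (isCompact_box d)).exists_isMaxOn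
    ⟨(t, y), ht, hy⟩ (f := fun p : ℝ × (Fin d → ℝ) => z p.1 p.2 - L * (p.1 - a))
    ((hz.cont.mono (Set.prod_mono le_rfl (Set.subset_univ _))).sub (by fun_prop))
  have hmax (s : ℝ) (hs : s ∈ Set.Icc a b) (η : Fin d → ℝ) :
      z s η - L * (s - a) ≤ z τ ξ - L * (τ - a) := by
    obtain ⟨η', hη', hrep⟩ := exists_mem_box_forall_eq η
    rw [hrep _ (hz.periodic s)]
    exact hmaxBox (Set.mk_mem_prod hs hη')
  have haτ : a < τ := by
    refine lt_of_le_of_ne hτ.1 fun h => ?_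
    have hle := hmax t ht x
    rw [← h, sub_self, mul_zero] at hle
    linarith [hinit ξ]
  have hτ' : τ ∈ Set.Ioc a b := ⟨haτ, hτ.2⟩
  have hspace (η : Fin d → ℝ) : z τ η ≤ z τ ξ := by linarith [hmax τ hτ η]
  have htime : L ≤ deriv (fun s => z s ξ) τ :=
    le_deriv_of_forall_left haτ (hz.timeDiff τ hτ' ξ) fun s hs => by
      linarith [hmax s ⟨hs.1.le, hs.2.le.trans hτ.2⟩ ξ]
  have hadv : advection (u τ ξ) (z τ) ξ = 0 :=
    Finset.sum_eq_zero fun l _ => by rw [pd_eq_zero_of_forall_le hspace, mul_zero]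
  have hlap : κ * torusLaplacian (z τ) ξ ≤ 0 := mul_nonpos_of_nonneg_of_nonpos hκ
    (Finset.sum_nonpos fun l _ => pd_pd_nonpos_of_forall_le (hz.spaceC2 τ hτ') hspace l)
  have := hres τ hτ' ξ
  rw [advDiffResidual] at this
  linarith

lemma IsClassicalOn.le_of_advDiffResidual_le (hz : IsClassicalOn a b z) (hκ : 0 ≤ κ) {K m : ℝ}
    (hres : ∀ t ∈ Set.Ioc a b, ∀ x, advDiffResidual u κ z t x ≤ K)
    (hinit : ∀ x, z a x ≤ m) {t : ℝ} (ht : t ∈ Set.Icc a b) (x : Fin d → ℝ) :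
    z t x ≤ m + K * (t - a) := by
  have hlim : Tendsto (fun L => m + L * (t - a)) (𝓝[>] K) (𝓝 (m + K * (t - a))) :=
    Continuous.tendsto' (by fun_prop) _ _ rfl |>.mono_left nhdsWithin_le_nhds
  refine ge_of_tendsto hlim ?_
  filter_upwards [self_mem_nhdsWithin] with L hL
  exact hz.lt_of_advDiffResidual_le hκ hL hres hinit ht x

theorem IsClassicalOn.abs_le_of_abs_advDiffResidual_le (hz : IsClassicalOn a b z) (hκ : 0 ≤ κ)
    {K m : ℝ} (hres : ∀ t ∈ Set.Ioc a b, ∀ x, |advDiffResidual u κ z t x| ≤ K)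
    (hinit : ∀ x, |z a x| ≤ m) {t : ℝ} (ht : t ∈ Set.Icc a b) (x : Fin d → ℝ) :
    |z t x| ≤ m + K * (t - a) := by
  refine abs_le'.2 ⟨hz.le_of_advDiffResidual_le hκ (fun t ht x => le_of_abs_le (hres t ht x))
    (fun x => le_of_abs_le (hinit x)) ht x,
    hz.neg.le_of_advDiffResidual_le (u := u) hκ (fun t ht x => ?_)
      (fun x => neg_le_of_neg_le (neg_le_of_abs_le (hinit x))) ht x⟩
  rw [advDiffResidual_neg]
  exact neg_le_of_neg_le (neg_le_of_abs_le (hres t ht x))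

end MaximumPrinciple

section TimeLipschitz

variable {d : ℕ} {a b κ : ℝ} {u : ℝ → (Fin d → ℝ) → Fin d → ℝ} {z : ℝ → (Fin d → ℝ) → ℝ}

lemma advDiffResidual_comp_add_right {t : ℝ} {x v : Fin d → ℝ} (hu : u t (x + v) = u t x) :
    advDiffResidual u κ (fun t x => z t (x + v)) t x = advDiffResidual u κ z t (x + v) := by
  simp only [advDiffResidual, advection, torusLaplacian, pd_comp_add_right, hu]

lemma advDiffResidual_const (f : (Fin d → ℝ) → ℝ) (t : ℝ) (x : Fin d → ℝ) :
    advDiffResidual u κ (fun _ => f) t x = advection (u t x) f x - κ * torusLaplacian f x := by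
  rw [advDiffResidual, deriv_const, zero_add]

lemma advDiffResidual_comp_time_add (h t : ℝ) (x : Fin d → ℝ) :
    advDiffResidual u κ (fun t x => z (t + h) x) t x
      = advDiffResidual u κ z (t + h) x - advection (u (t + h) x - u t x) (z (t + h)) x := by
  rw [advDiffResidual, deriv_comp_add_const (f := fun s => z s x), advection_sub_left,
    advDiffResidual]
  ring

lemma IsClassicalOn.abs_pd_le (hz : IsClassicalOn a b z) (hκ : 0 ≤ κ)
    (hza : Differentiable ℝ (z a)) {i : Fin d}
    (hu : ∀ t x (r : ℝ), u t (x + r • basisVec i) = u t x)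
    (hres : ∀ t ∈ Set.Ioc a b, ∀ x, advDiffResidual u κ z t x = 0) {K : ℝ}
    (hK : ∀ x, |pd (z a) i x| ≤ K) {t : ℝ} (ht : t ∈ Set.Ioc a b) (x : Fin d → ℝ) :
    |pd (z t) i x| ≤ K := by
  refine abs_pd_le_of_abs_sub_le ((hz.spaceC2 t ht).differentiable two_ne_zero) fun h => ?_
  have hshift := hz.comp_add_right (h • basisVec i)
  have hbound := (hshift.sub hz).abs_le_of_abs_advDiffResidual_le (u := u) hκ (K := 0)
    (fun t ht x => by
      rw [advDiffResidual_sub hshift hz ht, advDiffResidual_comp_add_right (hu t x h),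
        hres t ht, hres t ht, sub_zero, abs_zero])
    (abs_sub_le_of_abs_pd_le hza hK · h) ⟨ht.1.le, ht.2⟩ x
  simpa using hbound

lemma IsClassicalOn.abs_sub_initial_le (hz : IsClassicalOn a b z) (hκ : 0 ≤ κ)
    (hza : ContDiff ℝ 2 (z a)) (hres : ∀ t ∈ Set.Ioc a b, ∀ x, advDiffResidual u κ z t x = 0)
    {C : ℝ} (hC : ∀ t ∈ Set.Ioc a b, ∀ x,
      |advection (u t x) (z a) x - κ * torusLaplacian (z a) x| ≤ C)
    {t : ℝ} (ht : t ∈ Set.Icc a b) (x : Fin d → ℝ) : |z t x - z a x| ≤ C * (t - a) := by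
  have hconst : IsClassicalOn a b fun _ => z a := .const (hz.periodic a) hza
  have hbound := (hz.sub hconst).abs_le_of_abs_advDiffResidual_le (u := u) hκ (K := C) (m := 0)
    (fun t ht x => by
      rw [advDiffResidual_sub hz hconst ht, hres t ht, advDiffResidual_const, zero_sub, abs_neg]
      exact hC t ht x)
    (by simp) ht x
  simpa using hbound

lemma IsClassicalOn.abs_sub_time_le (hz : IsClassicalOn a b z) (hκ : 0 ≤ κ)
    (hres : ∀ t ∈ Set.Ioc a b, ∀ x, advDiffResidual u κ z t x = 0) {C M : ℝ} (hM : 0 ≤ M)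
    (hC : ∀ t ∈ Set.Icc a b, ∀ x, |z t x - z a x| ≤ C * (t - a))
    (hu : ∀ s ∈ Set.Ioc a b, ∀ t ∈ Set.Ioc a b, s ≤ t → ∀ x,
      |advection (u t x - u s x) (z t) x| ≤ M * (t - s))
    {s t : ℝ} (hs : s ∈ Set.Icc a b) (ht : t ∈ Set.Icc a b) (hst : s ≤ t) (x : Fin d → ℝ) :
    |z t x - z s x| ≤ (C + M * (b - a)) * (t - s) := by
  have hMst : 0 ≤ M * (t - s) := mul_nonneg hM (sub_nonneg.2 hst)
  have hshift : IsClassicalOn a (b - (t - s)) fun r x => z (r + (t - s)) x :=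
    (hz.comp_time_add (t - s)).mono (by linarith) le_rfl
  have hbase : IsClassicalOn a (b - (t - s)) z := hz.mono le_rfl (by linarith)
  have hbound := (hshift.sub hbase).abs_le_of_abs_advDiffResidual_le (u := u) hκ
    (K := M * (t - s)) (m := C * (t - s))
    (fun r hr x => by
      have hr₁ : r ∈ Set.Ioc a b := ⟨hr.1, by linarith [hr.2]⟩
      have hr₂ : r + (t - s) ∈ Set.Ioc a b := ⟨by linarith [hr.1], by linarith [hr.2]⟩
      rw [advDiffResidual_sub hshift hbase hr, advDiffResidual_comp_time_add, hres _ hr₂,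
        hres _ hr₁, zero_sub, sub_zero, abs_neg]
      simpa using hu r hr₁ _ hr₂ (by linarith) x)
    (fun x => by simpa using hC (a + (t - s)) ⟨by linarith, by linarith [hs.1, ht.2]⟩ x)
    ⟨hs.1, by linarith [ht.2]⟩ x
  rw [add_sub_cancel] at hbound
  calc |z t x - z s x| ≤ C * (t - s) + M * (t - s) * (s - a) := hbound
    _ ≤ C * (t - s) + M * (t - s) * (b - a) :=
        add_le_add_right (mul_le_mul_of_nonneg_left (by linarith [hs.2]) hMst) _
    _ = (C + M * (b - a)) * (t - s) := by ring

/-- The shear flow with profile `F` in direction `e_i` and amplitude `η t`. -/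
def shearField (η : ℝ → ℝ) (F : (Fin d → ℝ) → ℝ) (i : Fin d) (t : ℝ) (x : Fin d → ℝ) :
    Fin d → ℝ := (η t * F x) • basisVec i

lemma advection_shearField (η : ℝ → ℝ) (F : (Fin d → ℝ) → ℝ) (i : Fin d) (t : ℝ)
    (f : (Fin d → ℝ) → ℝ) (x : Fin d → ℝ) :
    advection (shearField η F i t x) f x = η t * F x * pd f i x := by
  simp [advection, shearField, Pi.single_apply]

lemma SpacePeriodic.exists_abs_torusLaplacian_le {f : (Fin d → ℝ) → ℝ} (hf : ContDiff ℝ 2 f)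
    (hp : SpacePeriodic f) : ∃ K, ∀ x, |torusLaplacian f x| ≤ K := by
  have hcont : Continuous (torusLaplacian f) :=
    continuous_finsetSum _ fun l _ => continuous_pd (contDiff_pd hf l) l
  have hper : SpacePeriodic (torusLaplacian f) := fun x k =>
    Finset.sum_congr rfl fun l _ => (hp.pd l).pd l x k
  exact (hper.exists_abs_le hcont).imp fun _ h => h.2

lemma lipschitzOnWith_of_abs_sub_le_of_le {f : ℝ → ℝ} {K : ℝ} {S : Set ℝ}
    (h : ∀ s ∈ S, ∀ t ∈ S, s ≤ t → |f t - f s| ≤ K * (t - s)) :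
    LipschitzOnWith K.toNNReal f S := by
  refine .of_dist_le_mul fun s hs t ht => ?_
  wlog hst : s ≤ t generalizing s t
  · rw [dist_comm, dist_comm s]
    exact this t ht s hs (le_of_not_ge hst)
  rw [dist_comm, dist_comm s, Real.dist_eq, Real.dist_eq, abs_of_nonneg (sub_nonneg.2 hst)]
  exact (h s hs t ht hst).trans
    (mul_le_mul_of_nonneg_right (Real.le_coe_toNNReal K) (sub_nonneg.2 hst))

theorem IsClassicalOn.exists_time_lipschitz_of_shear {η : ℝ → ℝ} {F : (Fin d → ℝ) → ℝ} {i : Fin d}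
    (hz : IsClassicalOn a b z) (hκ : 0 ≤ κ) (hza : ContDiff ℝ 2 (z a)) {Λ : NNReal}
    (hη : LipschitzWith Λ η) (hF : Continuous F) (hFp : SpacePeriodic F) (hFi : ConstAlong i F)
    (hres : ∀ t ∈ Set.Ioc a b, ∀ x, advDiffResidual (shearField η F i) κ z t x = 0) :
    ∃ K : NNReal, ∀ x, LipschitzOnWith K (fun t => z t x) (Set.Icc a b) := by
  obtain ⟨B, hB, hFB⟩ := hFp.exists_abs_le hF
  obtain ⟨E, hηE⟩ := isCompact_Icc.exists_bound_of_continuousOn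
    (hη.continuous.continuousOn (s := Set.Icc a b))
  obtain ⟨K₁, hK₁, hgrad₀⟩ :=
    ((hz.periodic a).pd i).exists_abs_le (continuous_pd (hza.of_le (by norm_num)) i)
  obtain ⟨K₂, hlap₀⟩ := (hz.periodic a).exists_abs_torusLaplacian_le hza
  have hgrad {t : ℝ} (ht : t ∈ Set.Ioc a b) (x : Fin d → ℝ) : |pd (z t) i x| ≤ K₁ :=
    hz.abs_pd_le hκ (hza.differentiable two_ne_zero) (fun t x r => by simp [shearField, hFi x r])
      hres hgrad₀ ht x
  have hinit {t : ℝ} (ht : t ∈ Set.Icc a b) (x : Fin d → ℝ) :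
      |z t x - z a x| ≤ (E * B * K₁ + κ * K₂) * (t - a) := by
    refine hz.abs_sub_initial_le hκ hza hres (fun t ht x => ?_) ht x
    have hE := hηE t ⟨ht.1.le, ht.2⟩
    rw [Real.norm_eq_abs] at hE
    have hE0 : 0 ≤ E := (abs_nonneg _).trans hE
    rw [advection_shearField]
    refine (abs_sub _ _).trans ?_
    rw [abs_mul, abs_mul, abs_mul, abs_of_nonneg hκ]
    gcongr
    exacts [hFB x, hgrad₀ x, hlap₀ x]
  have hvar {s t : ℝ} (ht : t ∈ Set.Ioc a b) (hst : s ≤ t) (x : Fin d → ℝ) :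
      |advection (shearField η F i t x - shearField η F i s x) (z t) x|
        ≤ Λ * B * K₁ * (t - s) := by
    have hη' := hη.dist_le_mul t s
    rw [Real.dist_eq, Real.dist_eq, abs_of_nonneg (sub_nonneg.2 hst)] at hη'
    rw [advection_sub_left, advection_shearField, advection_shearField, ← sub_mul, ← sub_mul,
      abs_mul, abs_mul]
    calc |η t - η s| * |F x| * |pd (z t) i x| ≤ Λ * (t - s) * B * K₁ := by
          gcongr
          exacts [hFB x, hgrad ht x]
      _ = Λ * B * K₁ * (t - s) := by ring
  exact ⟨_, fun x => lipschitzOnWith_of_abs_sub_le_of_le fun s hs t ht hst =>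
    hz.abs_sub_time_le hκ hres (by positivity) (fun t ht x => hinit ht x)
      (fun s _ t ht hst x => hvar ht hst x) hs ht hst x⟩

end TimeLipschitz

/-! ### Cascades of shear flows -/

section ShearTransport

variable {d : ℕ} {F W : (Fin d → ℝ) → ℝ} {i : Fin d} {A : ℝ}

/-- The function `W` transported by the shear `x ↦ x + A F(x) e_i`. -/
def shearTransport (F : (Fin d → ℝ) → ℝ) (i : Fin d) (A : ℝ) (W : (Fin d → ℝ) → ℝ)
    (x : Fin d → ℝ) : ℝ := W (x + (-(A * F x)) • basisVec i)

lemma contDiff_shearTransport (hF : ContDiff ℝ 1 F) (i : Fin d) (A : ℝ) (hW : ContDiff ℝ 1 W) :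
    ContDiff ℝ 1 (shearTransport F i A W) :=
  hW.comp (contDiff_id.add ((contDiff_const.mul hF).neg.smul contDiff_const))

lemma continuous_shearTransport (hF : Continuous F) (i : Fin d) (A : ℝ) (hW : Continuous W) :
    Continuous (shearTransport F i A W) := by
  unfold shearTransport
  fun_prop

lemma SpacePeriodic.shearTransport (hF : SpacePeriodic F) (i : Fin d) (A : ℝ)
    (hW : SpacePeriodic W) : SpacePeriodic (shearTransport F i A W) :=
  hW.comp_shear (hF.comp fun r => -(A * r)) _

lemma shearTransport_zero (F : (Fin d → ℝ) → ℝ) (i : Fin d) (W : (Fin d → ℝ) → ℝ) :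
    shearTransport F i 0 W = W := by
  ext x
  simp [shearTransport]

lemma boxIntegral_shearTransport (hF : Continuous F) (hFp : SpacePeriodic F)
    (hFi : ConstAlong i F) (A : ℝ) (hW : Continuous W) (hWp : SpacePeriodic W) :
    boxIntegral (shearTransport F i A W) = boxIntegral W :=
  boxIntegral_shear i hW hWp (by fun_prop) (hFp.comp fun r => -(A * r))
    (hFi.comp fun r => -(A * r))

lemma l2norm_shearTransport (hF : Continuous F) (hFp : SpacePeriodic F) (hFi : ConstAlong i F)
    (A : ℝ) (hW : Continuous W) (hWp : SpacePeriodic W) :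
    l2norm (shearTransport F i A W) = l2norm W :=
  l2norm_shear i hW hWp (by fun_prop) (hFp.comp fun r => -(A * r)) (hFi.comp fun r => -(A * r))

lemma pd_shearTransport (hF : Differentiable ℝ F) (A : ℝ) (hW : Differentiable ℝ W) (l : Fin d)
    (x : Fin d → ℝ) :
    pd (shearTransport F i A W) l x
      = shearTransport F i A (pd W l) x - A * pd F l x * shearTransport F i A (pd W i) x := by
  have hmap : HasFDerivAt (fun x => x + (-(A * F x)) • basisVec i)
      (ContinuousLinearMap.id ℝ (Fin d → ℝ) + (-(A • fderiv ℝ F x)).smulRight (basisVec i)) x :=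
    (hasFDerivAt_id x).add (((hF x).hasFDerivAt.const_mul A).neg.smul_const (basisVec i))
  have hcomp := (hW (x + (-(A * F x)) • basisVec i)).hasFDerivAt.comp x hmap
  change fderiv ℝ (W ∘ fun x => x + (-(A * F x)) • basisVec i) x _ = _
  rw [hcomp.fderiv]
  simp [pd, shearTransport, sub_eq_add_neg]

lemma ConstAlong.pd_eq_zero (hFi : ConstAlong i F) (hF : Differentiable ℝ F) (x : Fin d → ℝ) :
    pd F i x = 0 := by
  have hline := hasDerivAt_line hF i x 0
  simp only [hFi x, zero_smul, add_zero] at hline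
  exact hline.unique (hasDerivAt_const _ _)

lemma pd_shearTransport_self (hF : Differentiable ℝ F) (hFi : ConstAlong i F) (A : ℝ)
    (hW : Differentiable ℝ W) (x : Fin d → ℝ) :
    pd (shearTransport F i A W) i x = shearTransport F i A (pd W i) x := by
  rw [pd_shearTransport hF A hW, hFi.pd_eq_zero hF, mul_zero, zero_mul, sub_zero]

lemma hasDerivAt_shearTransport (hF : Differentiable ℝ F) (hFi : ConstAlong i F)
    (hW : Differentiable ℝ W) {a : ℝ → ℝ} {a' t : ℝ} (ha : HasDerivAt a a' t) (x : Fin d → ℝ) :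
    HasDerivAt (fun s => shearTransport F i (a s) W x)
      (-(a' * F x * pd (shearTransport F i (a t) W) i x)) t := by
  have hcomp := (hasDerivAt_line hW i x (-(a t * F x))).comp t (ha.mul_const (F x)).neg
  refine hcomp.congr_deriv ?_
  rw [pd_shearTransport_self hF hFi (a t) hW, shearTransport]
  ring

lemma abs_shearTransport_sub_le (hW : Differentiable ℝ W) {K B : ℝ}
    (hK : ∀ x, |pd W i x| ≤ K) (hB : ∀ x, |F x| ≤ B) (A A' : ℝ) (x : Fin d → ℝ) :
    |shearTransport F i A W x - shearTransport F i A' W x| ≤ K * B * |A - A'| := by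
  have hmean := abs_sub_le_of_abs_pd_le hW hK (x + (-(A' * F x)) • basisVec i) (-((A - A') * F x))
  have hshift : x + (-(A' * F x)) • basisVec i + (-((A - A') * F x)) • basisVec i
      = x + (-(A * F x)) • basisVec i := by
    rw [add_assoc, ← add_smul]
    congr 2
    ring
  have hK0 : 0 ≤ K := (abs_nonneg _).trans (hK x)
  rw [hshift, abs_neg, abs_mul] at hmean
  calc |shearTransport F i A W x - shearTransport F i A' W x| ≤ K * (|A - A'| * |F x|) := hmean
    _ ≤ K * (|A - A'| * B) := by gcongr; exact hB x
    _ = K * B * |A - A'| := by ring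

end ShearTransport

/-- A velocity field on `[0, 1) × T^d` obtained by running shear flows one after the other: during
the time interval `[T k, T (k + 1)]` the velocity is `η_k(t) F_k(x) e_{dir k}`. -/
structure ShearCascade (d : ℕ) where
  T : ℕ → ℝ
  η : ℕ → ℝ → ℝ
  F : ℕ → (Fin d → ℝ) → ℝ
  dir : ℕ → Fin d
  T_zero : T 0 = 0
  strictMono_T : StrictMono T
  tendsto_T : Tendsto T atTop (𝓝 1)
  lipschitz_η : ∀ k, ∃ Λ, LipschitzWith Λ (η k)
  η_eq_zero : ∀ k, ∀ t ∉ Set.Ioo (T k) (T (k + 1)), η k t = 0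
  contDiff_F : ∀ k, ContDiff ℝ 1 (F k)
  periodic_F : ∀ k, SpacePeriodic (F k)
  constAlong_F : ∀ k, ConstAlong (dir k) (F k)

namespace ShearCascade

variable {d : ℕ} (S : ShearCascade d)

/-- The velocity field of the cascade. At each time at most one term of the sum is nonzero. -/
def velocity (t : ℝ) (x : Fin d → ℝ) : Fin d → ℝ :=
  ∑' k, shearField (S.η k) (S.F k) (S.dir k) t x

/-- The amplitude `∫_{T k}^t η_k` of the shear performed by stage `k` up to time `t`. -/
def displacement (k : ℕ) (t : ℝ) : ℝ := ∫ r in S.T k..t, S.η k r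

/-- The function `w` transported by the velocity field from time `0` to time `T k`. -/
def transport (w : (Fin d → ℝ) → ℝ) : ℕ → (Fin d → ℝ) → ℝ
  | 0 => w
  | k + 1 => shearTransport (S.F k) (S.dir k) (S.displacement k (S.T (k + 1))) (transport w k)

/-- The function `w` transported by the velocity field from time `0` to a time `t` in the `k`-th
stage `[T k, T (k + 1)]`. -/
def transportUpTo (w : (Fin d → ℝ) → ℝ) (k : ℕ) (t : ℝ) : (Fin d → ℝ) → ℝ :=
  shearTransport (S.F k) (S.dir k) (S.displacement k t) (S.transport w k)

lemma T_lt_one (k : ℕ) : S.T k < 1 :=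
  (S.strictMono_T k.lt_succ_self).trans_le
    (S.strictMono_T.monotone.ge_of_tendsto S.tendsto_T (k + 1))

lemma T_nonneg (k : ℕ) : 0 ≤ S.T k := S.T_zero.symm.le.trans (S.strictMono_T.monotone k.zero_le)

lemma T_le_T_succ (k : ℕ) : S.T k ≤ S.T (k + 1) := S.strictMono_T.monotone k.le_succ

lemma stage_subset_unitInterval (k : ℕ) : Set.Icc (S.T k) (S.T (k + 1)) ⊆ Set.Icc 0 1 :=
  Set.Icc_subset_Icc (S.T_nonneg k) (S.T_lt_one (k + 1)).le

lemma exists_mem_stage {t : ℝ} (h0 : 0 ≤ t) (h1 : t < 1) :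
    ∃ k, t ∈ Set.Ico (S.T k) (S.T (k + 1)) := by
  classical
  have hex : ∃ n, t < S.T n := (S.tendsto_T.eventually (lt_mem_nhds h1)).exists
  obtain ⟨m, hm⟩ : ∃ m, Nat.find hex = m + 1 :=
    Nat.exists_eq_succ_of_ne_zero fun h => absurd (h ▸ Nat.find_spec hex) (by simp [S.T_zero, h0])
  exact ⟨m, not_lt.1 (Nat.find_min hex (by omega)), hm ▸ Nat.find_spec hex⟩

lemma velocity_eq_shearField {k : ℕ} {t : ℝ} (ht : t ∈ Set.Icc (S.T k) (S.T (k + 1)))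
    (x : Fin d → ℝ) : S.velocity t x = shearField (S.η k) (S.F k) (S.dir k) t x := by
  refine tsum_eq_single k fun j hjk => ?_
  have hη : S.η j t = 0 := by
    refine S.η_eq_zero j t fun htj => ?_
    rcases lt_or_gt_of_ne hjk with h | h
    · exact (htj.2.trans_le (S.strictMono_T.monotone h)).not_ge ht.1
    · exact (htj.1.trans_le' (S.strictMono_T.monotone h)).not_ge ht.2
  rw [shearField, hη, zero_mul, zero_smul]

lemma velocity_eq_zero {t : ℝ} (ht : ∀ k, t ∉ Set.Ioo (S.T k) (S.T (k + 1))) (x : Fin d → ℝ) :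
    S.velocity t x = 0 := by
  simp [velocity, shearField, fun k => S.η_eq_zero k t (ht k)]

lemma continuous_η (k : ℕ) : Continuous (S.η k) := by
  obtain ⟨Λ, hΛ⟩ := S.lipschitz_η k
  exact hΛ.continuous

lemma hasDerivAt_displacement (k : ℕ) (t : ℝ) :
    HasDerivAt (S.displacement k) (S.η k t) t :=
  intervalIntegral.integral_hasDerivAt_right ((S.continuous_η k).intervalIntegrable _ _)
    ((S.continuous_η k).stronglyMeasurableAtFilter _ _) (S.continuous_η k).continuousAt

lemma continuous_displacement (k : ℕ) : Continuous (S.displacement k) :=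
  continuous_iff_continuousAt.2 fun t => (S.hasDerivAt_displacement k t).continuousAt

lemma exists_lipschitzWith_displacement (k : ℕ) : ∃ Λ, LipschitzWith Λ (S.displacement k) := by
  have hsupp : HasCompactSupport (S.η k) :=
    HasCompactSupport.intro isCompact_Icc fun t ht =>
      S.η_eq_zero k t fun h => ht (Set.Ioo_subset_Icc_self h)
  obtain ⟨C, hC⟩ := hsupp.exists_bound_of_continuous (S.continuous_η k)
  exact ⟨C.toNNReal, lipschitzWith_of_nnnorm_deriv_le
    (fun t => (S.hasDerivAt_displacement k t).differentiableAt) fun t => by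
      rw [(S.hasDerivAt_displacement k t).deriv]
      exact NNReal.le_toNNReal_of_coe_le (hC t)⟩

lemma displacement_self (k : ℕ) : S.displacement k (S.T k) = 0 := intervalIntegral.integral_same

variable {w : (Fin d → ℝ) → ℝ}

lemma contDiff_transport (hw : ContDiff ℝ 1 w) : ∀ k, ContDiff ℝ 1 (S.transport w k)
  | 0 => hw
  | k + 1 => contDiff_shearTransport (S.contDiff_F k) _ _ (contDiff_transport hw k)

lemma continuous_transport (hw : Continuous w) : ∀ k, Continuous (S.transport w k)
  | 0 => hw
  | k + 1 => continuous_shearTransport (S.contDiff_F k).continuous _ _ (continuous_transport hw k)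

lemma periodic_transport (hw : SpacePeriodic w) : ∀ k, SpacePeriodic (S.transport w k)
  | 0 => hw
  | k + 1 => (S.periodic_F k).shearTransport _ _ (periodic_transport hw k)

lemma transportUpTo_T (w : (Fin d → ℝ) → ℝ) (k : ℕ) :
    S.transportUpTo w k (S.T k) = S.transport w k := by
  rw [transportUpTo, displacement_self, shearTransport_zero]

lemma transport_const (c : ℝ) : ∀ k, S.transport (fun _ => c) k = fun _ => c
  | 0 => rfl
  | k + 1 => by rw [transport, transport_const c k]; rfl

lemma transportUpTo_const (c : ℝ) (k : ℕ) (t : ℝ) :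
    S.transportUpTo (fun _ => c) k t = fun _ => c := by
  rw [transportUpTo, transport_const]
  rfl

lemma contDiff_transportUpTo (hw : ContDiff ℝ 1 w) (k : ℕ) (t : ℝ) :
    ContDiff ℝ 1 (S.transportUpTo w k t) :=
  contDiff_shearTransport (S.contDiff_F k) _ _ (S.contDiff_transport hw k)

lemma periodic_transportUpTo (hw : SpacePeriodic w) (k : ℕ) (t : ℝ) :
    SpacePeriodic (S.transportUpTo w k t) :=
  (S.periodic_F k).shearTransport _ _ (S.periodic_transport hw k)

lemma continuous_uncurry_transportUpTo (hw : Continuous w) (k : ℕ) :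
    Continuous (fun p : ℝ × (Fin d → ℝ) => S.transportUpTo w k p.1 p.2) := by
  have hA := S.continuous_displacement k
  have hF := (S.contDiff_F k).continuous
  have hW := S.continuous_transport hw k
  unfold transportUpTo shearTransport
  fun_prop

lemma hasDerivAt_transportUpTo (hw : ContDiff ℝ 1 w) (k : ℕ) (t : ℝ) (x : Fin d → ℝ) :
    HasDerivAt (fun s => S.transportUpTo w k s x)
      (-(S.η k t * S.F k x * pd (S.transportUpTo w k t) (S.dir k) x)) t :=
  hasDerivAt_shearTransport ((S.contDiff_F k).differentiable one_ne_zero) (S.constAlong_F k)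
    ((S.contDiff_transport hw k).differentiable one_ne_zero) (S.hasDerivAt_displacement k t) x

lemma exists_lipschitzWith_transportUpTo (hw : ContDiff ℝ 1 w) (hwp : SpacePeriodic w) (k : ℕ) :
    ∃ Λ, ∀ x, LipschitzWith Λ (fun t => S.transportUpTo w k t x) := by
  have hW := S.contDiff_transport hw k
  obtain ⟨Λ, hΛ⟩ := S.exists_lipschitzWith_displacement k
  obtain ⟨B, hB, hFB⟩ := (S.periodic_F k).exists_abs_le (S.contDiff_F k).continuous
  obtain ⟨K, hK, hWK⟩ :=
    ((S.periodic_transport hwp k).pd (S.dir k)).exists_abs_le (continuous_pd hW (S.dir k))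
  refine ⟨(K * B * Λ).toNNReal, fun x => LipschitzWith.of_dist_le' fun t s => ?_⟩
  calc |S.transportUpTo w k t x - S.transportUpTo w k s x|
      ≤ K * B * |S.displacement k t - S.displacement k s| :=
        abs_shearTransport_sub_le (hW.differentiable one_ne_zero) hWK hFB _ _ x
    _ ≤ K * B * (Λ * |t - s|) :=
        mul_le_mul_of_nonneg_left (hΛ.dist_le_mul t s) (mul_pos hK hB).le
    _ = K * B * Λ * |t - s| := by ring

end ShearCascade

/-! ### Energy estimates along a cascade -/

section DirichletEnergy

variable {d : ℕ} {f g F : (Fin d → ℝ) → ℝ} {i : Fin d}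

/-- The Dirichlet energy `∫_{T^d} |∇f|²`. -/
def dirichletEnergy (f : (Fin d → ℝ) → ℝ) : ℝ := boxIntegral (gradSq f)

lemma gradSq_nonneg (f : (Fin d → ℝ) → ℝ) (x : Fin d → ℝ) : 0 ≤ gradSq f x :=
  Finset.sum_nonneg fun _ _ => sq_nonneg _

lemma dirichletEnergy_nonneg (f : (Fin d → ℝ) → ℝ) : 0 ≤ dirichletEnergy f :=
  boxIntegral_nonneg (gradSq_nonneg f)

lemma dissip_eq_intervalIntegral (θ : ℝ → (Fin d → ℝ) → ℝ) :
    dissip θ = ∫ t in (0 : ℝ)..1, dirichletEnergy (θ t) := by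
  rw [intervalIntegral.integral_of_le zero_le_one, ← integral_Icc_eq_integral_Ioc]
  rfl

lemma continuous_gradSq (hf : ContDiff ℝ 1 f) : Continuous (gradSq f) :=
  continuous_finsetSum _ fun l _ => (continuous_pd hf l).pow 2

/-- Young's inequality `∂f ∂g ≤ (lam/2) |∂f|² + |∂g|²/(2 lam)` in each direction. -/
lemma dirichletEnergy_sub_le (hf : ContDiff ℝ 1 f) (hg : ContDiff ℝ 1 g) {lam : ℝ}
    (hlam : 0 < lam) :
    (1 - lam / 2) * dirichletEnergy f - 1 / (2 * lam) * dirichletEnergy g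
      ≤ boxIntegral (fun x => ∑ l, pd f l x * (pd f l x - pd g l x)) := by
  have hcf := continuous_gradSq hf
  have hcg := continuous_gradSq hg
  have hpf := continuous_pd hf
  have hpg := continuous_pd hg
  rw [dirichletEnergy, dirichletEnergy, ← boxIntegral_const_mul, ← boxIntegral_const_mul,
    ← boxIntegral_sub (by fun_prop) (by fun_prop)]
  refine boxIntegral_mono (by fun_prop) (by fun_prop) fun x => ?_
  rw [gradSq, gradSq, Finset.mul_sum, Finset.mul_sum, ← Finset.sum_sub_distrib]
  refine Finset.sum_le_sum fun l _ => ?_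
  have hsquare : pd f l x * (pd f l x - pd g l x)
      - ((1 - lam / 2) * pd f l x ^ 2 - 1 / (2 * lam) * pd g l x ^ 2)
      = (lam * pd f l x - pd g l x) ^ 2 / (2 * lam) := by
    field_simp
    ring
  rw [← sub_nonneg, hsquare]
  positivity

lemma boxIntegral_mul_torusLaplacian (hg : ContDiff ℝ 1 g) (hgp : SpacePeriodic g)
    (hf : ContDiff ℝ 2 f) (hfp : SpacePeriodic f) :
    boxIntegral (fun x => g x * torusLaplacian f x)
      = -boxIntegral (fun x => ∑ l, pd f l x * pd g l x) := by
  have hpf (l : Fin d) := contDiff_pd hf l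
  have hpg := continuous_pd hg
  have hpfc (l : Fin d) := (hpf l).continuous
  have hppf (l : Fin d) := continuous_pd (hpf l) l
  simp only [torusLaplacian, Finset.mul_sum]
  rw [boxIntegral_sum _ (by fun_prop), boxIntegral_sum _ (by fun_prop), ← Finset.sum_neg_distrib]
  exact Finset.sum_congr rfl fun l _ => boxIntegral_mul_pd hg (hpf l) hgp (hfp.pd l) l

lemma boxIntegral_mul_shear_advection (hf : ContDiff ℝ 1 f) (hfp : SpacePeriodic f)
    (hF : Continuous F) (hFp : SpacePeriodic F) (hFi : ConstAlong i F) :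
    boxIntegral (fun x => f x * (F x * pd f i x)) = 0 := by
  have hdiff := hf.differentiable one_ne_zero
  have hsquare : (fun x => F x * pd (fun y => f y * f y) i x)
      = fun x => 2 * (f x * (F x * pd f i x)) := by
    ext x
    rw [pd_mul hdiff hdiff]
    ring
  have hzero := boxIntegral_mul_pd_of_constAlong (hf.mul hf) (hfp.mul hfp) hF hFp hFi
  rw [hsquare, boxIntegral_const_mul] at hzero
  simpa using hzero

end DirichletEnergy

section TimeDerivatives

variable {d : ℕ}

lemma lipschitzOnWith_Icc_of_Icc_Icc {f : ℝ → ℝ} {a b c : ℝ} {K : NNReal}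
    (hab : LipschitzOnWith K f (Set.Icc a b)) (hbc : LipschitzOnWith K f (Set.Icc b c)) :
    LipschitzOnWith K f (Set.Icc a c) := by
  have hordered {s t : ℝ} (hs : s ∈ Set.Icc a c) (ht : t ∈ Set.Icc a c) (hst : s ≤ t) :
      dist (f s) (f t) ≤ K * dist s t := by
    rcases le_total t b with htb | hbt
    · exact hab.dist_le_mul s ⟨hs.1, hst.trans htb⟩ t ⟨ht.1, htb⟩
    rcases le_total b s with hbs | hsb
    · exact hbc.dist_le_mul s ⟨hbs, hs.2⟩ t ⟨hbt, ht.2⟩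
    have hsplit : dist s t = dist s b + dist b t := by
      rw [dist_comm s t, dist_comm s b, dist_comm b t, Real.dist_eq, Real.dist_eq, Real.dist_eq,
        abs_of_nonneg (sub_nonneg.2 hst), abs_of_nonneg (sub_nonneg.2 hsb),
        abs_of_nonneg (sub_nonneg.2 hbt)]
      ring
    rw [hsplit, mul_add]
    exact (dist_triangle _ (f b) _).trans (add_le_add
      (hab.dist_le_mul s ⟨hs.1, hsb⟩ b ⟨hs.1.trans hsb, le_rfl⟩)
      (hbc.dist_le_mul b ⟨le_rfl, hbt.trans ht.2⟩ t ⟨hbt, ht.2⟩))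
  refine LipschitzOnWith.of_dist_le_mul fun s hs t ht => ?_
  rcases le_total s t with hst | hts
  · exact hordered hs ht hst
  · rw [dist_comm, dist_comm s t]
    exact hordered ht hs hts

lemma continuousOn_boxIntegral {z : ℝ → (Fin d → ℝ) → ℝ} {s : Set ℝ} (hs : IsCompact s)
    (hz : ContinuousOn (fun p : ℝ × (Fin d → ℝ) => z p.1 p.2) (s ×ˢ Set.univ)) :
    ContinuousOn (fun t => boxIntegral (z t)) s := by
  obtain ⟨K, hK⟩ := (hs.prod (isCompact_box d)).exists_bound_of_continuousOn
    (hz.mono (Set.prod_mono le_rfl (Set.subset_univ _)))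
  have hslice (t : ℝ) (ht : t ∈ s) : Continuous (z t) :=
    hz.comp_continuous (f := fun x => (t, x)) (by fun_prop) fun x => ⟨ht, trivial⟩
  refine continuousOn_of_dominated (bound := fun _ => K)
    (fun t ht => (hslice t ht).aestronglyMeasurable)
    (fun t ht => (ae_restrict_iff' measurableSet_Icc).2 (.of_forall fun x hx => hK (t, x) ⟨ht, hx⟩))
    (integrableOn_box continuous_const) (.of_forall fun x => ?_)
  exact hz.comp (f := fun t => (t, x)) (by fun_prop) fun t ht => ⟨ht, trivial⟩

lemma hasDerivAt_l2sq {z : ℝ → (Fin d → ℝ) → ℝ} {z' : (Fin d → ℝ) → ℝ} {t : ℝ} {U : Set ℝ}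
    {K : NNReal} (hU : U ∈ 𝓝 t) (hc : ∀ᶠ s in 𝓝 t, Continuous (z s)) (hp : SpacePeriodic (z t))
    (hlip : ∀ x, LipschitzOnWith K (fun s => z s x) U)
    (hd : ∀ x, HasDerivAt (fun s => z s x) (z' x) t) (hz' : Continuous z') :
    HasDerivAt (fun s => l2sq (z s)) (boxIntegral fun x => 2 * (z t x * z' x)) t := by
  have hct := hc.self_of_nhds
  obtain ⟨M, hM, hzM⟩ := hp.exists_abs_le hct
  have hbound : ∀ s ∈ U ∩ Metric.ball t 1, ∀ x, |z s x| ≤ M + K := by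
    intro s hs x
    have hst : |z s x - z t x| ≤ K := by
      refine ((hlip x).dist_le_mul s hs.1 t (mem_of_mem_nhds hU)).trans ?_
      exact mul_le_of_le_one_right K.2 (Metric.mem_ball.1 hs.2).le
    linarith [abs_sub_abs_le_abs_sub (z s x) (z t x), hzM x]
  refine (hasDerivAt_integral_of_dominated_loc_of_lip (μ := volume.restrict (box d))
    (F := fun s x => z s x ^ 2) (F' := fun x => 2 * (z t x * z' x))
    (bound := fun _ => 2 * (M + K) * K) (Filter.inter_mem hU (Metric.ball_mem_nhds t one_pos))
    (hc.mono fun s hs => (hs.pow 2).aestronglyMeasurable) (integrableOn_box (hct.pow 2))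
    (by fun_prop) (.of_forall fun x => LipschitzOnWith.of_dist_le_mul fun s hs r hr => ?_)
    (integrableOn_box continuous_const) (.of_forall fun x => ?_)).2
  · have hsum : |z s x + z r x| ≤ 2 * (M + K) :=
      (abs_add_le _ _).trans (by linarith [hbound s hs x, hbound r hr x])
    have hconst : 0 ≤ 2 * (M + K) * K := by positivity
    rw [Real.dist_eq, sq_sub_sq, abs_mul, Real.coe_nnabs, abs_of_nonneg hconst, mul_assoc]
    exact mul_le_mul hsum ((hlip x).dist_le_mul s hs.1 r hr.1) (abs_nonneg _) (by positivity)
  · refine ((hd x).fun_pow 2).congr_deriv ?_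
    norm_num
    ring

end TimeDerivatives

namespace IsAdvDiffSol

variable {d : ℕ} {κ : ℝ} {θin : (Fin d → ℝ) → ℝ} {θ : ℝ → (Fin d → ℝ) → ℝ}

lemma isClassicalOn {u : ℝ → (Fin d → ℝ) → Fin d → ℝ} (sol : IsAdvDiffSol u κ θin θ) :
    IsClassicalOn 0 1 θ where
  periodic := sol.periodic
  cont := sol.cont
  spaceC2 := sol.spaceC2
  timeDiff := sol.timeDiff

lemma advDiffResidual_eq_zero {u : ℝ → (Fin d → ℝ) → Fin d → ℝ} (sol : IsAdvDiffSol u κ θin θ)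
    {t : ℝ} (ht : t ∈ Set.Ioc 0 1) (x : Fin d → ℝ) : advDiffResidual u κ θ t x = 0 :=
  sub_eq_zero.2 (sol.eqn t ht x)

lemma continuousOn_l2sq {u : ℝ → (Fin d → ℝ) → Fin d → ℝ} (sol : IsAdvDiffSol u κ θin θ) :
    ContinuousOn (fun t => l2sq (θ t)) (Set.Icc 0 1) :=
  continuousOn_boxIntegral (z := fun t x => θ t x ^ 2) isCompact_Icc (sol.cont.pow 2)

variable {S : ShearCascade d} (sol : IsAdvDiffSol S.velocity κ θin θ)
include sol

lemma exists_lipschitzOnWith_stage (hκ : 0 ≤ κ) {k : ℕ} {a : ℝ} (ha : 0 < a) (hka : S.T k ≤ a)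
    (hak : a ≤ S.T (k + 1)) :
    ∃ K, ∀ x, LipschitzOnWith K (fun t => θ t x) (Set.Icc a (S.T (k + 1))) := by
  obtain ⟨Λ, hΛ⟩ := S.lipschitz_η k
  have hb := (S.T_lt_one (k + 1)).le
  refine (sol.isClassicalOn.mono ha.le hb).exists_time_lipschitz_of_shear hκ
    (sol.spaceC2 a ⟨ha, hak.trans hb⟩) hΛ (S.contDiff_F k).continuous (S.periodic_F k)
    (S.constAlong_F k) fun t ht x => ?_
  rw [← sol.advDiffResidual_eq_zero ⟨ha.trans ht.1, ht.2.trans hb⟩ x, advDiffResidual,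
    advDiffResidual, S.velocity_eq_shearField ⟨hka.trans ht.1.le, ht.2⟩]

lemma exists_lipschitzOnWith_Icc_T (hκ : 0 ≤ κ) {a : ℝ} (ha : 0 < a) (ha1 : a ≤ S.T 1) :
    ∀ n, ∃ K, ∀ x, LipschitzOnWith K (fun t => θ t x) (Set.Icc a (S.T (n + 1)))
  | 0 => sol.exists_lipschitzOnWith_stage hκ ha (S.T_zero.trans_le ha.le) ha1
  | n + 1 => by
    obtain ⟨K, hK⟩ := exists_lipschitzOnWith_Icc_T hκ ha ha1 n
    obtain ⟨K', hK'⟩ := sol.exists_lipschitzOnWith_stage hκ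
      (ha.trans_le (ha1.trans (S.strictMono_T.monotone n.succ_pos))) le_rfl (S.T_le_T_succ (n + 1))
    exact ⟨max K K', fun x => lipschitzOnWith_Icc_of_Icc_Icc ((hK x).weaken (le_max_left _ _))
      ((hK' x).weaken (le_max_right _ _))⟩

lemma exists_nhds_lipschitzOnWith (hκ : 0 ≤ κ) {t : ℝ} (ht : t ∈ Set.Ioo 0 1) :
    ∃ K, ∃ U ∈ 𝓝 t, ∀ x, LipschitzOnWith K (fun s => θ s x) U := by
  obtain ⟨n, htn⟩ := (S.tendsto_T.eventually (lt_mem_nhds ht.2)).exists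
  have hT1 : 0 < S.T 1 := S.T_zero.symm.trans_lt (S.strictMono_T one_pos)
  obtain ⟨K, hK⟩ := sol.exists_lipschitzOnWith_Icc_T hκ (lt_min (half_pos ht.1) hT1)
    (min_le_right _ _) n
  exact ⟨K, _, Icc_mem_nhds ((min_le_left _ _).trans_lt (half_lt_self ht.1))
    (htn.trans_le (S.T_le_T_succ n)), hK⟩

lemma hasDerivAt_time {k : ℕ} {t : ℝ} (h0 : 0 < t) (ht : t ∈ Set.Icc (S.T k) (S.T (k + 1)))
    (x : Fin d → ℝ) :
    HasDerivAt (fun s => θ s x)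
      (κ * torusLaplacian (θ t) x - S.η k t * S.F k x * pd (θ t) (S.dir k) x) t := by
  have heqn := sol.advDiffResidual_eq_zero ⟨h0, ht.2.trans (S.T_lt_one (k + 1)).le⟩ x
  rw [advDiffResidual, S.velocity_eq_shearField ht, advection_shearField] at heqn
  refine (sol.timeDiff t ⟨h0, ht.2.trans (S.T_lt_one (k + 1)).le⟩ x).hasDerivAt.congr_deriv ?_
  linarith

/-- The shear terms of `θ` and of the transported function combine to `F_k ∂(θ - w)²`, which
integrates to zero. -/
lemma hasDerivAt_l2sq_sub_transportUpTo (hκ : 0 ≤ κ) {w : (Fin d → ℝ) → ℝ}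
    (hw : ContDiff ℝ 1 w) (hwp : SpacePeriodic w) {k : ℕ} {t : ℝ} (h0 : 0 < t)
    (ht : t ∈ Set.Icc (S.T k) (S.T (k + 1))) :
    HasDerivAt (fun s => l2sq fun x => θ s x - S.transportUpTo w k s x)
      (-(2 * κ * boxIntegral fun x =>
        ∑ l, pd (θ t) l x * (pd (θ t) l x - pd (S.transportUpTo w k t) l x))) t := by
  have ht1 : t ∈ Set.Ioo 0 1 := ⟨h0, ht.2.trans_lt (S.T_lt_one (k + 1))⟩
  obtain ⟨K, U, hU, hθlip⟩ := sol.exists_nhds_lipschitzOnWith hκ ht1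
  obtain ⟨Λ, hwlip⟩ := S.exists_lipschitzWith_transportUpTo hw hwp k
  have hθ2 := sol.spaceC2 t ⟨ht1.1, ht1.2.le⟩
  have hθ1 : ContDiff ℝ 1 (θ t) := hθ2.of_le one_le_two
  have hw1 := S.contDiff_transportUpTo hw k t
  have hz1 := hθ1.sub hw1
  have hzp := (sol.periodic t).sub (S.periodic_transportUpTo hwp k t)
  have hpdz (l : Fin d) :=
    pd_sub (hθ1.differentiable one_ne_zero) (hw1.differentiable one_ne_zero) l
  have hF := (S.contDiff_F k).continuous
  have hpdz_cont := continuous_pd hz1 (S.dir k)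
  have hlap : Continuous (torusLaplacian (θ t)) :=
    continuous_finsetSum _ fun l _ => continuous_pd (contDiff_pd hθ2 l) l
  have hcont : ∀ᶠ s in 𝓝 t, Continuous fun x => θ s x - S.transportUpTo w k s x := by
    filter_upwards [Ioo_mem_nhds ht1.1 ht1.2] with s hs
    exact (sol.spaceC2 s ⟨hs.1, hs.2.le⟩).continuous.sub
      (S.contDiff_transportUpTo hw k s).continuous
  have hderiv (x : Fin d → ℝ) : HasDerivAt (fun s => θ s x - S.transportUpTo w k s x)
      (κ * torusLaplacian (θ t) x - S.η k t * (S.F k x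
        * pd (fun y => θ t y - S.transportUpTo w k t y) (S.dir k) x)) t := by
    refine ((sol.hasDerivAt_time h0 ht x).sub (S.hasDerivAt_transportUpTo hw k t x)).congr_deriv ?_
    rw [hpdz]
    ring
  refine (hasDerivAt_l2sq hU hcont hzp (fun x => (hθlip x).sub (hwlip x).lipschitzOnWith) hderiv
    (by fun_prop)).congr_deriv ?_
  have hexpand (z L A : (Fin d → ℝ) → ℝ) (c : ℝ) : (fun x => 2 * (z x * (κ * L x - c * A x)))
      = fun x => 2 * κ * (z x * L x) - 2 * c * (z x * A x) := by
    ext x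
    ring
  rw [hexpand, boxIntegral_sub (by fun_prop) (by fun_prop), boxIntegral_const_mul,
    boxIntegral_const_mul, boxIntegral_mul_torusLaplacian hz1 hzp hθ2 (sol.periodic t),
    boxIntegral_mul_shear_advection hz1 hzp hF (S.periodic_F k) (S.constAlong_F k)]
  simp only [hpdz, mul_zero, sub_zero, mul_neg]

lemma hasDerivAt_l2sq (hκ : 0 ≤ κ) {t : ℝ} (ht : t ∈ Set.Ioo 0 1) :
    HasDerivAt (fun s => l2sq (θ s)) (-(2 * κ * dirichletEnergy (θ t))) t := by
  obtain ⟨k, hk⟩ := S.exists_mem_stage ht.1.le ht.2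
  have hpd (l : Fin d) (x : Fin d → ℝ) : pd (fun _ : Fin d → ℝ => (0 : ℝ)) l x = 0 := by
    simp [pd]
  have hderiv := sol.hasDerivAt_l2sq_sub_transportUpTo hκ contDiff_const (SpacePeriodic.const 0)
    ht.1 ⟨hk.1, hk.2.le⟩
  simp only [S.transportUpTo_const, sub_zero, hpd, ← sq] at hderiv
  exact hderiv

lemma antitoneOn_l2sq (hκ : 0 ≤ κ) : AntitoneOn (fun t => l2sq (θ t)) (Set.Icc 0 1) := by
  refine antitoneOn_of_deriv_nonpos (convex_Icc _ _) sol.continuousOn_l2sq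
    (fun t ht => ?_) fun t ht => ?_
  · rw [interior_Icc] at ht
    exact (sol.hasDerivAt_l2sq hκ ht).differentiableAt.differentiableWithinAt
  · rw [interior_Icc] at ht
    rw [(sol.hasDerivAt_l2sq hκ ht).deriv, neg_nonpos]
    have := dirichletEnergy_nonneg (θ t)
    positivity

lemma intervalIntegrable_dirichletEnergy (hκ : 0 < κ) :
    IntervalIntegrable (fun t => dirichletEnergy (θ t)) volume 0 1 := by
  have hderiv : ∀ t ∈ Set.Ioo (0 : ℝ) 1, HasDerivAt (fun s => -l2sq (θ s))
      (2 * κ * dirichletEnergy (θ t)) t := fun t ht =>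
    (sol.hasDerivAt_l2sq hκ.le ht).fun_neg.congr_deriv (neg_neg _)
  have hint := intervalIntegral.integrableOn_deriv_of_nonneg sol.continuousOn_l2sq.neg hderiv
    fun t _ => mul_nonneg (by positivity) (dirichletEnergy_nonneg _)
  have hint' := ((intervalIntegrable_iff_integrableOn_Ioc_of_le zero_le_one).2 hint).const_mul
    (2 * κ)⁻¹
  simpa only [inv_mul_cancel_left₀ (show 2 * κ ≠ 0 by positivity)] using hint'

theorem l2sq_sub_l2sq_eq_dissip (hκ : 0 < κ) :
    l2sq (θ 0) - l2sq (θ 1) = 2 * (κ * dissip θ) := by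
  have hftc := intervalIntegral.integral_eq_sub_of_hasDerivAt_of_le zero_le_one
    sol.continuousOn_l2sq (fun t ht => sol.hasDerivAt_l2sq hκ.le ht)
    ((sol.intervalIntegrable_dirichletEnergy hκ).const_mul (2 * κ)).neg
  rw [intervalIntegral.integral_neg, intervalIntegral.integral_const_mul,
    ← dissip_eq_intervalIntegral] at hftc
  linarith

lemma exists_nonpos_hasDerivAt_stage (hκ : 0 < κ) {w : (Fin d → ℝ) → ℝ} (hw : ContDiff ℝ 1 w)
    (hwp : SpacePeriodic w) {k : ℕ} {lam B : ℝ} (hlam : 0 < lam) {t : ℝ}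
    (ht : t ∈ Set.Ioo (S.T k) (S.T (k + 1))) (hB : dirichletEnergy (S.transportUpTo w k t) ≤ B) :
    ∃ D ≤ 0, HasDerivAt (fun s => l2sq (fun x => θ s x - S.transportUpTo w k s x)
      + lam / 2 * l2sq (θ s) - κ / lam * B * s) D t := by
  have h0 : 0 < t := (S.T_nonneg k).trans_lt ht.1
  have h1 : t < 1 := ht.2.trans (S.T_lt_one (k + 1))
  refine ⟨_, ?_, ((sol.hasDerivAt_l2sq_sub_transportUpTo hκ.le hw hwp h0 ⟨ht.1.le, ht.2.le⟩).add
    ((sol.hasDerivAt_l2sq hκ.le ⟨h0, h1⟩).const_mul (lam / 2))).sub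
      ((hasDerivAt_id t).const_mul (κ / lam * B))⟩
  have hyoung := dirichletEnergy_sub_le ((sol.spaceC2 t ⟨h0, h1.le⟩).of_le one_le_two)
    (S.contDiff_transportUpTo hw k t) hlam
  set Eθ := dirichletEnergy (θ t)
  set Ew := dirichletEnergy (S.transportUpTo w k t)
  set J := boxIntegral fun x =>
    ∑ l, pd (θ t) l x * (pd (θ t) l x - pd (S.transportUpTo w k t) l x)
  calc -(2 * κ * J) + lam / 2 * -(2 * κ * Eθ) - κ / lam * B * 1
      ≤ -(2 * κ * ((1 - lam / 2) * Eθ - 1 / (2 * lam) * Ew)) + lam / 2 * -(2 * κ * Eθ)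
          - κ / lam * Ew * 1 := by gcongr
    _ = -(2 * (κ * Eθ)) := by field_simp; ring
    _ ≤ 0 := neg_nonpos.2 (mul_nonneg two_pos.le (mul_nonneg hκ.le (dirichletEnergy_nonneg _)))

lemma l2sq_sub_transportUpTo_le (hκ : 0 < κ) {w : (Fin d → ℝ) → ℝ} (hw : ContDiff ℝ 1 w)
    (hwp : SpacePeriodic w) {k : ℕ} {lam B : ℝ} (hlam : 0 < lam)
    (hB : ∀ t ∈ Set.Icc (S.T k) (S.T (k + 1)), dirichletEnergy (S.transportUpTo w k t) ≤ B)
    {s : ℝ} (hs : s ∈ Set.Icc (S.T k) (S.T (k + 1))) :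
    l2sq (fun x => θ s x - S.transportUpTo w k s x) + lam / 2 * l2sq (θ s)
      ≤ l2sq (fun x => θ (S.T k) x - S.transport w k x) + lam / 2 * l2sq (θ (S.T k))
        + κ / lam * (B * (s - S.T k)) := by
  have hsub := S.stage_subset_unitInterval k
  have hcont : ContinuousOn (fun s => l2sq fun x => θ s x - S.transportUpTo w k s x)
      (Set.Icc (S.T k) (S.T (k + 1))) :=
    continuousOn_boxIntegral (z := fun s x => (θ s x - S.transportUpTo w k s x) ^ 2) isCompact_Icc
      (((sol.cont.mono (Set.prod_mono hsub le_rfl)).sub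
        (S.continuous_uncurry_transportUpTo hw.continuous k).continuousOn).pow 2)
  have hderiv := fun t (ht : t ∈ Set.Ioo (S.T k) (S.T (k + 1))) =>
    sol.exists_nonpos_hasDerivAt_stage hκ hw hwp hlam ht (hB t ⟨ht.1.le, ht.2.le⟩)
  have hanti : AntitoneOn (fun s => l2sq (fun x => θ s x - S.transportUpTo w k s x)
      + lam / 2 * l2sq (θ s) - κ / lam * B * s) (Set.Icc (S.T k) (S.T (k + 1))) :=
    antitoneOn_of_deriv_nonpos (convex_Icc _ _)
      ((hcont.add (continuousOn_const.mul (sol.continuousOn_l2sq.mono hsub))).sub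
        (continuousOn_const.mul continuousOn_id))
      (fun t ht => by
        obtain ⟨D, -, hD⟩ := hderiv t (interior_Icc.subset ht)
        exact hD.differentiableAt.differentiableWithinAt)
      (fun t ht => by
        obtain ⟨D, hD0, hD⟩ := hderiv t (interior_Icc.subset ht)
        exact hD.deriv.trans_le hD0)
  have hle := hanti ⟨le_rfl, S.T_le_T_succ k⟩ hs hs.1
  simp only [S.transportUpTo_T] at hle
  linarith

lemma l2sq_sub_transport_le (hκ : 0 < κ) {w : (Fin d → ℝ) → ℝ} (hw : ContDiff ℝ 1 w)
    (hwp : SpacePeriodic w) {lam : ℝ} {B : ℕ → ℝ} (hlam : 0 < lam)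
    (hB : ∀ k, ∀ t ∈ Set.Icc (S.T k) (S.T (k + 1)),
      dirichletEnergy (S.transportUpTo w k t) ≤ B k) (k : ℕ) :
    l2sq (fun x => θ (S.T k) x - S.transport w k x) + lam / 2 * l2sq (θ (S.T k))
      ≤ l2sq (fun x => θin x - w x) + lam / 2 * l2sq (θ 0)
        + κ / lam * ∑ m ∈ Finset.range k, B m * (S.T (m + 1) - S.T m) := by
  induction k with
  | zero => simp [S.T_zero, ShearCascade.transport, sol.init]
  | succ k ih =>
    have hstage := sol.l2sq_sub_transportUpTo_le hκ hw hwp hlam (hB k)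
      ⟨S.T_le_T_succ k, le_rfl⟩
    rw [Finset.sum_range_succ]
    change l2sq (fun x => θ _ x - S.transportUpTo w k (S.T (k + 1)) x) + _ ≤ _
    linarith

theorem l2norm_sub_transportUpTo_sq_le (hκ : 0 < κ) {w : (Fin d → ℝ) → ℝ} (hw : ContDiff ℝ 1 w)
    (hwp : SpacePeriodic w) {lam : ℝ} {B : ℕ → ℝ} (hlam : 0 < lam) (hB0 : ∀ k, 0 ≤ B k)
    (hB : ∀ k, ∀ t ∈ Set.Icc (S.T k) (S.T (k + 1)),
      dirichletEnergy (S.transportUpTo w k t) ≤ B k)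
    {k : ℕ} {s : ℝ} (hs : s ∈ Set.Icc (S.T k) (S.T (k + 1))) :
    l2norm (fun x => θ s x - S.transportUpTo w k s x) ^ 2
      ≤ l2norm (fun x => θin x - w x) ^ 2 + lam * (κ * dissip θ)
        + κ / lam * ∑ m ∈ Finset.range (k + 1), B m * (S.T (m + 1) - S.T m) := by
  have hstages := sol.l2sq_sub_transport_le hκ hw hwp hlam hB k
  have hstage := sol.l2sq_sub_transportUpTo_le hκ hw hwp hlam (hB k) hs
  have hlast : κ / lam * (B k * (s - S.T k)) ≤ κ / lam * (B k * (S.T (k + 1) - S.T k)) := by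
    gcongr
    exacts [hB0 k, hs.2]
  have hdissip : lam / 2 * l2sq (θ 0) - lam / 2 * l2sq (θ s) ≤ lam * (κ * dissip θ) := by
    have hs1 := S.stage_subset_unitInterval k hs
    have hmono : l2sq (θ 1) ≤ l2sq (θ s) :=
      sol.antitoneOn_l2sq hκ.le hs1 ⟨zero_le_one, le_rfl⟩ hs1.2
    calc lam / 2 * l2sq (θ 0) - lam / 2 * l2sq (θ s)
        ≤ lam / 2 * l2sq (θ 0) - lam / 2 * l2sq (θ 1) := by gcongr
      _ = lam * (κ * dissip θ) := by rw [← mul_sub, sol.l2sq_sub_l2sq_eq_dissip hκ]; ring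
  rw [l2norm_sq, l2norm_sq, Finset.sum_range_succ, mul_add]
  linarith

end IsAdvDiffSol

/-! ### Shear and pulse profiles -/

section ShearProfile

variable {w v : ℝ}

/-- A smooth approximation, as `w → 0`, of the triangle wave of period `1` and slope `±1`. -/
def shearProfile (w s : ℝ) : ℝ := -(1 / (2 * π)) * arcsin (cos w * cos (2 * π * s))

/-- The derivative of `shearProfile w`, a smooth approximation of the square wave. -/
def shearSlope (w s : ℝ) : ℝ :=
  cos w * sin (2 * π * s) / √(1 - (cos w * cos (2 * π * s)) ^ 2)

lemma periodic_shearProfile (w : ℝ) : Function.Periodic (shearProfile w) 1 := fun s => by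
  rw [shearProfile, shearProfile, mul_add, mul_one, cos_add_two_pi]

lemma periodic_shearSlope (w : ℝ) : Function.Periodic (shearSlope w) 1 := fun s => by
  rw [shearSlope, shearSlope, mul_add, mul_one, cos_add_two_pi, sin_add_two_pi]

lemma abs_shearProfile_le (w s : ℝ) : |shearProfile w s| ≤ 1 / 4 := by
  have harcsin : |arcsin (cos w * cos (2 * π * s))| ≤ π / 2 :=
    abs_le.2 ⟨neg_pi_div_two_le_arcsin _, arcsin_le_pi_div_two _⟩
  rw [shearProfile, abs_mul, abs_neg, abs_of_pos (by positivity : 0 < 1 / (2 * π))]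
  calc 1 / (2 * π) * |arcsin (cos w * cos (2 * π * s))| ≤ 1 / (2 * π) * (π / 2) := by gcongr
    _ = 1 / 4 := by field_simp; norm_num

lemma sin_sq_le_one_sub_sq (w s : ℝ) : sin w ^ 2 ≤ 1 - (cos w * cos (2 * π * s)) ^ 2 := by
  have hcos : cos w ^ 2 * cos (2 * π * s) ^ 2 ≤ cos w ^ 2 * 1 := by
    gcongr
    exact cos_sq_le_one _
  linarith [sin_sq_add_cos_sq w, mul_pow (cos w) (cos (2 * π * s)) 2]

lemma abs_shearSlope_le_one (w s : ℝ) : |shearSlope w s| ≤ 1 := by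
  rw [shearSlope, abs_div, abs_of_nonneg (sqrt_nonneg _)]
  refine div_le_one_of_le₀ (le_sqrt_of_sq_le ?_) (sqrt_nonneg _)
  rw [sq_abs]
  nlinarith [sin_sq_add_cos_sq (2 * π * s), cos_sq_le_one w]

lemma shearSlope_mul_nonneg (hw : 0 ≤ cos w) (hv : 0 ≤ cos v) (s : ℝ) :
    0 ≤ shearSlope w s * shearSlope v s := by
  rw [shearSlope, shearSlope, div_mul_div_comm, mul_mul_mul_comm]
  exact div_nonneg (mul_nonneg (mul_nonneg hw hv) (mul_self_nonneg _)) (by positivity)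

lemma one_sub_shearSlope_mul_sq_le (hw : 0 ≤ cos w) (hv : 0 ≤ cos v) (s : ℝ) :
    (1 - shearSlope w s * shearSlope v s) ^ 2
      ≤ (1 - |shearSlope w s|) + (1 - |shearSlope v s|) := by
  have hwle := abs_shearSlope_le_one w s
  have hvle := abs_shearSlope_le_one v s
  rw [← abs_of_nonneg (shearSlope_mul_nonneg hw hv s), abs_mul]
  have hprod := mul_le_one₀ hwle (abs_nonneg _) hvle
  have hprod0 := mul_nonneg (abs_nonneg (shearSlope w s)) (abs_nonneg (shearSlope v s))
  nlinarith [mul_nonneg (sub_nonneg.2 hwle) (sub_nonneg.2 hvle)]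

variable (hw : w ∈ Set.Ioo 0 (π / 2))
include hw

lemma one_sub_sq_pos (s : ℝ) : 0 < 1 - (cos w * cos (2 * π * s)) ^ 2 :=
  (sin_sq_le_one_sub_sq w s).trans_lt' (pow_pos (sin_pos_of_pos_of_lt_pi hw.1
    (by linarith [hw.2, pi_pos])) 2)

lemma hasDerivAt_shearProfile (s : ℝ) : HasDerivAt (shearProfile w) (shearSlope w s) s := by
  have hlin : HasDerivAt (fun s : ℝ => 2 * π * s) (2 * π) s := by
    simpa using (hasDerivAt_id s).const_mul (2 * π)
  have hne := one_sub_sq_pos hw s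
  have harcsin := hasDerivAt_arcsin (x := cos w * cos (2 * π * s))
    (fun h => by rw [h] at hne; norm_num at hne) (fun h => by rw [h] at hne; norm_num at hne)
  refine ((harcsin.comp s (hlin.cos.const_mul _)).const_mul (-(1 / (2 * π)))).congr_deriv ?_
  have := pi_ne_zero
  rw [shearSlope]
  field_simp

lemma contDiff_shearSlope : ContDiff ℝ 1 (shearSlope w) :=
  ContDiff.div (by fun_prop)
    (ContDiff.sqrt (by fun_prop) fun s => (one_sub_sq_pos hw s).ne')
    fun s => (sqrt_pos.2 (one_sub_sq_pos hw s)).ne'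

lemma contDiff_shearProfile : ContDiff ℝ 1 (shearProfile w) := by
  have hderiv : deriv (shearProfile w) = shearSlope w :=
    funext fun s => (hasDerivAt_shearProfile hw s).deriv
  exact contDiff_one_iff_deriv.2 ⟨fun s => (hasDerivAt_shearProfile hw s).differentiableAt,
    hderiv ▸ (contDiff_shearSlope hw).continuous⟩

lemma abs_shearProfile_sub_le (s t : ℝ) : |shearProfile w s - shearProfile w t| ≤ |s - t| := by
  simpa using convex_univ.norm_image_sub_le_of_norm_hasDerivWithin_le
    (fun x _ => (hasDerivAt_shearProfile hw x).hasDerivWithinAt)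
    (fun x _ => abs_shearSlope_le_one w x) (Set.mem_univ t) (Set.mem_univ s)

lemma hasDerivAt_shearSlope (s : ℝ) :
    HasDerivAt (shearSlope w) (2 * π * (cos w * cos (2 * π * s) * sin w ^ 2)
      / √(1 - (cos w * cos (2 * π * s)) ^ 2) ^ 3) s := by
  have hlin : HasDerivAt (fun s : ℝ => 2 * π * s) (2 * π) s := by
    simpa using (hasDerivAt_id s).const_mul (2 * π)
  have hpos := one_sub_sq_pos hw s
  have hroot := (((hlin.cos.const_mul (cos w)).fun_pow 2).const_sub 1).sqrt hpos.ne'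
  have hsqrt := sqrt_pos.2 hpos
  have hsq := sq_sqrt hpos.le
  refine ((hlin.sin.const_mul (cos w)).fun_div hroot hsqrt.ne').congr_deriv ?_
  generalize √(1 - (cos w * cos (2 * π * s)) ^ 2) = D at *
  have hsin := sin_sq (2 * π * s)
  generalize cos (2 * π * s) = C at *
  generalize sin (2 * π * s) = Z at *
  rw [sin_sq w]
  field_simp
  norm_num
  rw [hsq, hsin]
  ring

lemma abs_deriv_shearSlope_le (s : ℝ) : |deriv (shearSlope w) s| ≤ π ^ 2 / w := by
  have hw0 := hw.1
  have hsqrt := sqrt_pos.2 (one_sub_sq_pos hw s)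
  have hsin : 2 / π * w ≤ √(1 - (cos w * cos (2 * π * s)) ^ 2) :=
    (mul_le_sin hw0.le hw.2.le).trans (le_sqrt_of_sq_le (sin_sq_le_one_sub_sq w s))
  have hsin' : sin w ^ 2 ≤ √(1 - (cos w * cos (2 * π * s)) ^ 2) ^ 2 := by
    rw [sq_sqrt (one_sub_sq_pos hw s).le]
    exact sin_sq_le_one_sub_sq w s
  have hcos : |cos w * cos (2 * π * s)| ≤ 1 := by
    rw [abs_mul]
    exact mul_le_one₀ (abs_cos_le_one _) (abs_nonneg _) (abs_cos_le_one _)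
  rw [(hasDerivAt_shearSlope hw s).deriv, abs_div, abs_mul (2 * π), abs_mul (cos w * _),
    abs_of_nonneg (sq_nonneg (sin w)), abs_of_pos two_pi_pos, abs_of_pos (pow_pos hsqrt 3)]
  generalize √(1 - (cos w * cos (2 * π * s)) ^ 2) = D at *
  calc 2 * π * (|cos w * cos (2 * π * s)| * sin w ^ 2) / D ^ 3
      ≤ 2 * π * (1 * D ^ 2) / D ^ 3 := by gcongr
    _ = 2 * π / D := by field_simp
    _ ≤ 2 * π / (2 / π * w) := by gcongr
    _ = π ^ 2 / w := by field_simp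

lemma cos_nonneg_of_mem_Ioo : 0 ≤ cos w :=
  cos_nonneg_of_mem_Icc ⟨by linarith [hw.1, pi_pos], hw.2.le⟩

lemma integral_abs_shearSlope_left :
    ∫ s in (0 : ℝ)..1 / 2, |shearSlope w s| = shearProfile w (1 / 2) - shearProfile w 0 := by
  rw [← intervalIntegral.integral_eq_sub_of_hasDerivAt
    (fun s _ => hasDerivAt_shearProfile hw s)
    ((contDiff_shearSlope hw).continuous.intervalIntegrable _ _)]
  refine intervalIntegral.integral_congr fun s hs => abs_of_nonneg ?_
  rw [Set.uIcc_of_le (by norm_num)] at hs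
  have hsin : 0 ≤ sin (2 * π * s) := sin_nonneg_of_nonneg_of_le_pi
    (mul_nonneg two_pi_pos.le hs.1) (by nlinarith [hs.2, pi_pos])
  exact div_nonneg (mul_nonneg (cos_nonneg_of_mem_Ioo hw) hsin) (sqrt_nonneg _)

lemma integral_abs_shearSlope_right :
    ∫ s in (1 / 2 : ℝ)..1, |shearSlope w s| = shearProfile w (1 / 2) - shearProfile w 1 := by
  rw [← neg_sub, ← intervalIntegral.integral_eq_sub_of_hasDerivAt
    (fun s _ => hasDerivAt_shearProfile hw s)
    ((contDiff_shearSlope hw).continuous.intervalIntegrable _ _), ← intervalIntegral.integral_neg]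
  refine intervalIntegral.integral_congr fun s hs => abs_of_nonpos ?_
  rw [Set.uIcc_of_le (by norm_num)] at hs
  have hsin : sin (2 * π * s) ≤ 0 := by
    rw [← sin_sub_two_pi]
    exact sin_nonpos_of_nonpos_of_neg_pi_le (by nlinarith [hs.2, pi_pos])
      (by nlinarith [hs.1, pi_pos])
  exact div_nonpos_of_nonpos_of_nonneg
    (mul_nonpos_of_nonneg_of_nonpos (cos_nonneg_of_mem_Ioo hw) hsin) (sqrt_nonneg _)

lemma integral_one_sub_abs_shearSlope :
    ∫ s in (0 : ℝ)..1, (1 - |shearSlope w s|) = 2 * w / π := by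
  have hint : ∀ a b, IntervalIntegrable (fun s => |shearSlope w s|) volume a b :=
    (contDiff_shearSlope hw).continuous.abs.intervalIntegrable
  have harcsin : arcsin (cos w) = π / 2 - w := by
    rw [← sin_pi_div_two_sub]
    exact arcsin_sin (by linarith [hw.2, pi_pos]) (by linarith [hw.1])
  have h0 : shearProfile w 0 = -(1 / (2 * π)) * (π / 2 - w) := by simp [shearProfile, harcsin]
  have h1 : shearProfile w 1 = -(1 / (2 * π)) * (π / 2 - w) := by simp [shearProfile, harcsin]
  have h2 : shearProfile w (1 / 2) = 1 / (2 * π) * (π / 2 - w) := by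
    rw [shearProfile, show 2 * π * (1 / 2) = π by ring, cos_pi, mul_neg_one, arcsin_neg, harcsin]
    ring
  rw [intervalIntegral.integral_sub (by simp) (hint _ _),
    ← intervalIntegral.integral_add_adjacent_intervals (hint 0 (1 / 2)) (hint (1 / 2) 1),
    integral_abs_shearSlope_left hw, integral_abs_shearSlope_right hw, h0, h1, h2,
    intervalIntegral.integral_const, smul_eq_mul]
  field_simp
  ring

end ShearProfile

section PulseProfile

variable {s : ℝ}

/-- A tent function of unit mass supported in `[0, 1/2]`. -/
def pulse (s : ℝ) : ℝ := max (4 - |16 * s - 4|) 0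

lemma pulse_nonneg (s : ℝ) : 0 ≤ pulse s := le_max_right _ _

lemma abs_pulse_le (s : ℝ) : |pulse s| ≤ 4 := by
  rw [abs_of_nonneg (pulse_nonneg s)]
  exact max_le (sub_le_self _ (abs_nonneg _)) (by norm_num)

lemma abs_pulse_sub_le (s t : ℝ) : |pulse s - pulse t| ≤ 16 * |s - t| :=
  calc |pulse s - pulse t| ≤ |4 - |16 * s - 4| - (4 - |16 * t - 4|)| :=
        abs_max_sub_max_le_abs _ _ _
    _ = |(|16 * t - 4| - |16 * s - 4|)| := by rw [sub_sub_sub_cancel_left]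
    _ ≤ |16 * t - 4 - (16 * s - 4)| := abs_abs_sub_abs_le_abs_sub _ _
    _ = 16 * |s - t| := by rw [abs_sub_comm s, ← abs_of_pos (by norm_num : (0 : ℝ) < 16),
        ← abs_mul, abs_of_pos (by norm_num : (0 : ℝ) < 16)]; ring_nf

lemma continuous_pulse : Continuous pulse := by unfold pulse; fun_prop

lemma pulse_of_nonpos (hs : s ≤ 0) : pulse s = 0 :=
  max_eq_right (by rw [abs_of_nonpos] <;> linarith)

lemma pulse_of_half_le (hs : 1 / 2 ≤ s) : pulse s = 0 :=
  max_eq_right (by rw [abs_of_nonneg] <;> linarith)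

lemma integral_pulse_zero_half : ∫ r in (0 : ℝ)..1 / 2, pulse r = 1 := by
  have hint := continuous_pulse.intervalIntegrable (μ := volume)
  have hleft : ∫ r in (0 : ℝ)..1 / 4, pulse r = ∫ r in (0 : ℝ)..1 / 4, 16 * r := by
    refine intervalIntegral.integral_congr fun r hr => ?_
    rw [Set.uIcc_of_le (by norm_num)] at hr
    rw [pulse, abs_of_nonpos (by linarith [hr.2]), max_eq_left] <;> linarith [hr.1, hr.2]
  have hright : ∫ r in (1 / 4 : ℝ)..1 / 2, pulse r = ∫ r in (1 / 4 : ℝ)..1 / 2, (8 - 16 * r) := by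
    refine intervalIntegral.integral_congr fun r hr => ?_
    rw [Set.uIcc_of_le (by norm_num)] at hr
    rw [pulse, abs_of_nonneg (by linarith [hr.1]), max_eq_left] <;> linarith [hr.1, hr.2]
  rw [← intervalIntegral.integral_add_adjacent_intervals (hint 0 (1 / 4)) (hint (1 / 4) (1 / 2)),
    hleft, hright, intervalIntegral.integral_const_mul,
    intervalIntegral.integral_sub (by simp) (Continuous.intervalIntegrable (by fun_prop) _ _),
    intervalIntegral.integral_const_mul, integral_id, integral_id]
  norm_num

lemma integral_pulse_of_half_le (hs : 1 / 2 ≤ s) : ∫ r in (0 : ℝ)..s, pulse r = 1 := by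
  have hint := continuous_pulse.intervalIntegrable (μ := volume)
  have hzero : ∫ r in (1 / 2 : ℝ)..s, pulse r = 0 := by
    refine intervalIntegral.integral_zero_ae (ae_of_all _ fun r hr => pulse_of_half_le ?_)
    rw [Set.uIoc_of_le hs] at hr
    exact hr.1.le
  rw [← intervalIntegral.integral_add_adjacent_intervals (hint 0 (1 / 2)) (hint (1 / 2) s),
    integral_pulse_zero_half, hzero, add_zero]

lemma integral_pulse_mem_Icc (hs : 0 ≤ s) : ∫ r in (0 : ℝ)..s, pulse r ∈ Set.Icc (0 : ℝ) 1 := by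
  refine ⟨intervalIntegral.integral_nonneg hs fun r _ => pulse_nonneg r, ?_⟩
  rw [← integral_pulse_of_half_le (le_max_right s (1 / 2))]
  exact intervalIntegral.integral_mono_interval le_rfl hs (le_max_left _ _)
    (ae_of_all _ pulse_nonneg) (continuous_pulse.intervalIntegrable _ _)

end PulseProfile

/-! ### The self-similar cascade -/

section Velocity

variable {d : ℕ} {α : ℝ}

lemma abs_le_rpow_of_abs_le {a z : ℝ} (hα0 : 0 ≤ α) (hα1 : α ≤ 1) (hz : 0 ≤ z)
    (h1 : |a| ≤ 1) (hza : |a| ≤ z) : |a| ≤ z ^ α := by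
  rcases le_total z 1 with h | h
  · exact hza.trans (self_le_rpow_of_le_one hz h hα1)
  · exact h1.trans (one_le_rpow h hα0)

lemma norm_shearField_le {η : ℝ → ℝ} {F : (Fin d → ℝ) → ℝ} {i : Fin d} {t : ℝ} {x : Fin d → ℝ}
    {e : ℝ} (hη : |η t| ≤ e) (hF : |F x| ≤ 1) : ‖shearField η F i t x‖ ≤ e := by
  rw [shearField, norm_smul, Pi.norm_single, norm_one, mul_one, norm_mul]
  exact (mul_le_of_le_one_right (abs_nonneg _) hF).trans hη

lemma norm_shearField_sub (η : ℝ → ℝ) (F : (Fin d → ℝ) → ℝ) (i : Fin d) (s t : ℝ)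
    (x y : Fin d → ℝ) :
    ‖shearField η F i t x - shearField η F i s y‖ = |η t * F x - η s * F y| := by
  rw [shearField, shearField, ← sub_smul, norm_smul, Pi.norm_single, norm_one, mul_one,
    Real.norm_eq_abs]

namespace ShearCascade

variable (S : ShearCascade d)

lemma periodic_velocity (t : ℝ) (i : Fin d) : SpacePeriodic fun x => S.velocity t x i :=
  fun x k => by simp only [velocity, shearField, S.periodic_F _ x k]

lemma weakDivFree_velocity : WeakDivFree S.velocity := fun t _ φ hφ hφp => by
  by_cases hstage : ∃ k, t ∈ Set.Ioo (S.T k) (S.T (k + 1))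
  · obtain ⟨k, hk⟩ := hstage
    have hadv : ∀ x, ∑ i, S.velocity t x i * pd φ i x
        = S.η k t * S.F k x * pd φ (S.dir k) x := fun x => by
      rw [S.velocity_eq_shearField (Set.Ioo_subset_Icc_self hk)]
      exact advection_shearField _ _ _ _ _ _
    simp_rw [hadv]
    exact boxIntegral_mul_pd_of_constAlong (hφ.of_le (by simp)) hφp
      ((S.contDiff_F k).continuous.const_mul _) ((SpacePeriodic.const _).mul (S.periodic_F k))
      fun x r => by rw [S.constAlong_F]
  · simp [S.velocity_eq_zero fun k hk => hstage ⟨k, hk⟩]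

variable {E L M : ℕ → ℝ}

lemma summable_shearField (hE : Summable E) (hη : ∀ k t, |S.η k t| ≤ E k)
    (hF : ∀ k x, |S.F k x| ≤ 1) (t : ℝ) (x : Fin d → ℝ) :
    Summable fun k => shearField (S.η k) (S.F k) (S.dir k) t x :=
  Summable.of_norm_bounded hE fun k => norm_shearField_le (hη k t) (hF k x)

lemma continuous_velocity (hE : Summable E) (hη : ∀ k t, |S.η k t| ≤ E k)
    (hF : ∀ k x, |S.F k x| ≤ 1) : Continuous fun p : ℝ × (Fin d → ℝ) => S.velocity p.1 p.2 := by
  refine continuous_tsum (fun k => ?_) hE fun k p => norm_shearField_le (hη k p.1) (hF k p.2)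
  have hηk := S.continuous_η k
  have hFk := (S.contDiff_F k).continuous
  unfold shearField
  fun_prop

theorem holderVF_velocity (hα1 : α ≤ 1)
    (hE : Summable E) (hη : ∀ k t, |S.η k t| ≤ E k)
    (hL : Summable L) (hηL : ∀ k s t, |S.η k t - S.η k s| ≤ L k * |t - s|)
    (hF : ∀ k x, |S.F k x| ≤ 1) (hEM : Summable fun k => E k * M k)
    (hFM : ∀ k x y, |S.F k x - S.F k y| ≤ M k * ‖x - y‖ ^ α) :
    HolderVF α S.velocity := by
  have hsum := S.summable_shearField hE hη hF
  refine ⟨S.continuous_velocity hE hη hF, max (∑' k, E k * M k) (∑' k, L k),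
    fun s hs t ht x y => ⟨?_, ?_⟩⟩
  · rw [velocity, velocity, ← (hsum t x).tsum_sub (hsum t y)]
    calc _ ≤ (∑' k, E k * M k) * ‖x - y‖ ^ α := by
          refine tsum_of_norm_bounded (hEM.hasSum.mul_right _) fun k => ?_
          rw [norm_shearField_sub, ← mul_sub, abs_mul, mul_assoc]
          exact mul_le_mul (hη k t) (hFM k x y) (abs_nonneg _) ((abs_nonneg _).trans (hη k t))
      _ ≤ _ := by gcongr; exact le_max_left _ _
  · have hLnonneg : 0 ≤ ∑' k, L k := tsum_nonneg fun k => by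
      simpa using (abs_nonneg _).trans (hηL k 0 1)
    have hts : |t - s| ≤ 1 := abs_le.2 ⟨by linarith [hs.2, ht.1], by linarith [hs.1, ht.2]⟩
    rw [velocity, velocity, ← (hsum t x).tsum_sub (hsum s x)]
    calc _ ≤ (∑' k, L k) * |t - s| := by
          refine tsum_of_norm_bounded (hL.hasSum.mul_right _) fun k => ?_
          rw [norm_shearField_sub, ← sub_mul, abs_mul]
          exact mul_le_of_le_one_right (abs_nonneg _) (hF k x) |>.trans (hηL k s t)
      _ ≤ (∑' k, L k) * |t - s| ^ α := by
          gcongr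
          exact self_le_rpow_of_le_one (abs_nonneg _) hts hα1
      _ ≤ _ := by gcongr; exact le_max_right _ _

end ShearCascade

end Velocity

section Parameters

/-- The a priori growth factor of gradients up to stage `k` of the cascade: stage `k` multiplies
it by `1 + strain k`. -/
def gradScale : ℕ → ℝ
  | 0 => 2 ^ 20
  | k + 1 => gradScale k * (1 + (⌊gradScale k / 128 ^ k⌋₊ : ℝ) ^ 2 / 8 ^ k)

/-- The cube root of the frequency of stage `k`. -/
def freqRoot (k : ℕ) : ℕ := ⌊gradScale k / 128 ^ k⌋₊

/-- The frequency of the shear of stage `k`. -/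
def frequency (k : ℕ) : ℕ := freqRoot k ^ 3

/-- The total displacement of stage `k`. Since `amplitude k * frequency k ^ (1/3)` is summable even
after dividing by the duration of the stage, the velocity is `1/3`-Hölder. -/
def amplitude (k : ℕ) : ℝ := 1 / (8 ^ k * freqRoot k)

/-- The shear strain `amplitude k * frequency k` of stage `k`. -/
def strain (k : ℕ) : ℝ := freqRoot k ^ 2 / 8 ^ k

/-- The width parameter of the smoothed corners of the shear profile of stage `k`. -/
def cornerWidth (k : ℕ) : ℝ := 1 / gradScale k ^ 4

/-- The diffusivity that becomes effective during stage `n` of the cascade. -/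
def diffusivity (n : ℕ) : ℝ := 2 ^ (n + 1) / gradScale (n + 1) ^ 2

lemma gradScale_succ (k : ℕ) : gradScale (k + 1) = gradScale k * (1 + strain k) := rfl

lemma gradScale_div_le_freqRoot {k : ℕ} (hk : 2 ^ (20 * (k + 1)) ≤ gradScale k) :
    gradScale k / (2 * 128 ^ k) ≤ freqRoot k := by
  have htwo : 2 ≤ gradScale k / 128 ^ k := by
    rw [le_div_iff₀ (by positivity)]
    refine hk.trans' ?_
    rw [show (128 : ℝ) = 2 ^ 7 by norm_num, ← pow_mul, ← pow_succ']
    exact pow_le_pow_right₀ one_le_two (by lia)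
  have hfloor := Nat.lt_floor_add_one (gradScale k / 128 ^ k)
  have hhalf : gradScale k / (2 * 128 ^ k) = gradScale k / 128 ^ k / 2 := by
    rw [mul_comm, div_div]
  rw [hhalf, freqRoot]
  linarith

lemma mul_gradScale_le_strain_of_le {k : ℕ} (hk : 2 ^ (20 * (k + 1)) ≤ gradScale k) :
    2 ^ 18 * 8 ^ k * gradScale k ≤ strain k := by
  have hpos : 0 < gradScale k := hk.trans_lt' (by positivity)
  have hsplit : (2 : ℝ) ^ (20 * (k + 1)) = 2 ^ 20 * ((8 ^ k) ^ 2 * (128 ^ k) ^ 2) := by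
    rw [← mul_pow, ← mul_pow, ← pow_mul, mul_comm k 2, pow_mul, pow_mul, pow_succ]
    norm_num [mul_comm]
  calc 2 ^ 18 * 8 ^ k * gradScale k
      = 2 ^ 20 * ((8 ^ k) ^ 2 * (128 ^ k) ^ 2) * gradScale k / (2 * 128 ^ k) ^ 2 / 8 ^ k := by
        field_simp
    _ ≤ gradScale k * gradScale k / (2 * 128 ^ k) ^ 2 / 8 ^ k := by
        rw [← hsplit]
        gcongr
    _ = (gradScale k / (2 * 128 ^ k)) ^ 2 / 8 ^ k := by rw [div_pow, sq (gradScale k)]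
    _ ≤ strain k := by
        rw [strain]
        gcongr
        exact gradScale_div_le_freqRoot hk

lemma two_pow_le_gradScale (k : ℕ) : 2 ^ (20 * (k + 1)) ≤ gradScale k := by
  induction k with
  | zero => norm_num [gradScale]
  | succ k ih =>
    have hpos : 0 ≤ gradScale k := ih.trans' (by positivity)
    have hstrain : 2 ^ 20 ≤ strain k := by
      refine (mul_gradScale_le_strain_of_le ih).trans' ?_
      calc (2 : ℝ) ^ 20 ≤ 2 ^ (20 * (k + 1)) := by gcongr <;> norm_num
        _ ≤ gradScale k := ih
        _ ≤ 2 ^ 18 * 8 ^ k * gradScale k := le_mul_of_one_le_left hpos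
            (one_le_mul_of_one_le_of_one_le (by norm_num) (one_le_pow₀ (by norm_num)))
    rw [gradScale_succ, mul_add 20 (k + 1), pow_add]
    gcongr
    exact hstrain.trans (by linarith)

lemma gradScale_pos (k : ℕ) : 0 < gradScale k := (two_pow_le_gradScale k).trans_lt' (by positivity)

lemma mul_gradScale_le_strain (k : ℕ) : 2 ^ 18 * 8 ^ k * gradScale k ≤ strain k :=
  mul_gradScale_le_strain_of_le (two_pow_le_gradScale k)

lemma eight_pow_le_gradScale (k : ℕ) : 8 ^ k ≤ gradScale k := by
  refine (two_pow_le_gradScale k).trans' ?_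
  rw [show (8 : ℝ) = 2 ^ 3 by norm_num, ← pow_mul]
  exact pow_le_pow_right₀ one_le_two (by lia)

lemma one_le_gradScale (k : ℕ) : 1 ≤ gradScale k :=
  (one_le_pow₀ (by norm_num)).trans (eight_pow_le_gradScale k)

lemma freqRoot_pos (k : ℕ) : 0 < freqRoot k := by
  have hdiv : 0 < gradScale k / (2 * 128 ^ k) := div_pos (gradScale_pos k) (by positivity)
  exact_mod_cast hdiv.trans_le (gradScale_div_le_freqRoot (two_pow_le_gradScale k))

lemma frequency_pos (k : ℕ) : 0 < frequency k := pow_pos (freqRoot_pos k) 3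

lemma amplitude_pos (k : ℕ) : 0 < amplitude k := by
  have := freqRoot_pos k
  unfold amplitude
  positivity

lemma strain_pos (k : ℕ) : 0 < strain k := by
  have := freqRoot_pos k
  unfold strain
  positivity

lemma amplitude_mul_freqRoot (k : ℕ) : amplitude k * freqRoot k = 1 / 8 ^ k := by
  have := freqRoot_pos k
  unfold amplitude
  field_simp

lemma amplitude_mul_frequency (k : ℕ) : amplitude k * frequency k = strain k := by
  rw [frequency, Nat.cast_pow, pow_succ', ← mul_assoc, amplitude_mul_freqRoot, strain]
  ring

lemma amplitude_le (k : ℕ) : amplitude k ≤ 1 / 8 ^ k := by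
  rw [← amplitude_mul_freqRoot]
  exact le_mul_of_one_le_right (amplitude_pos k).le (by exact_mod_cast freqRoot_pos k)

lemma sixteen_pow_le_amplitude_mul_gradScale (k : ℕ) : 16 ^ k ≤ amplitude k * gradScale k := by
  have hfloor : (freqRoot k : ℝ) ≤ gradScale k / 128 ^ k :=
    Nat.floor_le (div_nonneg (gradScale_pos k).le (by positivity))
  calc (16 : ℝ) ^ k = amplitude k * (freqRoot k * 128 ^ k) := by
        rw [← mul_assoc, amplitude_mul_freqRoot, div_mul_eq_mul_div, one_mul, ← div_pow]
        norm_num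
    _ ≤ amplitude k * gradScale k := by
        have := amplitude_pos k
        gcongr
        exact (le_div_iff₀ (by positivity)).1 hfloor

lemma two_pow_mul_gradScale_le (k : ℕ) : 2 ^ 20 * gradScale k ≤ gradScale (k + 1) := by
  have hpos := gradScale_pos k
  have hstrain : 2 ^ 18 * 1 * 2 ^ 20 ≤ strain k := by
    refine (mul_gradScale_le_strain k).trans' ?_
    gcongr
    · exact one_le_pow₀ (by norm_num)
    · refine (two_pow_le_gradScale k).trans' ?_
      gcongr <;> norm_num
  rw [gradScale_succ, mul_comm]
  gcongr
  linarith

lemma monotone_gradScale : Monotone gradScale := monotone_nat_of_le_succ fun k => by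
  rw [gradScale_succ]
  exact le_mul_of_one_le_right (gradScale_pos k).le (by linarith [strain_pos k])

lemma cornerWidth_mem_Ioo (k : ℕ) : cornerWidth k ∈ Set.Ioo 0 (π / 2) := by
  have hpos := gradScale_pos k
  have hle : cornerWidth k ≤ 1 := by
    rw [cornerWidth, div_le_one (by positivity)]
    exact one_le_pow₀ (one_le_gradScale k)
  exact ⟨by unfold cornerWidth; positivity, by linarith [pi_gt_three]⟩

lemma gradScale_mul_loss_le {n k : ℕ} (hnk : n ≤ k) :
    gradScale n * (2 / (1 + strain k) + √(cornerWidth k)) ≤ 3 * (1 / 8) ^ k := by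
  have hmono := monotone_gradScale hnk
  have hpos := gradScale_pos k
  have hstrain := strain_pos k
  have hone : (1 : ℝ) ≤ 8 ^ k := one_le_pow₀ (by norm_num)
  have hfirst : gradScale n * (2 / (1 + strain k)) ≤ 2 / 8 ^ k := by
    rw [mul_div_assoc', div_le_div_iff₀ (by positivity) (by positivity)]
    nlinarith [mul_gradScale_le_strain k, mul_pos hpos (zero_lt_one.trans_le hone),
      mul_le_mul_of_nonneg_right hmono (zero_le_one.trans hone)]
  have hsqrt : √(cornerWidth k) = 1 / gradScale k ^ 2 := by
    rw [cornerWidth, sqrt_eq_iff_mul_self_eq (by positivity) (by positivity)]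
    field_simp
  have hsecond : gradScale n * √(cornerWidth k) ≤ 1 / 8 ^ k :=
    calc gradScale n * √(cornerWidth k) ≤ gradScale k * √(cornerWidth k) := by gcongr
      _ = 1 / gradScale k := by rw [hsqrt]; field_simp
      _ ≤ 1 / 8 ^ k := by gcongr; exact eight_pow_le_gradScale k
  rw [mul_add, one_div_pow]
  linarith [div_eq_mul_one_div (2 : ℝ) (8 ^ k)]

lemma diffusivity_pos (n : ℕ) : 0 < diffusivity n := by
  have := gradScale_pos (n + 1)
  unfold diffusivity
  positivity

lemma diffusivity_succ_le (n : ℕ) : diffusivity (n + 1) ≤ diffusivity n / 2 := by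
  have hpos := gradScale_pos (n + 1)
  calc diffusivity (n + 1) ≤ 2 ^ (n + 1 + 1) / (2 * gradScale (n + 1)) ^ 2 := by
        unfold diffusivity
        gcongr
        exact (two_pow_mul_gradScale_le (n + 1)).trans' (by gcongr; norm_num)
    _ = diffusivity n / 2 := by
        unfold diffusivity
        field_simp
        ring

lemma antitone_diffusivity : Antitone diffusivity :=
  antitone_nat_of_succ_le fun n => by linarith [diffusivity_succ_le n, diffusivity_pos n]

lemma tendsto_diffusivity : Tendsto diffusivity atTop (𝓝 0) := by
  have hle : ∀ n, diffusivity n ≤ diffusivity 0 * (1 / 2) ^ n := fun n => by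
    induction n with
    | zero => simp
    | succ n ih => rw [pow_succ]; linarith [diffusivity_succ_le n]
  refine squeeze_zero (fun n => (diffusivity_pos n).le) hle ?_
  simpa using (tendsto_pow_atTop_nhds_zero_of_lt_one (r := (1 / 2 : ℝ)) (by norm_num)
    (by norm_num)).const_mul (diffusivity 0)

lemma diffusivity_mul_gradScale_sq (n : ℕ) :
    diffusivity n * (gradScale (n + 1) ^ 2 * (1 / 2) ^ (n + 1)) = 1 := by
  have hpos := gradScale_pos (n + 1)
  rw [diffusivity, one_div_pow]
  field_simp

/-- The order of magnitude of the Dirichlet energy of a transported function, integrated in time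
over the first `n + 1` stages: during stage `m` the gradient is at most of order
`gradScale (m + 1)`, and the stage lasts `(1 / 2) ^ (m + 1)`. -/
def cumulativeEnergy (n : ℕ) : ℝ :=
  ∑ m ∈ Finset.range (n + 1), gradScale (m + 1) ^ 2 * (1 / 2) ^ (m + 1)

lemma cumulativeEnergy_nonneg (n : ℕ) : 0 ≤ cumulativeEnergy n :=
  Finset.sum_nonneg fun _ _ => by positivity

lemma diffusivity_mul_cumulativeEnergy_le (n : ℕ) : diffusivity n * cumulativeEnergy n ≤ 2 := by
  induction n with
  | zero =>
    simpa [cumulativeEnergy] using (diffusivity_mul_gradScale_sq 0).le.trans one_le_two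
  | succ n ih =>
    rw [cumulativeEnergy, Finset.sum_range_succ, mul_add, diffusivity_mul_gradScale_sq,
      ← cumulativeEnergy]
    linarith [mul_le_mul_of_nonneg_right (diffusivity_succ_le n) (cumulativeEnergy_nonneg n)]

end Parameters

section SelfSimilarCascade

variable {d : ℕ}

/-- The coordinate axes taken cyclically. -/
def shearAxis (hd : 2 ≤ d) (k : ℕ) : Fin d := ⟨k % d, Nat.mod_lt _ (by lia)⟩

lemma shearAxis_succ_ne (hd : 2 ≤ d) (k : ℕ) : shearAxis hd (k + 1) ≠ shearAxis hd k := by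
  intro h
  have hmod : k + 1 ≡ k + 0 [MOD d] := Fin.mk.inj h
  have hdvd := (Nat.modEq_zero_iff_dvd.1 (Nat.ModEq.add_left_cancel' k hmod))
  exact absurd (Nat.le_of_dvd one_pos hdvd) (by lia)

/-- The starting time of stage `k`. -/
def stageTime (k : ℕ) : ℝ := 1 - (1 / 2) ^ k

/-- The time profile of stage `k`: a pulse of mass `amplitude k` supported in the first half of
the stage, which lasts `(1 / 2) ^ (k + 1)`. -/
def stagePulse (k : ℕ) (t : ℝ) : ℝ :=
  amplitude k * 2 ^ (k + 1) * pulse ((t - stageTime k) * 2 ^ (k + 1))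

/-- The spatial profile of stage `k`. -/
def stageProfile (hd : 2 ≤ d) (k : ℕ) (x : Fin d → ℝ) : ℝ :=
  shearProfile (cornerWidth k) (frequency k * x (shearAxis hd (k + 1)))

lemma stageTime_succ (k : ℕ) : stageTime (k + 1) = stageTime k + (1 / 2) ^ (k + 1) := by
  unfold stageTime
  ring

lemma half_pow_mul_two_pow (k : ℕ) : (1 / 2 : ℝ) ^ k * 2 ^ k = 1 := by
  rw [← mul_pow]
  norm_num

lemma strictMono_stageTime : StrictMono stageTime := strictMono_nat_of_lt_succ fun k => by
  rw [stageTime_succ]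
  exact lt_add_of_pos_right _ (by positivity)

lemma tendsto_stageTime : Tendsto stageTime atTop (𝓝 1) := by
  have hpow := (tendsto_pow_atTop_nhds_zero_of_lt_one (r := (1 / 2 : ℝ)) (by norm_num)
    (by norm_num)).const_sub 1
  rw [sub_zero] at hpow
  exact hpow

lemma abs_stagePulse_le (k : ℕ) (t : ℝ) : |stagePulse k t| ≤ 8 * 2 ^ k * amplitude k := by
  have ha := amplitude_pos k
  rw [stagePulse, abs_mul, abs_of_pos (by positivity)]
  calc amplitude k * 2 ^ (k + 1) * |pulse ((t - stageTime k) * 2 ^ (k + 1))|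
      ≤ amplitude k * 2 ^ (k + 1) * 4 := by
        gcongr
        exact abs_pulse_le _
    _ = 8 * 2 ^ k * amplitude k := by ring

lemma abs_stagePulse_sub_le (k : ℕ) (s t : ℝ) :
    |stagePulse k t - stagePulse k s| ≤ 64 * (1 / 2) ^ k * |t - s| := by
  have ha := amplitude_pos k
  have hpulse :=
    abs_pulse_sub_le ((t - stageTime k) * 2 ^ (k + 1)) ((s - stageTime k) * 2 ^ (k + 1))
  rw [← sub_mul, sub_sub_sub_cancel_right, abs_mul,
    abs_of_pos (by positivity : (0 : ℝ) < 2 ^ (k + 1))] at hpulse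
  rw [stagePulse, stagePulse, ← mul_sub, abs_mul, abs_of_pos (by positivity)]
  calc _ ≤ 1 / 8 ^ k * 2 ^ (k + 1) * (16 * (|t - s| * 2 ^ (k + 1))) := by
        gcongr
        exact amplitude_le k
    _ = 64 * (1 / 2) ^ k * |t - s| := by
        rw [show (8 : ℝ) ^ k = 2 ^ k * 2 ^ k * 2 ^ k by rw [← mul_pow, ← mul_pow]; norm_num,
          one_div_pow]
        field_simp
        ring

lemma lipschitzWith_stagePulse (k : ℕ) :
    LipschitzWith (64 * (1 / 2) ^ k) (stagePulse k) :=
  LipschitzWith.of_dist_le_mul fun t s => by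
    simpa [Real.dist_eq] using abs_stagePulse_sub_le k s t

lemma stagePulse_eq_zero (k : ℕ) (t : ℝ) (ht : t ∉ Set.Ioo (stageTime k) (stageTime (k + 1))) :
    stagePulse k t = 0 := by
  rw [stagePulse]
  rcases le_or_gt t (stageTime k) with h | h
  · rw [pulse_of_nonpos (mul_nonpos_of_nonpos_of_nonneg (by linarith) (by positivity)), mul_zero]
  · have hlate : (1 / 2) ^ (k + 1) ≤ t - stageTime k := by
      have := not_lt.1 fun h' => ht ⟨h, h'⟩
      linarith [stageTime_succ k]
    rw [pulse_of_half_le, mul_zero]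
    calc (1 / 2 : ℝ) ≤ (1 / 2) ^ (k + 1) * 2 ^ (k + 1) := by
          rw [half_pow_mul_two_pow]
          norm_num
      _ ≤ (t - stageTime k) * 2 ^ (k + 1) := by gcongr

lemma integral_stagePulse (k : ℕ) (t : ℝ) :
    ∫ r in stageTime k..t, stagePulse k r
      = amplitude k * ∫ r in (0 : ℝ)..(t - stageTime k) * 2 ^ (k + 1), pulse r := by
  have hscale : (2 : ℝ) ^ (k + 1) ≠ 0 := by positivity
  simp only [stagePulse, mul_comm _ ((2 : ℝ) ^ (k + 1)), mul_sub]
  rw [intervalIntegral.integral_const_mul, intervalIntegral.integral_comp_mul_sub _ hscale,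
    sub_self, smul_eq_mul, mul_right_comm, mul_inv_cancel_left₀ hscale, mul_comm]

lemma contDiff_stageProfile (hd : 2 ≤ d) (k : ℕ) : ContDiff ℝ 1 (stageProfile hd k) := by
  have := contDiff_shearProfile (cornerWidth_mem_Ioo k)
  unfold stageProfile
  fun_prop

lemma abs_stageProfile_le (hd : 2 ≤ d) (k : ℕ) (x : Fin d → ℝ) : |stageProfile hd k x| ≤ 1 / 4 :=
  abs_shearProfile_le _ _

lemma abs_stageProfile_sub_le (hd : 2 ≤ d) {α : ℝ} (hα : α ∈ Set.Ioc (0 : ℝ) (1 / 3)) (k : ℕ)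
    (x y : Fin d → ℝ) :
    |stageProfile hd k x - stageProfile hd k y| ≤ freqRoot k * ‖x - y‖ ^ α := by
  have hone : |stageProfile hd k x - stageProfile hd k y| ≤ 1 :=
    (abs_sub _ _).trans (by linarith [abs_stageProfile_le hd k x, abs_stageProfile_le hd k y])
  have hlip : |stageProfile hd k x - stageProfile hd k y| ≤ frequency k * ‖x - y‖ := by
    refine (abs_shearProfile_sub_le (cornerWidth_mem_Ioo k) _ _).trans ?_
    rw [← mul_sub, abs_mul, Nat.abs_cast]
    gcongr
    exact norm_le_pi_norm (x - y) _
  have hroot : (frequency k : ℝ) ^ α ≤ freqRoot k := by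
    have hm : (1 : ℝ) ≤ freqRoot k := by exact_mod_cast freqRoot_pos k
    rw [frequency, Nat.cast_pow, ← rpow_natCast, ← rpow_mul (Nat.cast_nonneg _)]
    refine (rpow_le_rpow_of_exponent_le hm ?_).trans_eq (rpow_one _)
    push_cast
    linarith [hα.2]
  calc |stageProfile hd k x - stageProfile hd k y| ≤ (frequency k * ‖x - y‖) ^ α :=
        abs_le_rpow_of_abs_le hα.1.le (by linarith [hα.2]) (by positivity) hone hlip
    _ = (frequency k : ℝ) ^ α * ‖x - y‖ ^ α := mul_rpow (by positivity) (norm_nonneg _)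
    _ ≤ freqRoot k * ‖x - y‖ ^ α := by gcongr

/-- The cascade whose velocity field is anomalously diffusive. -/
def selfSimilarCascade (hd : 2 ≤ d) : ShearCascade d where
  T := stageTime
  η := stagePulse
  F := stageProfile hd
  dir := shearAxis hd
  T_zero := by simp [stageTime]
  strictMono_T := strictMono_stageTime
  tendsto_T := tendsto_stageTime
  lipschitz_η k := ⟨_, lipschitzWith_stagePulse k⟩
  η_eq_zero := stagePulse_eq_zero
  contDiff_F := contDiff_stageProfile hd
  periodic_F k := spacePeriodic_coord (periodic_shearProfile _) _ _
  constAlong_F k := constAlong_coord (shearAxis_succ_ne hd k)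
    fun s => shearProfile (cornerWidth k) (frequency k * s)

lemma holderVF_selfSimilarCascade (hd : 2 ≤ d) {α : ℝ} (hα : α ∈ Set.Ioc (0 : ℝ) (1 / 3)) :
    HolderVF α (selfSimilarCascade hd).velocity := by
  have hgeom : Summable fun k : ℕ => 8 * (1 / 4 : ℝ) ^ k :=
    (summable_geometric_of_lt_one (by norm_num) (by norm_num)).mul_left 8
  have hpow (k : ℕ) : 8 * 2 ^ k * (1 / 8 ^ k) = 8 * (1 / 4 : ℝ) ^ k := by
    rw [show (8 : ℝ) ^ k = 2 ^ k * 4 ^ k by rw [← mul_pow]; norm_num, one_div_pow]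
    field_simp
  have hE : Summable fun k => 8 * 2 ^ k * amplitude k := by
    refine hgeom.of_nonneg_of_le (fun k => ?_) fun k => ?_
    · have := amplitude_pos k
      positivity
    · rw [← hpow]
      gcongr
      exact amplitude_le k
  refine ShearCascade.holderVF_velocity _ (M := fun k => freqRoot k) (by linarith [hα.2]) hE
    abs_stagePulse_le
    ((summable_geometric_of_lt_one (by norm_num) (by norm_num : (1 / 2 : ℝ) < 1)).mul_left 64)
    abs_stagePulse_sub_le
    (fun k x => (abs_stageProfile_le hd k x).trans (by norm_num)) ?_
    (abs_stageProfile_sub_le hd hα)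
  refine hgeom.congr fun k => ?_
  rw [mul_assoc, amplitude_mul_freqRoot, hpow]

lemma displacement_selfSimilarCascade_of_le (hd : 2 ≤ d) {k : ℕ} {t : ℝ}
    (ht : stageTime k + (1 / 2) ^ (k + 2) ≤ t) :
    (selfSimilarCascade hd).displacement k t = amplitude k := by
  refine (integral_stagePulse k t).trans ?_
  rw [integral_pulse_of_half_le, mul_one]
  calc (1 / 2 : ℝ) = (1 / 2) ^ (k + 2) * 2 ^ (k + 1) := by
        rw [pow_succ _ (k + 1), mul_right_comm, half_pow_mul_two_pow, one_mul]
    _ ≤ (t - stageTime k) * 2 ^ (k + 1) := by gcongr; linarith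

lemma displacement_selfSimilarCascade_T_succ (hd : 2 ≤ d) (k : ℕ) :
    (selfSimilarCascade hd).displacement k (stageTime (k + 1)) = amplitude k := by
  refine displacement_selfSimilarCascade_of_le hd ?_
  rw [stageTime_succ]
  exact add_le_add le_rfl (pow_le_pow_of_le_one (by norm_num) (by norm_num) (k + 1).le_succ)

lemma abs_displacement_selfSimilarCascade_le (hd : 2 ≤ d) {k : ℕ} {t : ℝ} (ht : stageTime k ≤ t) :
    |(selfSimilarCascade hd).displacement k t| ≤ amplitude k := by
  have hmass := integral_pulse_mem_Icc (s := (t - stageTime k) * 2 ^ (k + 1))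
    (mul_nonneg (by linarith) (by positivity))
  have ha := amplitude_pos k
  rw [show (selfSimilarCascade hd).displacement k t = _ from integral_stagePulse k t, abs_mul,
    abs_of_pos ha, abs_of_nonneg hmass.1]
  exact mul_le_of_le_one_right ha.le hmass.2

end SelfSimilarCascade

/-! ### Growth of gradients along the cascade -/

section TestFunction

variable {d : ℕ} {F W a h ρ : (Fin d → ℝ) → ℝ} {i j : Fin d} {M K G L D β δ : ℝ}

lemma l2norm_pd_shearTransport_le (hF : ContDiff ℝ 1 F) (hFp : SpacePeriodic F)
    (hFi : ConstAlong i F) (hL : ∀ l x, |pd F l x| ≤ L) (hW : ContDiff ℝ 1 W)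
    (hWp : SpacePeriodic W) (hG : ∀ l, l2norm (pd W l) ≤ G) (A : ℝ) (l : Fin d) :
    l2norm (pd (shearTransport F i A W) l) ≤ G * (1 + |A| * L) := by
  have hnorm (l : Fin d) : l2norm (shearTransport F i A (pd W l)) ≤ G :=
    (l2norm_shearTransport hF.continuous hFp hFi A (continuous_pd hW l) (hWp.pd l)).trans_le (hG l)
  have hcont (l : Fin d) := continuous_shearTransport hF.continuous i A (continuous_pd hW l)
  have hslope : Continuous fun x => A * pd F l x := by have := continuous_pd hF l; fun_prop
  have hpd := funext
    (pd_shearTransport (i := i) (hF.differentiable one_ne_zero) A (hW.differentiable one_ne_zero) l)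
  have hslope_le (x : Fin d → ℝ) : |A * pd F l x| ≤ |A| * L := by
    rw [abs_mul]
    gcongr
    exact hL l x
  have hAL : 0 ≤ |A| * L := (abs_nonneg _).trans (hslope_le 0)
  calc l2norm (pd (shearTransport F i A W) l)
      ≤ l2norm (shearTransport F i A (pd W l))
        + l2norm (fun x => A * pd F l x * shearTransport F i A (pd W i) x) := by
        rw [hpd]
        exact l2norm_sub_le (hcont l) (hslope.mul (hcont i))
    _ ≤ G + |A| * L * G := by
        gcongr
        · exact hnorm l
        · exact (l2norm_mul_le hslope (hcont i) hslope_le).trans (by gcongr; exact hnorm i)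
    _ = G * (1 + |A| * L) := by ring

lemma dirichletEnergy_le (hW : ContDiff ℝ 1 W) (hG : ∀ l, l2norm (pd W l) ≤ G) :
    dirichletEnergy W ≤ d * G ^ 2 := by
  calc dirichletEnergy W = ∑ l, l2norm (pd W l) ^ 2 := by
        simp only [l2norm_sq]
        exact boxIntegral_sum Finset.univ fun l => (continuous_pd hW l).pow 2
    _ ≤ ∑ _l : Fin d, G ^ 2 := by
        gcongr with l
        · exact l2norm_nonneg _
        · exact hG l
    _ = d * G ^ 2 := by simp

/-- The test functions against which gradients are paired: `C¹` functions on the torus bounded by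
`M` and with partial derivatives bounded by `K` in `L²`. -/
structure IsTestFunction (M K : ℝ) (a : (Fin d → ℝ) → ℝ) : Prop where
  contDiff : ContDiff ℝ 1 a
  periodic : SpacePeriodic a
  abs_le : ∀ x, |a x| ≤ M
  l2norm_pd_le : ∀ l, l2norm (pd a l) ≤ K

/-- The `L²(T^d)` inner product of `a` with `∂_i W`. -/
def derivPairing (i : Fin d) (a W : (Fin d → ℝ) → ℝ) : ℝ := boxIntegral fun x => a x * pd W i x

namespace IsTestFunction

lemma nonneg_bound (ha : IsTestFunction M K a) : 0 ≤ M := (abs_nonneg _).trans (ha.abs_le 0)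

lemma mono {K' : ℝ} (ha : IsTestFunction M K a) (hK : K ≤ K') : IsTestFunction M K' a :=
  { ha with l2norm_pd_le := fun l => (ha.l2norm_pd_le l).trans hK }

lemma abs_derivPairing_le (ha : IsTestFunction M K a) (hW : ContDiff ℝ 1 W)
    (hG : l2norm (pd W i) ≤ G) : |derivPairing i a W| ≤ M * G :=
  (abs_boxIntegral_mul_le_of_abs_le ha.contDiff.continuous (continuous_pd hW i) ha.abs_le).trans
    (mul_le_mul_of_nonneg_left hG ha.nonneg_bound)

protected lemma shearTransport (ha : IsTestFunction M K a) (hF : ContDiff ℝ 1 F)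
    (hFp : SpacePeriodic F) (hFi : ConstAlong i F) (hL : ∀ l x, |pd F l x| ≤ L) (A : ℝ) :
    IsTestFunction M (K * (1 + |A| * L)) (shearTransport F i A a) where
  contDiff := contDiff_shearTransport hF i A ha.contDiff
  periodic := hFp.shearTransport i A ha.periodic
  abs_le _ := ha.abs_le _
  l2norm_pd_le :=
    l2norm_pd_shearTransport_le hF hFp hFi hL ha.contDiff ha.periodic ha.l2norm_pd_le A

lemma mul_left (ha : IsTestFunction M K a) (hh : ContDiff ℝ 1 h) (hhp : SpacePeriodic h)
    (hh1 : ∀ x, |h x| ≤ 1) (hD : ∀ l x, |pd h l x| ≤ D) :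
    IsTestFunction M (K + M * D) fun x => h x * a x where
  contDiff := hh.mul ha.contDiff
  periodic := hhp.mul ha.periodic
  abs_le x := by
    rw [abs_mul]
    exact (mul_le_of_le_one_left (abs_nonneg _) (hh1 x)).trans (ha.abs_le x)
  l2norm_pd_le l := by
    have hca := ha.contDiff.continuous
    have hpa := continuous_pd ha.contDiff l
    have hph := continuous_pd hh l
    rw [pd_mul (hh.differentiable one_ne_zero) (ha.contDiff.differentiable one_ne_zero)]
    refine (l2norm_add_le (hh.continuous.mul hpa) (hca.mul hph)).trans (add_le_add ?_ ?_)
    · refine (l2norm_mul_le hh.continuous hpa hh1).trans ?_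
      rw [one_mul]
      exact ha.l2norm_pd_le l
    · exact (l2norm_mul_le hca hph ha.abs_le).trans
        (mul_le_mul_of_nonneg_left (l2norm_le_of_abs_le hph (hD l)) ha.nonneg_bound)

end IsTestFunction

/- The shear turns `∂_i W` into `∂_j W` with the factor `A ∂_j F = β ρ`. Multiplying the transported
test function by `h ≈ sign ρ` makes this factor add up coherently. -/
lemma derivPairing_mul_shearTransport (ha : Continuous a) (hap : SpacePeriodic a)
    (hF : ContDiff ℝ 1 F) (hFp : SpacePeriodic F) (hFi : ConstAlong i F) {A : ℝ}
    (hh : Continuous h) (hρ : Continuous ρ) (hFj : ∀ x, A * pd F j x = β * ρ x)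
    (hW : ContDiff ℝ 1 W) (hWp : SpacePeriodic W) :
    derivPairing j (fun x => h x * shearTransport F i A a x) (shearTransport F i A W)
      = boxIntegral (fun x => h x * shearTransport F i A a x * shearTransport F i A (pd W j) x)
        - β * (derivPairing i a W - boxIntegral fun x =>
            shearTransport F i A a x * (1 - h x * ρ x) * shearTransport F i A (pd W i) x) := by
  have hpair : derivPairing i a W
      = boxIntegral fun x => shearTransport F i A a x * shearTransport F i A (pd W i) x :=
    (boxIntegral_shearTransport hF.continuous hFp hFi A (ha.mul (continuous_pd hW i))
      (hap.mul (hWp.pd i))).symm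
  have := continuous_shearTransport hF.continuous i A ha
  have (l : Fin d) := continuous_shearTransport hF.continuous i A (continuous_pd hW l)
  rw [hpair, ← boxIntegral_sub (by fun_prop) (by fun_prop), ← boxIntegral_const_mul,
    ← boxIntegral_sub (by fun_prop) (by fun_prop)]
  refine congrArg boxIntegral (funext fun x => ?_)
  rw [pd_shearTransport (hF.differentiable one_ne_zero) A (hW.differentiable one_ne_zero), hFj]
  ring

lemma IsTestFunction.le_abs_derivPairing_shearTransport (ha : IsTestFunction M K a)
    (hF : ContDiff ℝ 1 F) (hFp : SpacePeriodic F) (hFi : ConstAlong i F) {A : ℝ} (hβ : 0 ≤ β)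
    (hh : Continuous h) (hρ : Continuous ρ) (hh1 : ∀ x, |h x| ≤ 1)
    (hFj : ∀ x, A * pd F j x = β * ρ x) (hδ : l2norm (fun x => 1 - h x * ρ x) ≤ δ)
    (hW : ContDiff ℝ 1 W) (hWp : SpacePeriodic W) (hG : ∀ l, l2norm (pd W l) ≤ G) :
    β * (|derivPairing i a W| - M * G * δ) - M * G
      ≤ |derivPairing j (fun x => h x * shearTransport F i A a x) (shearTransport F i A W)| := by
  rw [derivPairing_mul_shearTransport ha.contDiff.continuous ha.periodic hF hFp hFi hh hρ hFj hW
    hWp]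
  set b := shearTransport F i A a
  set V : Fin d → (Fin d → ℝ) → ℝ := fun l => shearTransport F i A (pd W l)
  have hM := ha.nonneg_bound
  have hb : Continuous b := continuous_shearTransport hF.continuous i A ha.contDiff.continuous
  have hbM (x : Fin d → ℝ) : |b x| ≤ M := ha.abs_le _
  have hV (l : Fin d) : Continuous (V l) :=
    continuous_shearTransport hF.continuous i A (continuous_pd hW l)
  have hVG (l : Fin d) : l2norm (V l) ≤ G :=
    (l2norm_shearTransport hF.continuous hFp hFi A (continuous_pd hW l) (hWp.pd l)).trans_le (hG l)
  have hmain : |boxIntegral fun x => h x * b x * V j x| ≤ M * G := by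
    refine (abs_boxIntegral_mul_le_of_abs_le (by fun_prop) (hV j) fun x => ?_).trans
      (mul_le_mul_of_nonneg_left (hVG j) hM)
    rw [abs_mul]
    exact (mul_le_of_le_one_left (abs_nonneg _) (hh1 x)).trans (hbM x)
  have hloss : |boxIntegral fun x => b x * (1 - h x * ρ x) * V i x| ≤ M * G * δ := by
    calc |boxIntegral fun x => b x * (1 - h x * ρ x) * V i x|
        ≤ l2norm (fun x => b x * (1 - h x * ρ x)) * l2norm (V i) :=
          abs_boxIntegral_mul_le (by fun_prop) (hV i)
      _ ≤ M * δ * G :=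
          mul_le_mul ((l2norm_mul_le hb (by fun_prop) hbM).trans (by gcongr)) (hVG i)
            (l2norm_nonneg _) (mul_nonneg hM ((l2norm_nonneg _).trans hδ))
      _ = M * G * δ := by ring
  generalize derivPairing i a W = p, (boxIntegral fun x => h x * b x * V j x) = q,
    (boxIntegral fun x => b x * (1 - h x * ρ x) * V i x) = r at hmain hloss ⊢
  have htri : |β * (p - r)| - |q| ≤ |q - β * (p - r)| := by
    rw [abs_sub_comm q]
    exact abs_sub_abs_le_abs_sub _ _
  rw [abs_mul, abs_of_nonneg hβ] at htri
  have hp : β * (|p| - M * G * δ) ≤ β * |p - r| := by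
    gcongr
    linarith [abs_sub_abs_le_abs_sub p r]
  linarith

end TestFunction

section SelfSimilarGrowth

variable {d : ℕ} {hd : 2 ≤ d} {k : ℕ} {v H M K : ℝ} {w a : (Fin d → ℝ) → ℝ}

lemma pd_coord {ψ : ℝ → ℝ} (hψ : Differentiable ℝ ψ) (N : ℝ) (j l : Fin d) (x : Fin d → ℝ) :
    pd (fun x => ψ (N * x j)) l x = deriv ψ (N * x j) * N * if l = j then 1 else 0 := by
  have hcoord : HasFDerivAt (fun x : Fin d → ℝ => N * x j) _ x :=
    (ContinuousLinearMap.proj (R := ℝ) (φ := fun _ : Fin d => ℝ) j).hasFDerivAt.const_mul N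
  have hcomp : HasFDerivAt (fun x : Fin d → ℝ => ψ (N * x j)) _ x :=
    (hψ (N * x j)).hasDerivAt.comp_hasFDerivAt x hcoord
  rw [pd, hcomp.fderiv]
  simp [Pi.single_apply, eq_comm]

lemma abs_pd_coord_le {ψ : ℝ → ℝ} (hψ : Differentiable ℝ ψ) {D : ℝ} (hD : ∀ s, |deriv ψ s| ≤ D)
    (N : ℕ) (j l : Fin d) (x : Fin d → ℝ) : |pd (fun x => ψ (N * x j)) l x| ≤ D * N := by
  have hD0 : 0 ≤ D := (abs_nonneg _).trans (hD 0)
  rw [pd_coord hψ]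
  split_ifs
  · rw [mul_one, abs_mul, Nat.abs_cast]
    gcongr
    exact hD _
  · rw [mul_zero, abs_zero]
    positivity

/-- A smoothed version, with corner width `v`, of the sign of the strain of stage `k`. -/
def dualWeight (hd : 2 ≤ d) (k : ℕ) (v : ℝ) (x : Fin d → ℝ) : ℝ :=
  shearSlope v (frequency k * x (shearAxis hd (k + 1)))

lemma contDiff_dualWeight (hv : v ∈ Set.Ioo 0 (π / 2)) : ContDiff ℝ 1 (dualWeight hd k v) := by
  have := contDiff_shearSlope hv
  unfold dualWeight
  fun_prop

lemma abs_pd_dualWeight_le (hv : v ∈ Set.Ioo 0 (π / 2)) (l : Fin d) (x : Fin d → ℝ) :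
    |pd (dualWeight hd k v) l x| ≤ π ^ 2 / v * frequency k :=
  abs_pd_coord_le ((contDiff_shearSlope hv).differentiable one_ne_zero)
    (abs_deriv_shearSlope_le hv) _ _ l x

lemma deriv_shearProfile_cornerWidth (k : ℕ) (s : ℝ) :
    deriv (shearProfile (cornerWidth k)) s = shearSlope (cornerWidth k) s :=
  (hasDerivAt_shearProfile (cornerWidth_mem_Ioo k) s).deriv

lemma pd_stageProfile (hd : 2 ≤ d) (k : ℕ) (x : Fin d → ℝ) :
    pd (stageProfile hd k) (shearAxis hd (k + 1)) x
      = frequency k * dualWeight hd k (cornerWidth k) x := by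
  unfold stageProfile
  rw [pd_coord ((contDiff_shearProfile (cornerWidth_mem_Ioo k)).differentiable one_ne_zero),
    if_pos rfl, mul_one, deriv_shearProfile_cornerWidth, mul_comm, dualWeight]

lemma abs_pd_stageProfile_le (hd : 2 ≤ d) (k : ℕ) (l : Fin d) (x : Fin d → ℝ) :
    |pd (stageProfile hd k) l x| ≤ frequency k := by
  refine (abs_pd_coord_le
    ((contDiff_shearProfile (cornerWidth_mem_Ioo k)).differentiable one_ne_zero) (fun s => ?_)
    (frequency k) (shearAxis hd (k + 1)) l x).trans_eq (one_mul _)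
  rw [deriv_shearProfile_cornerWidth]
  exact abs_shearSlope_le_one _ s

lemma l2norm_one_sub_dualWeight_mul_le (hd : 2 ≤ d) (k : ℕ) (hv : v ∈ Set.Ioo 0 (π / 2)) :
    l2norm (fun x => 1 - dualWeight hd k v x * dualWeight hd k (cornerWidth k) x)
      ≤ √(cornerWidth k) + √v := by
  have hc := cornerWidth_mem_Ioo k
  have hcv := (contDiff_shearSlope hv).continuous
  have hcc := (contDiff_shearSlope hc).continuous
  have hmean := boxIntegral_coord (d := d) (shearAxis hd (k + 1))
    (F := fun s => (1 - |shearSlope v s|) + (1 - |shearSlope (cornerWidth k) s|)) (by fun_prop)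
    (fun s => by simp only [periodic_shearSlope _ s]) (frequency_pos k)
  rw [intervalIntegral.integral_add (Continuous.intervalIntegrable (by fun_prop) _ _)
    (Continuous.intervalIntegrable (by fun_prop) _ _), integral_one_sub_abs_shearSlope hv,
    integral_one_sub_abs_shearSlope hc] at hmean
  have hdiv {z : ℝ} (hz : 0 < z) : 2 * z / π ≤ z := by
    rw [div_le_iff₀ pi_pos]
    nlinarith [pi_gt_three]
  refine le_of_sq_le_sq ?_ (by positivity)
  calc l2norm (fun x => 1 - dualWeight hd k v x * dualWeight hd k (cornerWidth k) x) ^ 2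
      = boxIntegral fun x =>
          (1 - dualWeight hd k v x * dualWeight hd k (cornerWidth k) x) ^ 2 := l2norm_sq _
    _ ≤ 2 * v / π + 2 * cornerWidth k / π := by
        rw [← hmean]
        unfold dualWeight
        exact boxIntegral_mono (by fun_prop) (by fun_prop) fun x =>
          one_sub_shearSlope_mul_sq_le (cos_nonneg_of_mem_Ioo hv) (cos_nonneg_of_mem_Ioo hc) _
    _ ≤ √v ^ 2 + √(cornerWidth k) ^ 2 := by
        rw [Real.sq_sqrt hv.1.le, Real.sq_sqrt hc.1.le]
        exact add_le_add (hdiv hv.1) (hdiv hc.1)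
    _ ≤ (√(cornerWidth k) + √v) ^ 2 := by nlinarith [sqrt_nonneg v, sqrt_nonneg (cornerWidth k)]

lemma transport_selfSimilarCascade_succ (hd : 2 ≤ d) (w : (Fin d → ℝ) → ℝ) (k : ℕ) :
    (selfSimilarCascade hd).transport w (k + 1) = shearTransport (stageProfile hd k)
      (shearAxis hd k) (amplitude k) ((selfSimilarCascade hd).transport w k) :=
  congrArg (fun A => shearTransport _ _ A _) (displacement_selfSimilarCascade_T_succ hd k)

section GradientBound

variable (hd) (hw : ContDiff ℝ 1 w) (hwp : SpacePeriodic w) (hH : ∀ l, l2norm (pd w l) ≤ H)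
include hw hwp hH

lemma l2norm_pd_transport_le : ∀ k l,
    l2norm (pd ((selfSimilarCascade hd).transport w k) l) ≤ H * gradScale k
  | 0, l => (hH l).trans
      (le_mul_of_one_le_right ((l2norm_nonneg _).trans (hH l)) (one_le_gradScale 0))
  | k + 1, l => by
    rw [transport_selfSimilarCascade_succ]
    refine (l2norm_pd_shearTransport_le (contDiff_stageProfile hd k)
      ((selfSimilarCascade hd).periodic_F k) ((selfSimilarCascade hd).constAlong_F k)
      (abs_pd_stageProfile_le hd k) ((selfSimilarCascade hd).contDiff_transport hw k)
      ((selfSimilarCascade hd).periodic_transport hwp k)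
      (l2norm_pd_transport_le k) _ l).trans_eq ?_
    rw [abs_of_pos (amplitude_pos k), amplitude_mul_frequency, gradScale_succ, mul_assoc]

lemma l2norm_pd_transportUpTo_le {k : ℕ} {t : ℝ} (ht : stageTime k ≤ t) (l : Fin d) :
    l2norm (pd ((selfSimilarCascade hd).transportUpTo w k t) l) ≤ H * gradScale (k + 1) := by
  have hH0 : 0 ≤ H := (l2norm_nonneg _).trans (hH l)
  have hX := gradScale_pos k
  refine (l2norm_pd_shearTransport_le (contDiff_stageProfile hd k)
    ((selfSimilarCascade hd).periodic_F k) ((selfSimilarCascade hd).constAlong_F k)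
    (abs_pd_stageProfile_le hd k) ((selfSimilarCascade hd).contDiff_transport hw k)
    ((selfSimilarCascade hd).periodic_transport hwp k)
    (l2norm_pd_transport_le hd hw hwp hH k) _ l).trans ?_
  rw [gradScale_succ, ← mul_assoc, ← amplitude_mul_frequency]
  gcongr
  exact abs_displacement_selfSimilarCascade_le hd ht

end GradientBound

/-- The test function for stage `k + 1` obtained from the test function `a` for stage `k`. -/
def dualStep (hd : 2 ≤ d) (k : ℕ) (v : ℝ) (a : (Fin d → ℝ) → ℝ) (x : Fin d → ℝ) : ℝ :=
  dualWeight hd k v x * shearTransport (stageProfile hd k) (shearAxis hd k) (amplitude k) a x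

protected lemma IsTestFunction.dualStep (hv : v ∈ Set.Ioo 0 (π / 2))
    (ha : IsTestFunction M K a) :
    IsTestFunction M (K * (1 + strain k) + M * (π ^ 2 / v * frequency k)) (dualStep hd k v a) := by
  have hshear := ha.shearTransport (contDiff_stageProfile hd k)
    ((selfSimilarCascade hd).periodic_F k) ((selfSimilarCascade hd).constAlong_F k)
    (abs_pd_stageProfile_le hd k) (amplitude k)
  rw [abs_of_pos (amplitude_pos k), amplitude_mul_frequency] at hshear
  exact hshear.mul_left (contDiff_dualWeight hv) (spacePeriodic_coord (periodic_shearSlope v) _ _)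
    (fun _ => abs_shearSlope_le_one _ _) (abs_pd_dualWeight_le hv)

lemma IsTestFunction.le_abs_derivPairing_transport_succ (hv : v ∈ Set.Ioo 0 (π / 2))
    (ha : IsTestFunction M K a) (hw : ContDiff ℝ 1 w) (hwp : SpacePeriodic w)
    (hH : ∀ l, l2norm (pd w l) ≤ H) :
    (1 + strain k) * (|derivPairing (shearAxis hd k) a ((selfSimilarCascade hd).transport w k)|
        - M * (H * gradScale k) * (2 / (1 + strain k) + √(cornerWidth k) + √v))
      ≤ |derivPairing (shearAxis hd (k + 1)) (dualStep hd k v a)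
          ((selfSimilarCascade hd).transport w (k + 1))| := by
  have hstrain := strain_pos k
  have hM := ha.nonneg_bound
  have hgrad := l2norm_pd_transport_le hd hw hwp hH k
  have hG : 0 ≤ H * gradScale k := (l2norm_nonneg _).trans (hgrad (shearAxis hd k))
  have hWk := (selfSimilarCascade hd).contDiff_transport hw k
  rw [transport_selfSimilarCascade_succ]
  refine le_trans ?_ (ha.le_abs_derivPairing_shearTransport (i := shearAxis hd k)
    (contDiff_stageProfile hd k)
    ((selfSimilarCascade hd).periodic_F k) ((selfSimilarCascade hd).constAlong_F k) hstrain.le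
    (contDiff_dualWeight hv).continuous (contDiff_dualWeight (cornerWidth_mem_Ioo k)).continuous
    (fun _ => abs_shearSlope_le_one _ _)
    (fun x => by rw [pd_stageProfile, ← mul_assoc, amplitude_mul_frequency])
    (l2norm_one_sub_dualWeight_mul_le hd k hv) hWk
    ((selfSimilarCascade hd).periodic_transport hwp k) hgrad)
  have hpair := ha.abs_derivPairing_le hWk (hgrad (shearAxis hd k))
  have hloss : 0 ≤ M * (H * gradScale k) * (√(cornerWidth k) + √v) := by positivity
  have hcancel : (1 + strain k) * (2 / (1 + strain k)) = 2 := by field_simp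
  linear_combination hpair + hloss - M * (H * gradScale k) * hcancel

end SelfSimilarGrowth

section DualChain

variable {d : ℕ} {hd : 2 ≤ d} {H M K Q ω : ℝ} {w a : (Fin d → ℝ) → ℝ}

/-- The corner widths of the successive test functions. They decay slowly enough to keep the test
functions no rougher than the transported function, and fast enough to make the losses summable. -/
def dualWidth (ω : ℝ) (k : ℕ) : ℝ := (ω * (1 / 2) ^ k) ^ 2

lemma dualWidth_mem_Ioo (hω : ω ∈ Set.Ioc (0 : ℝ) 1) (k : ℕ) :
    dualWidth ω k ∈ Set.Ioo 0 (π / 2) := by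
  have hω0 := hω.1
  refine ⟨by unfold dualWidth; positivity, ?_⟩
  calc dualWidth ω k ≤ 1 := pow_le_one₀ (by positivity)
        (mul_le_one₀ hω.2 (by positivity) (pow_le_one₀ (by norm_num) (by norm_num)))
    _ < π / 2 := by linarith [pi_gt_three]

lemma sqrt_dualWidth (hω : 0 ≤ ω) (k : ℕ) : √(dualWidth ω k) = ω * (1 / 2) ^ k :=
  Real.sqrt_sq (by positivity)

lemma frequency_div_dualWidth_le (hω : 0 < ω) (k : ℕ) :
    frequency k / dualWidth ω k ≤ (1 / 4) ^ k * gradScale (k + 1) / ω ^ 2 := by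
  have hX := gradScale_pos k
  have hfreq : 16 ^ k * frequency k ≤ gradScale (k + 1) := by
    calc 16 ^ k * (frequency k : ℝ) ≤ amplitude k * gradScale k * frequency k := by
          gcongr
          exact sixteen_pow_le_amplitude_mul_gradScale k
      _ ≤ gradScale (k + 1) := by
          rw [gradScale_succ, ← amplitude_mul_frequency]
          linarith
  calc frequency k / dualWidth ω k = (1 / 4) ^ k * (16 ^ k * frequency k) / ω ^ 2 := by
        rw [dualWidth, show (16 : ℝ) ^ k = 4 ^ k * 2 ^ k * 2 ^ k by
          rw [← mul_pow, ← mul_pow]; norm_num, one_div_pow, one_div_pow]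
        field_simp
    _ ≤ (1 / 4) ^ k * gradScale (k + 1) / ω ^ 2 := by gcongr

lemma dualStep_gradient_le {n m : ℕ} {P : ℝ} (hω : 0 < ω) (hM : 0 ≤ M)
    (hP : P = M * π ^ 2 / ω ^ 2) :
    (H + 2 * P * (1 - (1 / 2) ^ m)) * gradScale (n + m) * (1 + strain (n + m))
        + M * (π ^ 2 / dualWidth ω (n + m) * frequency (n + m))
      ≤ (H + 2 * P * (1 - (1 / 2) ^ (m + 1))) * gradScale (n + m + 1) := by
  have hX := gradScale_pos (n + m + 1)
  have hquarter : (1 / 4 : ℝ) ^ (n + m) ≤ (1 / 2) ^ m :=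
    (pow_le_pow_of_le_one (by norm_num) (by norm_num) (m.le_add_left n)).trans
      (pow_le_pow_left₀ (by norm_num) (by norm_num) m)
  have hnew : M * (π ^ 2 / dualWidth ω (n + m) * frequency (n + m))
      ≤ P * (1 / 2) ^ m * gradScale (n + m + 1) := by
    calc M * (π ^ 2 / dualWidth ω (n + m) * frequency (n + m))
        = M * π ^ 2 * (frequency (n + m) / dualWidth ω (n + m)) := by ring
      _ ≤ M * π ^ 2 * ((1 / 2) ^ m * gradScale (n + m + 1) / ω ^ 2) := by
          refine mul_le_mul_of_nonneg_left ?_ (by positivity)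
          exact (frequency_div_dualWidth_le hω (n + m)).trans (by gcongr)
      _ = P * (1 / 2) ^ m * gradScale (n + m + 1) := by rw [hP]; ring
  rw [mul_assoc, ← gradScale_succ]
  linear_combination hnew + 2 * P * gradScale (n + m + 1) * pow_succ (1 / 2 : ℝ) m

lemma dualStep_loss_le {n m : ℕ} (hM : 0 ≤ M) (hH : 0 ≤ H)
    (hn : 32 * (M * H * (1 / 8) ^ n) ≤ Q) (hωn : 8 * (M * H * ω * gradScale n) ≤ Q) :
    M * H * (2 / (1 + strain (n + m)) + √(cornerWidth (n + m)) + ω * (1 / 2) ^ (n + m))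
      ≤ Q / (2 * gradScale n) * (1 / 2) ^ (m + 1) := by
  have hX := gradScale_pos n
  have hMH : 0 ≤ M * H := mul_nonneg hM hH
  have hhalf (r : ℕ) : (1 / 2 : ℝ) ^ r ≤ 1 := pow_le_one₀ (by norm_num) (by norm_num)
  have hQ : 0 ≤ Q := (by positivity : 0 ≤ 32 * (M * H * (1 / 8) ^ n)).trans hn
  have hcorner : M * H * (gradScale n * (2 / (1 + strain (n + m)) + √(cornerWidth (n + m))))
      ≤ 3 / 32 * Q * (1 / 2) ^ m := by
    have hpow : (1 / 8 : ℝ) ^ m ≤ (1 / 2) ^ m := by gcongr; norm_num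
    calc M * H * (gradScale n * (2 / (1 + strain (n + m)) + √(cornerWidth (n + m))))
        ≤ M * H * (3 * (1 / 8) ^ (n + m)) := by
          exact mul_le_mul_of_nonneg_left (gradScale_mul_loss_le (n.le_add_right m)) hMH
      _ = 3 / 32 * (32 * (M * H * (1 / 8) ^ n)) * (1 / 8) ^ m := by rw [pow_add]; ring
      _ ≤ 3 / 32 * Q * (1 / 2) ^ m := by gcongr
  have hwidth : M * H * (gradScale n * (ω * (1 / 2) ^ (n + m))) ≤ 1 / 8 * Q * (1 / 2) ^ m := by
    calc M * H * (gradScale n * (ω * (1 / 2) ^ (n + m)))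
        = 1 / 8 * (8 * (M * H * ω * gradScale n)) * (1 / 2) ^ m * (1 / 2) ^ n := by
          rw [pow_add]; ring
      _ ≤ 1 / 8 * Q * (1 / 2) ^ m * 1 := by gcongr; exact hhalf n
      _ = 1 / 8 * Q * (1 / 2) ^ m := mul_one _
  have hQm : 0 ≤ Q * (1 / 2) ^ m := by positivity
  rw [div_mul_eq_mul_div, le_div_iff₀ (by positivity), pow_succ]
  linarith

/- The invariants of the induction: up to constants the test function oscillates no faster than the
transported function, and the pairing keeps at least half of the initial ratio to `gradScale`. -/
lemma exists_isTestFunction_le_abs_derivPairing_geometric {n : ℕ} {P : ℝ}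
    (hω : ω ∈ Set.Ioc (0 : ℝ) 1) (hP : P = M * π ^ 2 / ω ^ 2)
    (hw : ContDiff ℝ 1 w) (hwp : SpacePeriodic w) (hH : ∀ l, l2norm (pd w l) ≤ H)
    (ha : IsTestFunction M (H * gradScale n) a)
    (hQ : Q ≤ |derivPairing (shearAxis hd n) a ((selfSimilarCascade hd).transport w n)|)
    (hn : 32 * (M * H * (1 / 8) ^ n) ≤ Q) (hωn : 8 * (M * H * ω * gradScale n) ≤ Q) (m : ℕ) :
    ∃ b, IsTestFunction M ((H + 2 * P * (1 - (1 / 2) ^ m)) * gradScale (n + m)) b ∧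
      Q / (2 * gradScale n) * (1 + (1 / 2) ^ m) * gradScale (n + m)
        ≤ |derivPairing (shearAxis hd (n + m)) b
            ((selfSimilarCascade hd).transport w (n + m))| := by
  have hH0 : 0 ≤ H := (l2norm_nonneg _).trans (hH (shearAxis hd 0))
  induction m with
  | zero =>
    have hX := gradScale_pos n
    refine ⟨a, by simpa using ha, le_trans (le_of_eq ?_) hQ⟩
    rw [add_zero, pow_zero]
    field_simp
    ring
  | succ m ih =>
    obtain ⟨b, hb, hpair⟩ := ih
    have hv := dualWidth_mem_Ioo hω (n + m)
    have hstrain := strain_pos (n + m)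
    have hX := gradScale_pos (n + m)
    refine ⟨dualStep hd (n + m) (dualWidth ω (n + m)) b,
      (hb.dualStep hv).mono (dualStep_gradient_le hω.1 ha.nonneg_bound hP),
      le_trans ?_ (hb.le_abs_derivPairing_transport_succ (hd := hd) (k := n + m) hv hw hwp hH)⟩
    rw [sqrt_dualWidth hω.1.le]
    calc Q / (2 * gradScale n) * (1 + (1 / 2) ^ (m + 1)) * gradScale (n + (m + 1))
        = (1 + strain (n + m)) * (Q / (2 * gradScale n) * (1 + (1 / 2) ^ m) * gradScale (n + m)
            - Q / (2 * gradScale n) * (1 / 2) ^ (m + 1) * gradScale (n + m)) := by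
          rw [← add_assoc, gradScale_succ, pow_succ]
          ring
      _ ≤ (1 + strain (n + m)) * (|derivPairing (shearAxis hd (n + m)) b
              ((selfSimilarCascade hd).transport w (n + m))|
            - M * H * (2 / (1 + strain (n + m)) + √(cornerWidth (n + m)) + ω * (1 / 2) ^ (n + m))
              * gradScale (n + m)) := by
          refine mul_le_mul_of_nonneg_left (sub_le_sub hpair ?_) (by positivity)
          exact mul_le_mul_of_nonneg_right (dualStep_loss_le ha.nonneg_bound hH0 hn hωn) hX.le
      _ = _ := by ring

lemma exists_isTestFunction_le_abs_derivPairing {n : ℕ} (hω : ω ∈ Set.Ioc (0 : ℝ) 1)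
    (hw : ContDiff ℝ 1 w) (hwp : SpacePeriodic w) (hH : ∀ l, l2norm (pd w l) ≤ H)
    (ha : IsTestFunction M (H * gradScale n) a)
    (hQ : Q ≤ |derivPairing (shearAxis hd n) a ((selfSimilarCascade hd).transport w n)|)
    (hn : 32 * (M * H * (1 / 8) ^ n) ≤ Q) (hωn : 8 * (M * H * ω * gradScale n) ≤ Q) (m : ℕ) :
    ∃ b, IsTestFunction M ((H + 2 * (M * π ^ 2 / ω ^ 2)) * gradScale (n + m)) b ∧
      Q / (2 * gradScale n) * gradScale (n + m)
        ≤ |derivPairing (shearAxis hd (n + m)) b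
            ((selfSimilarCascade hd).transport w (n + m))| := by
  obtain ⟨b, hb, hpair⟩ :=
    exists_isTestFunction_le_abs_derivPairing_geometric hω rfl hw hwp hH ha hQ hn hωn m
  have hM := ha.nonneg_bound
  have hH0 : 0 ≤ H := (l2norm_nonneg _).trans (hH (shearAxis hd 0))
  have hX := gradScale_pos n
  have hXm := gradScale_pos (n + m)
  have hQ0 : 0 ≤ Q := (by positivity : 0 ≤ 32 * (M * H * (1 / 8) ^ n)).trans hn
  have hhalf : (0 : ℝ) ≤ (1 / 2) ^ m := by positivity
  refine ⟨b, hb.mono ?_, le_trans ?_ hpair⟩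
  · refine mul_le_mul_of_nonneg_right (add_le_add_right ?_ H) hXm.le
    exact mul_le_of_le_one_right (by positivity) (by linarith)
  · gcongr
    exact le_mul_of_one_le_right (by positivity) (by linarith)

end DualChain

/-! ### Oscillation along coordinate lines -/

section LineAverageDerivative

variable {d : ℕ} {W : (Fin d → ℝ) → ℝ} {c : ℝ → ℝ}

lemma hasFDerivAt_lineAverage (hc : Continuous c) (i : Fin d) (hW : ContDiff ℝ 1 W)
    (x : Fin d → ℝ) :
    HasFDerivAt (lineAverage c i W)
      (∫ r in (0 : ℝ)..1, c r • fderiv ℝ W (x + r • basisVec i)) x := by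
  have hWc := hW.continuous
  obtain ⟨K, hK⟩ : ∃ K, ∀ p ∈ Metric.closedBall x 1 ×ˢ Set.Icc (0 : ℝ) 1,
      ‖c p.2 • fderiv ℝ W (p.1 + p.2 • basisVec i)‖ ≤ K :=
    ((isCompact_closedBall x 1).prod isCompact_Icc).exists_bound_of_continuousOn
      (Continuous.continuousOn (by fun_prop))
  refine intervalIntegral.hasFDerivAt_integral_of_dominated_of_fderiv_le
    (F' := fun x r => c r • fderiv ℝ W (x + r • basisVec i)) (bound := fun _ => K)
    (Metric.closedBall_mem_nhds x one_pos)
    (Eventually.of_forall fun y => Continuous.aestronglyMeasurable (by fun_prop))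
    (Continuous.intervalIntegrable (by fun_prop) _ _)
    (Continuous.aestronglyMeasurable (by fun_prop))
    (Eventually.of_forall fun r hr y hy => hK (y, r) ⟨hy, ?_⟩) (by simp)
    (Eventually.of_forall fun r _ y _ => ?_)
  · rw [Set.uIoc_of_le zero_le_one] at hr
    exact Set.Ioc_subset_Icc_self hr
  · have hadd := (hasFDerivAt_id (𝕜 := ℝ) y).add_const (r • basisVec i)
    exact ((hW.differentiable one_ne_zero _).hasFDerivAt.comp y hadd).const_smul (c r)

lemma contDiff_lineAverage (hc : Continuous c) (i : Fin d) (hW : ContDiff ℝ 1 W) :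
    ContDiff ℝ 1 (lineAverage c i W) := by
  refine contDiff_one_iff_fderiv.2
    ⟨fun x => (hasFDerivAt_lineAverage hc i hW x).differentiableAt, ?_⟩
  rw [funext fun x => (hasFDerivAt_lineAverage hc i hW x).fderiv]
  exact intervalIntegral.continuous_parametric_intervalIntegral_of_continuous' (by fun_prop) 0 1

lemma pd_lineAverage (hc : Continuous c) (i : Fin d) (hW : ContDiff ℝ 1 W) (l : Fin d) :
    pd (lineAverage c i W) l = lineAverage c i (pd W l) := by
  ext x
  rw [pd, (hasFDerivAt_lineAverage hc i hW x).fderiv, ContinuousLinearMap.intervalIntegral_apply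
    (Continuous.intervalIntegrable (by fun_prop) _ _)]
  rfl

end LineAverageDerivative

section LineOscillation

variable {d : ℕ} {f g W : (Fin d → ℝ) → ℝ}

/-- The `L²(T^d)` distance of `f` to its unweighted average along the coordinate direction `i`. -/
def lineOscillation (i : Fin d) (f : (Fin d → ℝ) → ℝ) : ℝ :=
  l2norm fun x => f x - lineAverage 1 i f x

lemma lineAverage_one_apply (i : Fin d) (f : (Fin d → ℝ) → ℝ) (x : Fin d → ℝ) :
    lineAverage 1 i f x = ∫ r in (0 : ℝ)..1, f (x + r • basisVec i) := by
  simp only [lineAverage, Pi.one_apply, one_mul]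

lemma constAlong_lineAverage_one (hf : SpacePeriodic f) (i : Fin d) :
    ConstAlong i (lineAverage 1 i f) := fun x c => by
  simp only [lineAverage_one_apply]
  rw [← hf.lineIntegral_add i x c]
  simp only [add_smul, add_assoc, add_comm (c • basisVec i)]

lemma ConstAlong.lineAverage {j : Fin d} (hf : ConstAlong j f) (c : ℝ → ℝ) (i : Fin d) :
    ConstAlong j (lineAverage c i f) := fun x r => by
  simp only [_root_.lineAverage, add_right_comm x (r • basisVec j), hf _ r]

lemma lineAverage_sub (i : Fin d) (hf : Continuous f) (hg : Continuous g) :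
    lineAverage 1 i (fun x => f x - g x) = fun x => lineAverage 1 i f x - lineAverage 1 i g x := by
  ext x
  simp only [lineAverage_one_apply]
  exact intervalIntegral.integral_sub (Continuous.intervalIntegrable (by fun_prop) _ _)
    (Continuous.intervalIntegrable (by fun_prop) _ _)

lemma boxIntegral_lineAverage_one (i : Fin d) (hf : Continuous f) (hp : SpacePeriodic f) :
    boxIntegral (lineAverage 1 i f) = boxIntegral f := by
  simpa only [← lineAverage_one_apply] using boxIntegral_lineIntegral i hf hp

lemma l2norm_lineAverage_one_le (i : Fin d) (hf : Continuous f) (hp : SpacePeriodic f) :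
    l2norm (lineAverage 1 i f) ≤ l2norm f :=
  l2norm_lineAverage_le continuous_one i hf hp (by simp)

lemma boxIntegral_lineAverage_mul_sub (i : Fin d) (hf : Continuous f) (hp : SpacePeriodic f) :
    boxIntegral (fun x => lineAverage 1 i f x * (f x - lineAverage 1 i f x)) = 0 := by
  have hcont := continuous_lineAverage continuous_one i hf
  have hper := hp.lineAverage 1 i
  refine boxIntegral_eq_zero_of_lineIntegral i (by fun_prop) (hper.mul (hp.sub hper)) fun x => ?_
  simp_rw [constAlong_lineAverage_one hp i x]
  rw [intervalIntegral.integral_const_mul, intervalIntegral.integral_sub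
    (Continuous.intervalIntegrable (by fun_prop) _ _) (by simp), ← lineAverage_one_apply]
  simp

lemma boxIntegral_mul_sub_lineAverage (i : Fin d) (hf : Continuous f) (hp : SpacePeriodic f) :
    boxIntegral (fun x => f x * (f x - lineAverage 1 i f x)) = lineOscillation i f ^ 2 := by
  have hcont := continuous_lineAverage continuous_one i hf
  rw [lineOscillation, l2norm_sq, ← sub_eq_zero]
  refine (boxIntegral_sub (by fun_prop) (by fun_prop)).symm.trans ?_
  rw [← boxIntegral_lineAverage_mul_sub i hf hp]
  congr 1
  ext x
  ring

lemma lineOscillation_le (i : Fin d) (hf : Continuous f) (hp : SpacePeriodic f) :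
    lineOscillation i f ≤ 2 * l2norm f := by
  have hsub := l2norm_sub_le hf (continuous_lineAverage continuous_one i hf)
  unfold lineOscillation
  linarith [l2norm_lineAverage_one_le i hf hp]

lemma lineOscillation_le_add (i : Fin d) (hf : Continuous f) (hp : SpacePeriodic f)
    (hg : Continuous g) (hgp : SpacePeriodic g) :
    lineOscillation i f ≤ lineOscillation i g + 2 * l2norm (fun x => f x - g x) := by
  have hfg : Continuous fun x => f x - g x := by fun_prop
  have hgc := continuous_lineAverage continuous_one i hg
  calc lineOscillation i f
      = l2norm (fun x => (g x - lineAverage 1 i g x)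
          + ((f x - g x) - lineAverage 1 i (fun x => f x - g x) x)) := by
        rw [lineOscillation, lineAverage_sub i hf hg]
        congr 1
        ext x
        ring
    _ ≤ lineOscillation i g + lineOscillation i fun x => f x - g x :=
        l2norm_add_le (by fun_prop) (hfg.sub (continuous_lineAverage continuous_one i hfg))
    _ ≤ lineOscillation i g + 2 * l2norm (fun x => f x - g x) := by
        gcongr
        exact lineOscillation_le i hfg (hp.sub hgp)

lemma l2norm_shear_sub_le (i : Fin d) (hf : Continuous f) (hp : SpacePeriodic f)
    (hg : Continuous g) (hgp : SpacePeriodic g) (hgi : ConstAlong i g) :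
    l2norm (fun x => f (x + g x • basisVec i) - f x) ≤ 2 * lineOscillation i f := by
  have havg := continuous_lineAverage continuous_one i hf
  have hconst := constAlong_lineAverage_one hp i
  calc l2norm (fun x => f (x + g x • basisVec i) - f x)
      = l2norm (fun x => (f (x + g x • basisVec i) - lineAverage 1 i f (x + g x • basisVec i))
          - (f x - lineAverage 1 i f x)) := by
        congr 1
        ext x
        rw [hconst]
        ring
    _ ≤ l2norm (fun x => f (x + g x • basisVec i) - lineAverage 1 i f (x + g x • basisVec i))
          + lineOscillation i f := l2norm_sub_le (by fun_prop) (by fun_prop)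
    _ = 2 * lineOscillation i f := by
        rw [l2norm_shear i (f := fun x => f x - lineAverage 1 i f x) (by fun_prop)
          (hp.sub (hp.lineAverage 1 i)) hg hgp hgi, lineOscillation]
        ring

lemma exists_constAlong_l2norm_sub_le (hf : Continuous f) (hp : SpacePeriodic f)
    (s : Finset (Fin d)) :
    ∃ h, Continuous h ∧ SpacePeriodic h ∧ (∀ i ∈ s, ConstAlong i h) ∧
      boxIntegral h = boxIntegral f ∧
      l2norm (fun x => f x - h x) ≤ ∑ i ∈ s, lineOscillation i f := by
  induction s using Finset.induction_on with
  | empty => exact ⟨f, hf, hp, by simp, rfl, by simp [l2norm_const]⟩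
  | insert i s hi ih =>
    obtain ⟨h, hh, hhp, hconst, hmean, hdist⟩ := ih
    have hfc := continuous_lineAverage continuous_one i hf
    have hhc := continuous_lineAverage continuous_one i hh
    have hfh : Continuous fun x => f x - h x := by fun_prop
    refine ⟨lineAverage 1 i h, hhc, hhp.lineAverage 1 i, fun j hj => ?_,
      (boxIntegral_lineAverage_one i hh hhp).trans hmean, ?_⟩
    · rcases Finset.mem_insert.1 hj with rfl | hj
      · exact constAlong_lineAverage_one hhp j
      · exact (hconst j hj).lineAverage 1 i
    rw [Finset.sum_insert hi]
    calc l2norm (fun x => f x - lineAverage 1 i h x)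
        = l2norm (fun x => (f x - lineAverage 1 i f x)
            + lineAverage 1 i (fun x => f x - h x) x) := by
          rw [lineAverage_sub i hf hh]
          congr 1
          ext x
          ring
      _ ≤ lineOscillation i f + l2norm (lineAverage 1 i fun x => f x - h x) :=
          l2norm_add_le (by fun_prop) (continuous_lineAverage continuous_one i hfh)
      _ ≤ lineOscillation i f + ∑ j ∈ s, lineOscillation j f := by
          gcongr
          exact (l2norm_lineAverage_one_le i hfh (hp.sub hhp)).trans hdist

lemma eq_of_forall_constAlong (hf : ∀ i, ConstAlong i f) (x : Fin d → ℝ) : f x = f 0 := by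
  have hsum (s : Finset (Fin d)) : f (∑ i ∈ s, x i • basisVec i) = f 0 := by
    induction s using Finset.induction_on with
    | empty => simp
    | insert i s hi ih => rw [Finset.sum_insert hi, add_comm, hf i, ih]
  rw [← hsum Finset.univ]
  congr 1
  ext j
  simp [Finset.sum_apply, Pi.single_apply]

lemma l2norm_le_sum_lineOscillation (hf : Continuous f) (hp : SpacePeriodic f)
    (hmean : boxIntegral f = 0) : l2norm f ≤ ∑ i, lineOscillation i f := by
  obtain ⟨h, -, -, hconst, hint, hdist⟩ := exists_constAlong_l2norm_sub_le hf hp Finset.univ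
  have hh : h = fun _ => h 0 :=
    funext fun x => eq_of_forall_constAlong (fun i => hconst i (Finset.mem_univ i)) x
  rw [hh, boxIntegral_const, hmean] at hint
  rw [hh, hint] at hdist
  simpa only [sub_zero] using hdist

end LineOscillation

section DualStart

variable {d : ℕ} {W : (Fin d → ℝ) → ℝ} {M G : ℝ}

/- The weight `r - 1/2` is a primitive of the constant `1` whose boundary terms reproduce `W`. -/
lemma lineAverage_centered_pd (i : Fin d) (hW : ContDiff ℝ 1 W) (hp : SpacePeriodic W) :
    lineAverage (fun r => r - 1 / 2) i (pd W i) = fun x => W x - lineAverage 1 i W x := by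
  have hpd := continuous_pd hW i
  ext x
  have hend : W (x + (1 : ℝ) • basisVec i) = W (x + (0 : ℝ) • basisVec i) :=
    (hp.periodic_line i x).eq
  have hparts := intervalIntegral.integral_mul_deriv_eq_deriv_mul (a := (0 : ℝ)) (b := 1)
    (u := fun r => r - 1 / 2) (u' := fun _ => 1) (fun r _ => (hasDerivAt_id r).sub_const _)
    (fun r _ => hasDerivAt_line (hW.differentiable one_ne_zero) i x r) (by simp)
    (Continuous.intervalIntegrable (by fun_prop) _ _)
  simp only [one_mul, ← lineAverage_one_apply, hend, zero_smul, add_zero] at hparts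
  rw [lineAverage, hparts]
  ring

lemma exists_isTestFunction_abs_derivPairing_eq (i : Fin d) (hW : ContDiff ℝ 1 W)
    (hp : SpacePeriodic W) (hM : ∀ x, |W x| ≤ M) (hG : ∀ l, l2norm (pd W l) ≤ G) :
    ∃ b, IsTestFunction M G b ∧ |derivPairing i b W| = lineOscillation i W ^ 2 := by
  have hc : Continuous fun r : ℝ => r - 1 / 2 := by fun_prop
  have hWc := hW.continuous
  have hc1 : ∀ r ∈ Set.Icc (0 : ℝ) 1, |r - 1 / 2| ≤ 1 := fun r hr =>
    abs_le.2 ⟨by linarith [hr.1], by linarith [hr.2]⟩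
  have hb := contDiff_lineAverage hc i hW
  refine ⟨lineAverage (fun r => r - 1 / 2) i W,
    ⟨hb, hp.lineAverage _ i, fun x => ?_, fun l => ?_⟩, ?_⟩
  · have hle := intervalIntegral.norm_integral_le_of_norm_le_const (a := (0 : ℝ)) (b := 1) (C := M)
      (f := fun r => (r - 1 / 2) * W (x + r • basisVec i)) fun r hr => by
        rw [Set.uIoc_of_le zero_le_one] at hr
        rw [norm_mul, Real.norm_eq_abs, Real.norm_eq_abs]
        exact (mul_le_of_le_one_left (abs_nonneg _) (hc1 r (Set.Ioc_subset_Icc_self hr))).trans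
          (hM _)
    simpa [lineAverage] using hle
  · rw [pd_lineAverage hc i hW]
    exact (l2norm_lineAverage_le hc i (continuous_pd hW l) (hp.pd l) hc1).trans (hG l)
  · rw [derivPairing, boxIntegral_mul_pd hb hW (hp.lineAverage _ i) hp, abs_neg,
      pd_lineAverage hc i hW, lineAverage_centered_pd i hW hp,
      boxIntegral_mul_sub_lineAverage i hWc hp, abs_of_nonneg (sq_nonneg _)]

end DualStart

/-! ### Mollification of functions with a weak gradient -/

section Mollification

variable {d : ℕ} {f h ψ : (Fin d → ℝ) → ℝ} {g : (Fin d → ℝ) → Fin d → ℝ}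

lemma abs_boxIntegral_mul_le_of_integrable
    (hg : IntegrableOn (fun x => ∑ i, g x i ^ 2) (box d)) (hψ : Continuous ψ) (i : Fin d) :
    |boxIntegral fun x => g x i * ψ x|
      ≤ √(boxIntegral fun x => ∑ i, g x i ^ 2) * l2norm ψ := by
  have hnonneg (x : Fin d → ℝ) : 0 ≤ ∑ i, g x i ^ 2 := Finset.sum_nonneg fun _ _ => sq_nonneg _
  have hlength : MemLp (fun x => √(∑ i, g x i ^ 2)) 2 (volume.restrict (box d)) := by
    rw [memLp_two_iff_integrable_sq hg.aestronglyMeasurable.aemeasurable.sqrt.aestronglyMeasurable]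
    simp only [Real.sq_sqrt (hnonneg _)]
    exact hg
  have hψ2 : MemLp (fun x => |ψ x|) 2 (volume.restrict (box d)) := by
    rw [memLp_two_iff_integrable_sq hψ.abs.aestronglyMeasurable]
    exact integrableOn_box (by fun_prop)
  have hholder : ∫ x in box d, √(∑ i, g x i ^ 2) * |ψ x|
      ≤ √(boxIntegral fun x => ∑ i, g x i ^ 2) * l2norm ψ := by
    have hmul := integral_mul_le_Lp_mul_Lq_of_nonneg (μ := volume.restrict (box d))
      Real.HolderConjugate.two_two (f := fun x => √(∑ i, g x i ^ 2)) (g := fun x => |ψ x|)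
      (Eventually.of_forall fun _ => Real.sqrt_nonneg _)
      (Eventually.of_forall fun _ => abs_nonneg _)
      (by simpa using hlength) (by simpa using hψ2)
    simpa only [Real.rpow_two, Real.sq_sqrt (hnonneg _), sq_abs, ← Real.sqrt_eq_rpow, l2norm, l2sq,
      boxIntegral] using hmul
  refine le_trans ?_ hholder
  rw [boxIntegral, ← Real.norm_eq_abs]
  refine norm_integral_le_of_norm_le (hlength.integrable_mul hψ2)
    (Eventually.of_forall fun x => ?_)
  rw [norm_mul, Real.norm_eq_abs, Real.norm_eq_abs]
  refine mul_le_mul_of_nonneg_right (Real.abs_le_sqrt ?_) (abs_nonneg _)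
  exact Finset.single_le_sum (f := fun i => g x i ^ 2) (fun _ _ => sq_nonneg _) (Finset.mem_univ i)

lemma HasWeakGradient.abs_boxIntegral_mul_pd_le (hfg : HasWeakGradient f g)
    (hg : IntegrableOn (fun x => ∑ i, g x i ^ 2) (box d)) (hψ : ContDiff ℝ (⊤ : ℕ∞) ψ)
    (hp : SpacePeriodic ψ) (i : Fin d) :
    |boxIntegral fun x => f x * pd ψ i x|
      ≤ √(boxIntegral fun x => ∑ i, g x i ^ 2) * l2norm ψ := by
  have hweak := hfg (fun x j => if j = i then ψ x else 0)
    (fun j => by split_ifs; exacts [hψ, contDiff_const])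
    (fun j => by split_ifs; exacts [hp, SpacePeriodic.const 0])
  have hdiv (x : Fin d → ℝ) :
      ∑ j, pd (fun y => if j = i then ψ y else 0) j x = pd ψ i x := by
    rw [Finset.sum_eq_single i (fun j _ hj => by simp [hj, pd]) (by simp)]
    simp
  have hdot (x : Fin d → ℝ) : ∑ j, g x j * (if j = i then ψ x else 0) = g x i * ψ x := by simp
  simp_rw [hdiv, hdot] at hweak
  rw [boxIntegral, hweak, abs_neg]
  exact abs_boxIntegral_mul_le_of_integrable hg hψ.continuous i

lemma SpacePeriodic.uniformContinuous (hp : SpacePeriodic f) (hf : Continuous f) :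
    UniformContinuous f := by
  have hball := (isCompact_closedBall (0 : Fin d → ℝ) 2).uniformContinuousOn_of_continuous
    hf.continuousOn
  rw [Metric.uniformContinuousOn_iff] at hball
  refine Metric.uniformContinuous_iff.2 fun ε hε => ?_
  obtain ⟨δ, hδ, hclose⟩ := hball ε hε
  refine ⟨min δ 1, by positivity, fun x y hxy => ?_⟩
  obtain ⟨y', hy', heq⟩ := exists_mem_box_forall_eq y
  have hshift : f (y + (x - y)) - f y = f (y' + (x - y)) - f y' :=
    heq (fun z => f (z + (x - y)) - f z) ((hp.comp_add_right _).sub hp)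
  rw [add_sub_cancel] at hshift
  have hnorm : ‖y'‖ ≤ 1 := (pi_norm_le_iff_of_nonneg zero_le_one).2 fun i => by
    rw [Real.norm_of_nonneg (hy'.1 i)]
    exact hy'.2 i
  rw [dist_eq_norm] at hxy
  rw [Real.dist_eq, hshift, ← Real.dist_eq]
  refine hclose _ ?_ _ ?_ ?_
  · rw [mem_closedBall_zero_iff]
    linarith [norm_add_le y' (x - y), hxy.trans_le (min_le_right δ 1)]
  · rw [mem_closedBall_zero_iff]
    linarith
  · rw [dist_eq_norm, add_sub_cancel_left]
    exact hxy.trans_le (min_le_left δ 1)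

/-- The mollification of `f` by the normalised bump function `φ`. -/
def mollify (φ : ContDiffBump (0 : Fin d → ℝ)) (f : (Fin d → ℝ) → ℝ) : (Fin d → ℝ) → ℝ :=
  convolution (φ.normed volume) f (ContinuousLinearMap.lsmul ℝ ℝ) volume

variable (φ : ContDiffBump (0 : Fin d → ℝ))

lemma contDiff_mollify (hf : Continuous f) : ContDiff ℝ (⊤ : ℕ∞) (mollify φ f) :=
  φ.hasCompactSupport_normed.contDiff_convolution_left _ φ.contDiff_normed hf.locallyIntegrable

lemma SpacePeriodic.mollify (hp : SpacePeriodic f) : SpacePeriodic (mollify φ f) := fun x k => by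
  simp only [_root_.mollify, convolution_def, add_sub_right_comm x, hp _ k]

lemma abs_boxIntegral_mollify_mul_le (hf : Continuous f) (hp : SpacePeriodic f)
    (hh : Continuous h) (hhp : SpacePeriodic h) {C : ℝ}
    (hC : ∀ y, |boxIntegral fun x => f (x - y) * h x| ≤ C) :
    |boxIntegral fun x => mollify φ f x * h x| ≤ C := by
  obtain ⟨A, -, hA⟩ := hp.exists_abs_le hf
  obtain ⟨B, -, hB⟩ := hhp.exists_abs_le hh
  have : IsFiniteMeasure (volume.restrict (box d)) :=
    ⟨by simpa using (isCompact_box d).measure_lt_top⟩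
  have hint : Integrable (fun p : (Fin d → ℝ) × (Fin d → ℝ) =>
      φ.normed volume p.2 * (f (p.1 - p.2) * h p.1)) ((volume.restrict (box d)).prod volume) :=
    (φ.integrable_normed.comp_snd (volume.restrict (box d))).mul_bdd (c := A * B)
      (Continuous.aestronglyMeasurable (by fun_prop)) (Eventually.of_forall fun p => by
        rw [norm_mul]
        exact mul_le_mul (hA _) (hB _) (norm_nonneg _) ((abs_nonneg _).trans (hA 0)))
  have hswap : boxIntegral (fun x => mollify φ f x * h x)
      = ∫ y, φ.normed volume y * boxIntegral fun x => f (x - y) * h x := by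
    simp only [boxIntegral, mollify, convolution_def, ContinuousLinearMap.lsmul_apply, smul_eq_mul,
      ← integral_mul_const, ← integral_const_mul, mul_assoc]
    exact integral_integral_swap hint
  rw [hswap]
  calc |∫ y, φ.normed volume y * boxIntegral fun x => f (x - y) * h x|
      ≤ ∫ y, φ.normed volume y * C := by
        rw [← Real.norm_eq_abs]
        refine norm_integral_le_of_norm_le ((φ.integrable_normed (μ := volume)).mul_const C)
          (Eventually.of_forall fun y => ?_)
        rw [norm_mul, Real.norm_of_nonneg (φ.nonneg_normed y)]
        exact mul_le_mul_of_nonneg_left (hC y) (φ.nonneg_normed y)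
    _ = C := by rw [integral_mul_const, φ.integral_normed (μ := volume), one_mul]

lemma HasWeakGradient.l2norm_pd_mollify_le (hfg : HasWeakGradient f g)
    (hg : IntegrableOn (fun x => ∑ i, g x i ^ 2) (box d)) (hf : Continuous f)
    (hp : SpacePeriodic f) (i : Fin d) :
    l2norm (pd (mollify φ f) i) ≤ √(boxIntegral fun x => ∑ i, g x i ^ 2) := by
  set v := pd (mollify φ f) i with hv
  have hsmooth : ContDiff ℝ (⊤ : ℕ∞) v :=
    ((contDiff_mollify φ hf).fderiv_right (m := (⊤ : ℕ∞)) (by norm_cast)).clm_apply contDiff_const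
  have hv1 : ContDiff ℝ 1 v := hsmooth.of_le (by norm_cast)
  have hvp : SpacePeriodic v := (hp.mollify φ).pd i
  have hvd := continuous_pd hv1 i
  have htranslate (y : Fin d → ℝ) : |boxIntegral fun x => f (x - y) * pd v i x|
      ≤ √(boxIntegral fun x => ∑ i, g x i ^ 2) * l2norm v := by
    have hweak := hfg.abs_boxIntegral_mul_pd_le hg (ψ := fun x => v (x + y))
      (hsmooth.comp (contDiff_id.add contDiff_const)) (hvp.comp_add_right y) i
    rw [pd_comp_add_right, l2norm_comp_add_right hvp] at hweak
    rw [← boxIntegral_comp_add_right (f := fun x => f (x - y) * pd v i x)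
      (SpacePeriodic.mul (by simpa only [sub_eq_add_neg] using hp.comp_add_right (-y))
        (hvp.pd i)) y]
    simpa only [add_sub_cancel_right] using hweak
  have hsq : l2norm v ^ 2 = -boxIntegral fun x => mollify φ f x * pd v i x := by
    rw [boxIntegral_mul_pd ((contDiff_mollify φ hf).of_le (by norm_cast)) hv1 (hp.mollify φ) hvp,
      neg_neg, l2norm_sq]
    simp only [l2sq, boxIntegral, sq, hv]
  have hle : l2norm v ^ 2 ≤ √(boxIntegral fun x => ∑ i, g x i ^ 2) * l2norm v :=
    hsq ▸ (neg_le_abs _).trans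
      (abs_boxIntegral_mollify_mul_le φ hf hp hvd (hvp.pd i) htranslate)
  rcases (l2norm_nonneg v).eq_or_lt with hzero | hpos
  · exact hzero ▸ Real.sqrt_nonneg _
  · exact le_of_mul_le_mul_right (by rwa [← sq]) hpos

lemma HasWeakGradient.exists_contDiff_l2norm_pd_le (hfg : HasWeakGradient f g)
    (hg : IntegrableOn (fun x => ∑ i, g x i ^ 2) (box d)) (hf : Continuous f)
    (hp : SpacePeriodic f) {ε : ℝ} (hε : 0 < ε) :
    ∃ w, ContDiff ℝ (⊤ : ℕ∞) w ∧ SpacePeriodic w ∧ (∀ x, |w x - f x| ≤ ε) ∧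
      ∀ i, l2norm (pd w i) ≤ √(boxIntegral fun x => ∑ i, g x i ^ 2) := by
  obtain ⟨δ, hδ, hclose⟩ := Metric.uniformContinuous_iff.1 (hp.uniformContinuous hf) ε hε
  let φ : ContDiffBump (0 : Fin d → ℝ) := ⟨δ / 2, δ, half_pos hδ, half_lt_self hδ⟩
  exact ⟨mollify φ f, contDiff_mollify φ hf, hp.mollify φ,
    fun x => φ.dist_normed_convolution_le hf.aestronglyMeasurable fun y hy => (hclose hy).le,
    hfg.l2norm_pd_mollify_le φ hg hf hp⟩

end Mollification

namespace ShearCascade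

variable {d : ℕ} (S : ShearCascade d) {f g : (Fin d → ℝ) → ℝ}

lemma boxIntegral_transport (hf : Continuous f) (hp : SpacePeriodic f) (k : ℕ) :
    boxIntegral (S.transport f k) = boxIntegral f := by
  induction k with
  | zero => rfl
  | succ k ih =>
    rw [← ih]
    exact boxIntegral_shearTransport (S.contDiff_F k).continuous (S.periodic_F k)
      (S.constAlong_F k) _ (S.continuous_transport hf k) (S.periodic_transport hp k)

lemma l2norm_transport (hf : Continuous f) (hp : SpacePeriodic f) (k : ℕ) :
    l2norm (S.transport f k) = l2norm f := by
  induction k with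
  | zero => rfl
  | succ k ih =>
    rw [← ih]
    exact l2norm_shearTransport (S.contDiff_F k).continuous (S.periodic_F k)
      (S.constAlong_F k) _ (S.continuous_transport hf k) (S.periodic_transport hp k)

lemma abs_transport_le {M : ℝ} (hM : ∀ x, |f x| ≤ M) (k : ℕ) (x : Fin d → ℝ) :
    |S.transport f k x| ≤ M := by
  induction k generalizing x with
  | zero => exact hM x
  | succ k ih => exact ih _

lemma abs_transport_sub_le {ε : ℝ} (hε : ∀ x, |f x - g x| ≤ ε) (k : ℕ) (x : Fin d → ℝ) :
    |S.transport f k x - S.transport g k x| ≤ ε := by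
  induction k generalizing x with
  | zero => exact hε x
  | succ k ih => exact ih _

lemma lineOscillation_transport_le_add (hf : Continuous f) (hp : SpacePeriodic f)
    (hg : Continuous g) (hgp : SpacePeriodic g) {ε : ℝ} (hε : ∀ x, |f x - g x| ≤ ε)
    (i : Fin d) (k : ℕ) :
    lineOscillation i (S.transport f k) ≤ lineOscillation i (S.transport g k) + 2 * ε := by
  have hfc := S.continuous_transport hf k
  have hgc := S.continuous_transport hg k
  have hsub : (l2norm fun x => S.transport f k x - S.transport g k x) ≤ ε :=
    l2norm_le_of_abs_le (hfc.sub hgc) (S.abs_transport_sub_le hε k)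
  linarith [lineOscillation_le_add i hfc (S.periodic_transport hp k) hgc
    (S.periodic_transport hgp k)]

lemma l2norm_transport_succ_sub_le (hf : Continuous f) (hp : SpacePeriodic f) (k : ℕ) :
    (l2norm fun x => S.transport f (k + 1) x - S.transport f k x)
      ≤ 2 * lineOscillation (S.dir k) (S.transport f k) :=
  l2norm_shear_sub_le (S.dir k) (S.continuous_transport hf k) (S.periodic_transport hp k)
    (continuous_const.mul (S.contDiff_F k).continuous).neg
    ((S.periodic_F k).comp fun r => -(_ * r)) ((S.constAlong_F k).comp fun r => -(_ * r))

lemma l2norm_transport_add_sub_le (hf : Continuous f) (hp : SpacePeriodic f) {m : ℕ} {δ : ℝ}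
    (hδ : ∀ k ≥ m, lineOscillation (S.dir k) (S.transport f k) ≤ δ) (j : ℕ) :
    (l2norm fun x => S.transport f (m + j) x - S.transport f m x) ≤ 2 * δ * j := by
  have hc := S.continuous_transport hf
  induction j with
  | zero => simp [l2norm_const]
  | succ j ih =>
    calc (l2norm fun x => S.transport f (m + (j + 1)) x - S.transport f m x)
        = l2norm fun x => (S.transport f (m + j + 1) x - S.transport f (m + j) x)
          + (S.transport f (m + j) x - S.transport f m x) := by
          simp only [sub_add_sub_cancel, add_assoc]
      _ ≤ 2 * lineOscillation (S.dir (m + j)) (S.transport f (m + j)) + 2 * δ * j :=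
          (l2norm_add_le ((hc _).sub (hc _)) ((hc _).sub (hc _))).trans
            (add_le_add (S.l2norm_transport_succ_sub_le hf hp (m + j)) ih)
      _ ≤ 2 * δ * (j + 1 : ℕ) := by
          push_cast
          linarith [hδ (m + j) (Nat.le_add_right m j)]

/-- If the oscillation along the directions of all later shears is small, those shears hardly move
the solution; as every direction occurs among them, all its oscillations are small. -/
lemma l2norm_le_of_forall_lineOscillation_transport_le (hf : Continuous f) (hp : SpacePeriodic f)
    (hmean : boxIntegral f = 0) {m N : ℕ} (hdir : ∀ i, ∃ j ≤ N, S.dir (m + j) = i) {δ : ℝ}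
    (hδ : ∀ k ≥ m, lineOscillation (S.dir k) (S.transport f k) ≤ δ) :
    l2norm f ≤ d * ((4 * N + 1) * δ) := by
  have hc := S.continuous_transport hf
  have hper := S.periodic_transport hp
  have hδ0 : 0 ≤ δ := (l2norm_nonneg _).trans (hδ m le_rfl)
  have hosc (i : Fin d) : lineOscillation i (S.transport f m) ≤ (4 * N + 1) * δ := by
    obtain ⟨j, hj, rfl⟩ := hdir i
    have hjN : (j : ℝ) * δ ≤ N * δ := by gcongr
    have hle := lineOscillation_le_add (S.dir (m + j)) (hc m) (hper m) (hc (m + j)) (hper (m + j))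
    rw [l2norm_sub_comm] at hle
    linarith [hδ (m + j) (Nat.le_add_right m j), S.l2norm_transport_add_sub_le hf hp hδ j]
  calc l2norm f = l2norm (S.transport f m) := (S.l2norm_transport hf hp m).symm
    _ ≤ ∑ i, lineOscillation i (S.transport f m) :=
        l2norm_le_sum_lineOscillation (hc m) (hper m)
          ((S.boxIntegral_transport hf hp m).trans hmean)
    _ ≤ ∑ _i : Fin d, (4 * N + 1) * δ := Finset.sum_le_sum fun i _ => hosc i
    _ = d * ((4 * N + 1) * δ) := by simp

end ShearCascade

section ActiveStages

variable {d : ℕ} (hd : 2 ≤ d) {f : (Fin d → ℝ) → ℝ}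

lemma exists_le_shearAxis_add_eq (m : ℕ) (i : Fin d) : ∃ j ≤ d, shearAxis hd (m + j) = i := by
  refine ⟨(i + (d - m % d)) % d, (Nat.mod_lt _ (by omega)).le, Fin.ext ?_⟩
  have hm : m % d < d := Nat.mod_lt _ (by omega)
  change (m + (i + (d - m % d)) % d) % d = i
  rw [Nat.add_mod_mod, ← Nat.mod_add_mod,
    show m % d + (i + (d - m % d)) = i + d by omega, Nat.add_mod_right, Nat.mod_eq_of_lt i.2]

lemma exists_lt_lineOscillation_transport (hf : Continuous f) (hp : SpacePeriodic f)
    (hmean : boxIntegral f = 0) (hpos : 0 < l2norm f) (m : ℕ) :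
    ∃ k ≥ m, l2norm f / (6 * d ^ 2)
      < lineOscillation (shearAxis hd k) ((selfSimilarCascade hd).transport f k) := by
  by_contra! hsmall
  have hle := (selfSimilarCascade hd).l2norm_le_of_forall_lineOscillation_transport_le hf hp hmean
    (exists_le_shearAxis_add_eq hd m) hsmall
  have hd1 : (1 : ℝ) ≤ d := by exact_mod_cast one_le_two.trans hd
  have hfactor : (d : ℝ) * (4 * d + 1) / (6 * d ^ 2) < 1 := by
    rw [div_lt_one (by positivity)]
    nlinarith
  have hlt : d * ((4 * d + 1) * (l2norm f / (6 * d ^ 2))) < l2norm f := by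
    calc d * ((4 * d + 1) * (l2norm f / (6 * d ^ 2)))
        = (d : ℝ) * (4 * d + 1) / (6 * d ^ 2) * l2norm f := by ring
      _ < l2norm f := mul_lt_of_lt_one_left hpos hfactor
  exact hle.not_gt hlt

end ActiveStages

/-! ### Anomalous dissipation -/

section Dissipation

variable {d : ℕ} {V W a : (Fin d → ℝ) → ℝ} {M K c η : ℝ}

lemma IsTestFunction.sq_le_mul_dirichletEnergy (ha : IsTestFunction M K a) (hV : ContDiff ℝ 1 V)
    (hVp : SpacePeriodic V) (hW : ContDiff ℝ 1 W) (hWp : SpacePeriodic W) {i : Fin d}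
    (hc : c ≤ |derivPairing i a W|) (hη : (l2norm fun x => V x - W x) ≤ η)
    (hKη : K * η ≤ c / 2) : (c / 2) ^ 2 ≤ M ^ 2 * dirichletEnergy V := by
  have hVW : ContDiff ℝ 1 fun x => V x - W x := hV.sub hW
  have hη0 : 0 ≤ η := (l2norm_nonneg _).trans hη
  have hK : 0 ≤ K := (l2norm_nonneg _).trans (ha.l2norm_pd_le i)
  have hdiff : |derivPairing i a V - derivPairing i a W| ≤ K * η := by
    have hsub : derivPairing i a V - derivPairing i a W
        = -boxIntegral fun x => (V x - W x) * pd a i x := by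
      rw [boxIntegral_mul_pd hVW ha.contDiff (hVp.sub hWp) ha.periodic, neg_neg, derivPairing,
        derivPairing, ← boxIntegral_sub (f := fun x => a x * pd V i x)
          (g := fun x => a x * pd W i x) (ha.contDiff.continuous.mul (continuous_pd hV i))
          (ha.contDiff.continuous.mul (continuous_pd hW i))]
      simp only [pd_sub (hV.differentiable one_ne_zero) (hW.differentiable one_ne_zero), mul_sub]
    rw [hsub, abs_neg, mul_comm K]
    exact (abs_boxIntegral_mul_le hVW.continuous (continuous_pd ha.contDiff i)).trans
      (mul_le_mul hη (ha.l2norm_pd_le i) (l2norm_nonneg _) hη0)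
  have hpairing : c / 2 ≤ M * l2norm (pd V i) := by
    have htriangle := abs_sub_abs_le_abs_sub (derivPairing i a W) (derivPairing i a V)
    rw [abs_sub_comm] at htriangle
    linarith [ha.abs_derivPairing_le hV (i := i) le_rfl]
  calc (c / 2) ^ 2 ≤ (M * l2norm (pd V i)) ^ 2 :=
        pow_le_pow_left₀ ((mul_nonneg hK hη0).trans hKη) hpairing 2
    _ = M ^ 2 * l2sq (pd V i) := by rw [mul_pow, l2norm_sq]
    _ ≤ M ^ 2 * dirichletEnergy V := by
        refine mul_le_mul_of_nonneg_left ?_ (sq_nonneg M)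
        exact boxIntegral_mono ((continuous_pd hV i).pow 2) (continuous_gradSq hV) fun x =>
          Finset.single_le_sum (f := fun l => pd V l x ^ 2) (fun _ _ => sq_nonneg _)
            (Finset.mem_univ i)

variable {θ : ℝ → (Fin d → ℝ) → ℝ} {p q : ℝ}

lemma dissip_nonneg (θ : ℝ → (Fin d → ℝ) → ℝ) : 0 ≤ dissip θ :=
  integral_nonneg fun t => dirichletEnergy_nonneg (θ t)

lemma sub_mul_le_dissip
    (hint : IntervalIntegrable (fun t => dirichletEnergy (θ t)) volume 0 1) (hp : 0 ≤ p)
    (hpq : p ≤ q) (hq : q ≤ 1) (hc : ∀ t ∈ Set.Icc p q, c ≤ dirichletEnergy (θ t)) :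
    (q - p) * c ≤ dissip θ := by
  have hsub : Set.uIcc p q ⊆ Set.uIcc 0 1 := by
    rw [Set.uIcc_of_le hpq, Set.uIcc_of_le zero_le_one]
    exact Set.Icc_subset_Icc hp hq
  calc (q - p) * c = ∫ _t in p..q, c := by simp
    _ ≤ ∫ t in p..q, dirichletEnergy (θ t) :=
        intervalIntegral.integral_mono_on hpq (by simp) (hint.mono_set hsub) hc
    _ ≤ ∫ t in 0..1, dirichletEnergy (θ t) :=
        intervalIntegral.integral_mono_interval hp hpq hq
          (Eventually.of_forall fun t => dirichletEnergy_nonneg (θ t)) hint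
    _ = dissip θ := (dissip_eq_intervalIntegral θ).symm

end Dissipation

section SelfSimilarCascade

variable {d : ℕ} {hd : 2 ≤ d} {κ : ℝ} {f w W a : (Fin d → ℝ) → ℝ} {θ : ℝ → (Fin d → ℝ) → ℝ}
  {H M K c η : ℝ} {n : ℕ}

/-- Once its shear has been completed, stage `n` rests until `stageTime (n + 1)`; on that rest
interval the solution stays close to a frozen profile. -/
lemma IsAdvDiffSol.l2norm_sub_transport_sq_le
    (sol : IsAdvDiffSol (selfSimilarCascade hd).velocity κ f θ) (hκ : 0 < κ)
    (hw : ContDiff ℝ 1 w) (hwp : SpacePeriodic w) (hH : ∀ l, l2norm (pd w l) ≤ H) {lam : ℝ}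
    (hlam : 0 < lam) {s : ℝ}
    (hs : s ∈ Set.Icc (stageTime n + (1 / 2) ^ (n + 2)) (stageTime (n + 1))) :
    (l2norm fun x => θ s x - (selfSimilarCascade hd).transport w (n + 1) x) ^ 2
      ≤ (l2norm fun x => f x - w x) ^ 2 + lam * (κ * dissip θ)
        + κ / lam * (d * H ^ 2 * cumulativeEnergy n) := by
  have hrest : (selfSimilarCascade hd).transportUpTo w n s
      = (selfSimilarCascade hd).transport w (n + 1) := by
    rw [transport_selfSimilarCascade_succ, ShearCascade.transportUpTo,
      displacement_selfSimilarCascade_of_le hd hs.1]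
    rfl
  have hsum : ∑ m ∈ Finset.range (n + 1),
        d * (H * gradScale (m + 1)) ^ 2 * (stageTime (m + 1) - stageTime m)
      = d * H ^ 2 * cumulativeEnergy n := by
    rw [cumulativeEnergy, Finset.mul_sum]
    refine Finset.sum_congr rfl fun m _ => ?_
    rw [stageTime_succ]
    ring
  rw [← hrest, ← hsum]
  exact sol.l2norm_sub_transportUpTo_sq_le hκ hw hwp (B := fun k => d * (H * gradScale (k + 1)) ^ 2)
    hlam (fun k => by positivity)
    (fun k t ht => dirichletEnergy_le (ShearCascade.contDiff_transportUpTo _ hw k t)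
      (l2norm_pd_transportUpTo_le hd hw hwp hH ht.1))
    ⟨(le_add_of_nonneg_right (by positivity)).trans hs.1, hs.2⟩

lemma IsAdvDiffSol.l2norm_sub_transport_le
    (sol : IsAdvDiffSol (selfSimilarCascade hd).velocity κ f θ) (hκ : 0 < κ)
    (hw : ContDiff ℝ 1 w) (hwp : SpacePeriodic w) (hH : ∀ l, l2norm (pd w l) ≤ H) {lam : ℝ}
    (hlam : 0 < lam) (hη : 0 ≤ η) (hinit : (l2norm fun x => f x - w x) ≤ η / 2)
    (hdissip : lam * (κ * dissip θ) ≤ η ^ 2 / 4)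
    (hsum : d * H ^ 2 * (κ * cumulativeEnergy n) ≤ lam * (η ^ 2 / 4)) {s : ℝ}
    (hs : s ∈ Set.Icc (stageTime n + (1 / 2) ^ (n + 2)) (stageTime (n + 1))) :
    (l2norm fun x => θ s x - (selfSimilarCascade hd).transport w (n + 1) x) ≤ η := by
  refine (sq_le_sq₀ (l2norm_nonneg _) hη).1 ?_
  have hforcing : κ / lam * (d * H ^ 2 * cumulativeEnergy n) ≤ η ^ 2 / 4 := by
    rw [div_mul_eq_mul_div, div_le_iff₀' hlam, mul_left_comm]
    exact hsum
  have hinit2 := pow_le_pow_left₀ (l2norm_nonneg _) hinit 2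
  rw [div_pow] at hinit2
  linarith [sol.l2norm_sub_transport_sq_le hκ hw hwp hH hlam hs, sq_nonneg η]

lemma IsAdvDiffSol.div_le_mul_dissip
    (sol : IsAdvDiffSol (selfSimilarCascade hd).velocity κ f θ) (hκ : diffusivity n / 2 ≤ κ)
    (hW : ContDiff ℝ 1 W) (hWp : SpacePeriodic W) (hM : 0 < M)
    (ha : IsTestFunction M (K * gradScale (n + 1)) a) {i : Fin d}
    (hc : c * gradScale (n + 1) ≤ |derivPairing i a W|) (hKη : K * η ≤ c / 2)
    (hclose : ∀ s ∈ Set.Icc (stageTime n + (1 / 2) ^ (n + 2)) (stageTime (n + 1)),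
      (l2norm fun x => θ s x - W x) ≤ η) :
    c ^ 2 / (16 * M ^ 2) ≤ κ * dissip θ := by
  have hκ0 : 0 < κ := (half_pos (diffusivity_pos n)).trans_le hκ
  have hX := gradScale_pos (n + 1)
  have hp : 0 < stageTime n + (1 / 2) ^ (n + 2) :=
    add_pos_of_nonneg_of_pos ((selfSimilarCascade hd).T_nonneg n) (by positivity)
  have hq : stageTime (n + 1) ≤ 1 := ((selfSimilarCascade hd).T_lt_one (n + 1)).le
  have hlength : stageTime (n + 1) - (stageTime n + (1 / 2) ^ (n + 2)) = (1 / 2) ^ (n + 2) := by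
    rw [stageTime_succ]
    ring
  have henergy (s : ℝ) (hs : s ∈ Set.Icc (stageTime n + (1 / 2) ^ (n + 2)) (stageTime (n + 1))) :
      (c * gradScale (n + 1) / 2) ^ 2 / M ^ 2 ≤ dirichletEnergy (θ s) := by
    rw [div_le_iff₀' (by positivity)]
    refine ha.sq_le_mul_dirichletEnergy
      ((sol.spaceC2 s ⟨hp.trans_le hs.1, hs.2.trans hq⟩).of_le one_le_two) (sol.periodic s) hW hWp
      hc (hclose s hs) ?_
    linarith [mul_le_mul_of_nonneg_right hKη hX.le]
  have hdissip := sub_mul_le_dissip (sol.intervalIntegrable_dirichletEnergy hκ0) hp.le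
    (sub_nonneg.1 (by rw [hlength]; positivity)) hq henergy
  rw [hlength] at hdissip
  calc c ^ 2 / (16 * M ^ 2)
      = diffusivity n * (gradScale (n + 1) ^ 2 * (1 / 2) ^ (n + 1)) * (c ^ 2 / (16 * M ^ 2)) := by
        rw [diffusivity_mul_gradScale_sq, one_mul]
    _ = diffusivity n / 2 * ((1 / 2) ^ (n + 2) * ((c * gradScale (n + 1) / 2) ^ 2 / M ^ 2)) := by
        ring
    _ ≤ κ * dissip θ := mul_le_mul hκ hdissip (by positivity) hκ0.le

/-- The diffusivities near `diffusivity j` with `j < n₀` are treated as if they were near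
`diffusivity n₀`, at the price of a larger constant. -/
lemma exists_stage_of_mem_Icc_diffusivity (n₀ : ℕ) :
    ∃ C, 0 < C ∧ ∀ j, ∀ κ ∈ Set.Icc (diffusivity j / 2) (2 * diffusivity j),
      ∃ n ≥ n₀, diffusivity n / 2 ≤ κ ∧
        κ * cumulativeEnergy n ≤ C := by
  have hpos : 0 ≤ 2 * diffusivity 0 * cumulativeEnergy n₀ :=
    mul_nonneg (mul_nonneg zero_le_two (diffusivity_pos 0).le) (cumulativeEnergy_nonneg n₀)
  refine ⟨4 + 2 * diffusivity 0 * cumulativeEnergy n₀, by linarith, fun j κ hκ => ?_⟩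
  rcases le_total n₀ j with hj | hj
  · refine ⟨j, hj, hκ.1, (mul_le_mul_of_nonneg_right hκ.2 (cumulativeEnergy_nonneg j)).trans ?_⟩
    linarith [diffusivity_mul_cumulativeEnergy_le j]
  · refine ⟨n₀, le_rfl, by linarith [antitone_diffusivity hj, hκ.1], ?_⟩
    have hκ0 : κ ≤ 2 * diffusivity 0 := by linarith [antitone_diffusivity j.zero_le, hκ.2]
    exact (mul_le_mul_of_nonneg_right hκ0 (cumulativeEnergy_nonneg n₀)).trans (by linarith)

end SelfSimilarCascade

section MainBound

variable {d : ℕ} (hd : 2 ≤ d) {f : (Fin d → ℝ) → ℝ} {g : (Fin d → ℝ) → Fin d → ℝ}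

lemma exists_forall_isTestFunction_of_le_lineOscillation {M H q : ℝ} (hM : 0 < M) (hH : 0 < H)
    (hq : 0 < q) {n₀ : ℕ} (hn₀ : 32 * (M * H * (1 / 8) ^ n₀) ≤ q ^ 2) :
    ∃ K > 0, ∀ w : (Fin d → ℝ) → ℝ, ContDiff ℝ 1 w → SpacePeriodic w →
      (∀ x, |w x| ≤ M) → (∀ l, l2norm (pd w l) ≤ H) →
      q ≤ lineOscillation (shearAxis hd n₀) ((selfSimilarCascade hd).transport w n₀) →
      ∀ n ≥ n₀, ∃ a, IsTestFunction M (K * gradScale n) a ∧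
        q ^ 2 / (2 * gradScale n₀) * gradScale n
          ≤ |derivPairing (shearAxis hd n) a ((selfSimilarCascade hd).transport w n)| := by
  have hX := gradScale_pos n₀
  set ω := min 1 (q ^ 2 / (8 * (M * H * gradScale n₀)))
  have hω0 : 0 < ω := by positivity
  have hωn₀ : 8 * (M * H * ω * gradScale n₀) ≤ q ^ 2 := by
    have hle := (le_div_iff₀ (by positivity)).1 (min_le_right _ _ : ω ≤ _)
    linarith
  refine ⟨H + 2 * (M * π ^ 2 / ω ^ 2), by positivity, fun w hw hwp hwM hwH hosc n hn => ?_⟩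
  obtain ⟨m, rfl⟩ := Nat.exists_eq_add_of_le hn
  obtain ⟨b, hb, hpairing⟩ := exists_isTestFunction_abs_derivPairing_eq (shearAxis hd n₀)
    (ShearCascade.contDiff_transport _ hw n₀) (ShearCascade.periodic_transport _ hwp n₀)
    (ShearCascade.abs_transport_le _ hwM n₀) (l2norm_pd_transport_le hd hw hwp hwH n₀)
  exact exists_isTestFunction_le_abs_derivPairing ⟨hω0, min_le_left _ _⟩ hw hwp hwH hb
    (hpairing ▸ pow_le_pow_left₀ hq.le hosc 2) hn₀ hωn₀ m

lemma exists_two_mul_lt_lineOscillation (hf : Continuous f) (hp : SpacePeriodic f)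
    (hmean : boxIntegral f = 0) (hpos : 0 < l2norm f) {B : ℝ} (hB : 0 < B) :
    ∃ q > 0, ∃ n, B * (1 / 8) ^ n ≤ q ^ 2 ∧
      2 * q < lineOscillation (shearAxis hd n) ((selfSimilarCascade hd).transport f n) := by
  set q := l2norm f / (6 * d ^ 2) / 2
  have hq : 0 < q := by positivity
  obtain ⟨m, hm⟩ : ∃ m : ℕ, (1 / 8 : ℝ) ^ m < q ^ 2 / B :=
    exists_pow_lt_of_lt_one (by positivity) (by norm_num)
  obtain ⟨n, hnm, hosc⟩ := exists_lt_lineOscillation_transport hd hf hp hmean hpos m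
  have hle : (1 / 8 : ℝ) ^ n ≤ q ^ 2 / B :=
    (pow_le_pow_of_le_one (by norm_num) (by norm_num) hnm).trans hm.le
  exact ⟨q, hq, n, (le_div_iff₀' hB).1 hle, hosc.trans_eq' (mul_div_cancel₀ _ two_ne_zero).symm⟩

lemma exists_approximation_forall_isTestFunction (hfg : HasWeakGradient f g)
    (hg : IntegrableOn (fun x => ∑ i, g x i ^ 2) (box d)) (hf : Continuous f)
    (hp : SpacePeriodic f) (hmean : boxIntegral f = 0) (hpos : 0 < l2norm f) :
    ∃ n₀ : ℕ, ∃ M > 0, ∃ H > 0, ∃ K > 0, ∃ c > 0, ∀ ε > 0, ∃ w,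
      ContDiff ℝ 1 w ∧ SpacePeriodic w ∧ (l2norm fun x => f x - w x) ≤ ε ∧
      (∀ l, l2norm (pd w l) ≤ H) ∧
      ∀ n ≥ n₀, ∃ a, IsTestFunction M (K * gradScale n) a ∧
        c * gradScale n
          ≤ |derivPairing (shearAxis hd n) a ((selfSimilarCascade hd).transport w n)| := by
  set S := selfSimilarCascade hd
  obtain ⟨M₀, hM₀, hfM⟩ := hp.exists_abs_le hf
  set M := M₀ + 1
  set H := √(boxIntegral fun x => ∑ i, g x i ^ 2) + 1
  have hH : 0 < H := by positivity
  have hM : 0 < M := by positivity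
  obtain ⟨q, hq, n₀, hn₀, hosc⟩ := exists_two_mul_lt_lineOscillation hd hf hp hmean hpos
    (B := 32 * (M * H)) (by positivity)
  rw [mul_assoc] at hn₀
  obtain ⟨K, hK, htest⟩ :=
    exists_forall_isTestFunction_of_le_lineOscillation hd hM hH hq hn₀
  refine ⟨n₀, M, hM, H, hH, K, hK, q ^ 2 / (2 * gradScale n₀),
    div_pos (by positivity) (mul_pos two_pos (gradScale_pos n₀)), fun ε hε => ?_⟩
  obtain ⟨w, hw, hwp, hclose, hwH⟩ := hfg.exists_contDiff_l2norm_pd_le hg hf hp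
    (ε := min ε (min 1 (q / 2))) (by positivity)
  have hfw (x : Fin d → ℝ) : |f x - w x| ≤ min ε (min 1 (q / 2)) := by
    rw [abs_sub_comm]
    exact hclose x
  have hw1 : ContDiff ℝ 1 w := hw.of_le (by norm_cast)
  have hwM (x : Fin d → ℝ) : |w x| ≤ M := by
    linarith [abs_sub_abs_le_abs_sub (w x) (f x), hfM x, hclose x,
      min_le_right ε (min 1 (q / 2)), min_le_left 1 (q / 2)]
  have hwosc : q ≤ lineOscillation (shearAxis hd n₀) (S.transport w n₀) := by
    linarith [S.lineOscillation_transport_le_add hf hp hw.continuous hwp hfw (shearAxis hd n₀) n₀,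
      min_le_right ε (min 1 (q / 2)), min_le_right 1 (q / 2)]
  have hwH' (l : Fin d) : l2norm (pd w l) ≤ H := (hwH l).trans (le_add_of_nonneg_right zero_le_one)
  exact ⟨w, hw1, hwp, (l2norm_le_of_abs_le (hf.sub hw.continuous) hfw).trans (min_le_left _ _),
    hwH', htest w hw1 hwp hwM hwH' hwosc⟩

/-- Either the dissipation is already bounded below, or the solution follows the transported
function closely enough to inherit its large gradient at the effective stage. -/
lemma exists_pos_le_mul_dissip (hfg : HasWeakGradient f g)
    (hg : IntegrableOn (fun x => ∑ i, g x i ^ 2) (box d)) (hf : Continuous f)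
    (hp : SpacePeriodic f) (hmean : boxIntegral f = 0) (hpos : 0 < l2norm f) :
    ∃ ϱ > 0, ∀ j, ∀ κ ∈ Set.Icc (diffusivity j / 2) (2 * diffusivity j),
      ∀ θ, IsAdvDiffSol (selfSimilarCascade hd).velocity κ f θ → ϱ ≤ κ * dissip θ := by
  obtain ⟨n₀, M, hM, H, hH, K, hK, c, hc, happrox⟩ :=
    exists_approximation_forall_isTestFunction hd hfg hg hf hp hmean hpos
  obtain ⟨C, hC, hstage⟩ := exists_stage_of_mem_Icc_diffusivity n₀
  set η := c / (2 * K) with hη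
  have hη0 : 0 < η := by positivity
  have : 0 < d := two_pos.trans_le hd
  set lam := 4 * (d * H ^ 2 * C) / η ^ 2 with hlam
  have hlam0 : 0 < lam := by positivity
  obtain ⟨w, hw, hwp, hfw, hwH, htest⟩ := happrox (η / 2) (by positivity)
  refine ⟨min (η ^ 2 / 4 / lam) (c ^ 2 / (16 * M ^ 2)), by positivity, fun j κ hκ θ sol => ?_⟩
  rcases le_total (lam * (κ * dissip θ)) (η ^ 2 / 4) with hsmall | hlarge
  · obtain ⟨n, hn, hκn, hsum⟩ := hstage j κ hκ
    obtain ⟨a, ha, hpairing⟩ := htest (n + 1) (hn.trans n.le_succ)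
    have hκ0 : 0 < κ := (half_pos (diffusivity_pos n)).trans_le hκn
    have hforcing : d * H ^ 2 * (κ * cumulativeEnergy n) ≤ lam * (η ^ 2 / 4) := by
      calc d * H ^ 2 * (κ * cumulativeEnergy n) ≤ d * H ^ 2 * C := by gcongr
        _ = lam * (η ^ 2 / 4) := by rw [hlam]; field_simp
    have hKη : K * η ≤ c / 2 := by
      rw [hη]
      exact le_of_eq (by field_simp)
    exact (min_le_right _ _).trans <| sol.div_le_mul_dissip hκn
      (ShearCascade.contDiff_transport _ hw (n + 1)) (ShearCascade.periodic_transport _ hwp (n + 1))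
      hM ha hpairing hKη fun s hs =>
        sol.l2norm_sub_transport_le hκ0 hw hwp hwH hlam0 hη0.le hfw hsmall hforcing hs
  · exact (min_le_left _ _).trans ((div_le_iff₀' hlam0).2 hlarge)

lemma exists_pos_mul_l2sq_le_mul_dissip (hfg : HasWeakGradient f g)
    (hg : IntegrableOn (fun x => ∑ i, g x i ^ 2) (box d)) (hf : Continuous f)
    (hp : SpacePeriodic f) (hmean : boxIntegral f = 0) :
    ∃ ϱ > 0, ∀ j, ∀ κ ∈ Set.Icc (diffusivity j / 2) (2 * diffusivity j),
      ∀ θ, IsAdvDiffSol (selfSimilarCascade hd).velocity κ f θ → ϱ * l2sq f ≤ κ * dissip θ := by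
  rw [← l2norm_sq]
  rcases (l2norm_nonneg f).eq_or_lt with hzero | hpos
  · refine ⟨1, one_pos, fun j κ hκ θ _ => ?_⟩
    rw [← hzero, zero_pow two_ne_zero, mul_zero]
    exact mul_nonneg ((half_pos (diffusivity_pos j)).le.trans hκ.1) (dissip_nonneg θ)
  · obtain ⟨ϱ, hϱ, hle⟩ := exists_pos_le_mul_dissip hd hfg hg hf hp hmean hpos
    refine ⟨ϱ / l2norm f ^ 2, by positivity, ?_⟩
    rwa [div_mul_cancel₀ _ (by positivity)]

lemma IsAdvDiffSol.continuous_init {u : ℝ → (Fin d → ℝ) → Fin d → ℝ} {κ : ℝ}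
    {θ : ℝ → (Fin d → ℝ) → ℝ} (sol : IsAdvDiffSol u κ f θ) : Continuous f :=
  (sol.cont.comp_continuous (f := fun x => (0, x)) (by fun_prop) fun _ =>
    ⟨Set.left_mem_Icc.2 zero_le_one, trivial⟩).congr sol.init

end MainBound

theorem anomalous_diffusion_on_permissible_diffusivities_general (d : ℕ) (hd : 2 ≤ d) :
    ∃ u : ℝ → (Fin d → ℝ) → Fin d → ℝ,
      (∀ t i, SpacePeriodic fun x => u t x i) ∧
      (∀ α ∈ Set.Ioc (0 : ℝ) (1 / 3), HolderVF α u) ∧ WeakDivFree u ∧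
      ∃ κseq : ℕ → ℝ, (∀ j, 0 < κseq j) ∧
        Tendsto κseq atTop (𝓝 0) ∧
        ∀ (θin : (Fin d → ℝ) → ℝ) (g : (Fin d → ℝ) → Fin d → ℝ),
          SpacePeriodic θin →
          IntegrableOn (fun x => ∑ i, g x i ^ 2) (box d) →
          HasWeakGradient θin g →
          ∫ x in box d, θin x = 0 →
          ∃ ϱ > 0, ∀ j, ∀ κ ∈ Set.Icc (κseq j / 2) (2 * κseq j),
            ∀ θ : ℝ → (Fin d → ℝ) → ℝ, IsAdvDiffSol u κ θin θ → ϱ * l2sq θin ≤ κ * dissip θ := by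
  refine ⟨(selfSimilarCascade hd).velocity, ShearCascade.periodic_velocity _,
    fun α hα => holderVF_selfSimilarCascade hd hα, ShearCascade.weakDivFree_velocity _,
    diffusivity, diffusivity_pos, tendsto_diffusivity, fun θin g hp hg hfg hmean => ?_⟩
  by_cases hcont : Continuous θin
  · exact exists_pos_mul_l2sq_le_mul_dissip hd hfg hg hcont hp hmean
  · exact ⟨1, one_pos, fun j κ _ θ sol => absurd sol.continuous_init hcont⟩

/-- **Anomalous diffusion along a distinguished set of diffusivities.**
For the vector field `u` of the main anomalous-diffusion theorem there is a
sequence `κ_j → 0` of positive diffusivities, depending only on `α` and `d`,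
such that with `𝒦 := ∪_{j≥1} [κ_j/2, 2κ_j]`, for every zero-mean
`θ_in ∈ H¹(T^d)` there is `ϱ > 0` with
`inf_{κ ∈ 𝒦} κ ∫_0^1 ∫_{T^d} |∇θ^κ|² dx dt ≥ ϱ ‖θ_in‖²_{L²(T^d)}`. -/
theorem anomalous_diffusion_on_permissible_diffusivities
    (d : ℕ) (hd : 2 ≤ d) (α : ℝ) (hα : α ∈ Set.Ioo (0:ℝ) (1/3)) :
    ∃ u : ℝ → (Fin d → ℝ) → Fin d → ℝ,
      (∀ t i, SpacePeriodic fun x => u t x i) ∧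
      HolderVF α u ∧ WeakDivFree u ∧
      ∃ κseq : ℕ → ℝ, (∀ j, 0 < κseq j) ∧
        Filter.Tendsto κseq Filter.atTop (𝓝 0) ∧
        ∀ (θin : (Fin d → ℝ) → ℝ) (g : (Fin d → ℝ) → Fin d → ℝ),
          SpacePeriodic θin →
          IntegrableOn (fun x => (θin x) ^ 2) (box d) →
          IntegrableOn (fun x => ∑ i, (g x i) ^ 2) (box d) →
          HasWeakGradient θin g →
          (∫ x in box d, θin x) = 0 →
          ∃ ϱ : ℝ, 0 < ϱ ∧
            ∀ κ : ℝ, (∃ j : ℕ, 1 ≤ j ∧ κ ∈ Set.Icc (κseq j / 2) (2 * κseq j)) →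
              ∀ θ : ℝ → (Fin d → ℝ) → ℝ, IsAdvDiffSol u κ θin θ →
                ϱ * l2sq θin ≤ κ * dissip θ := by
  obtain ⟨u, hper, hholder, hdiv, κseq, hpos, hlim, hmain⟩ :=
    anomalous_diffusion_on_permissible_diffusivities_general d hd
  refine ⟨u, hper, hholder α ⟨hα.1, hα.2.le⟩, hdiv, κseq, hpos, hlim,
    fun θin g hp _ hg hfg hmean => ?_⟩
  obtain ⟨ϱ, hϱ, hle⟩ := hmain θin g hp hg hfg hmean
  exact ⟨ϱ, hϱ, fun κ ⟨j, _, hκ⟩ => hle j κ hκ⟩
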